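/- arXiv:1601.03577 — 2 statements merged into one kernel-verified Lean document; each statement's English description precedes it below -/
import Mathlib

section
/- Let L be a Tonelli Lagrangian on a metric graph G with critical value c, Peierls barrier h, Mañé potential Φ and Aubry set 𝒜. Then for all x, y ∈ G: h(x,y) = min_{q∈𝒜} (h(x,q) + h(q,y)) = min_{q∈𝒜} (Φ(x,q) + Φ(q,y)). -/
/-!
Write `H t x y = h_t(x,y) + ct`, so that `h` is the lower limit of `H t` as `t → ∞` and `Φ` its
infimum over `t > 0`. Concatenating curves gives `H (s+t) x z ≤ H s x y + H t y z`
(`Joins.concat`), whence `h(x,z) ≤ h(x,y) + H t y z` and `h(x,z) ≤ H t x y + h(y,z)`. So `h`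
satisfies the triangle inequality, `h(q,q) ≥ 0`, and `Φ(x,q) = h(x,q)`, `Φ(q,y) = h(q,y)` for `q`
in the Aubry set (`Barrier.sInf_eq`): the two minima are the same, and both are at least `h(x,y)`.

To see that the minimum is attained, cut almost minimizing curves of large duration at their
midpoints (`Joins.split`); by compactness the cutting points accumulate at some `q` with
`h(x,q) + h(q,y) ≤ h(x,y)` (`Barrier.exists_mid`). Iterating from `q` towards `y` yields a sequence
through which `h(x,y)` splits, and an accumulation point `q` of this sequence satisfies
`h(x,q) + h(q,q) + h(q,y) ≤ h(x,y)`; with the triangle inequality `h(q,q) = 0`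
(`Barrier.exists_aubry`).

Passing to the limits only requires that points close to `q` be joined to `q`, both ways, at small
cost. This is achieved by constant-speed motion along an edge (`edge_joins`,
`eventually_same_edge`), which also shows, by connectedness, that any two points are joined by a
curve of finite action in any positive time (`exists_joins`). The Lagrangian is bounded below
(`lag_lower`), so the infima defining `h_t` are genuine.
-/

open Filter Set

/-- A compact metric graph: finitely many edges parametrized by arc length,
whose distance is the minimal length of unit-speed paths. -/
structure MetricGraph where
  G : Type
  [ms : MetricSpace G]
  [cs : CompactSpace G]
  E : Type
  [fE : Fintype E]
  [neE : Nonempty E]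
  len : E → ℝ
  len_pos : ∀ j, 0 < len j
  σ : E → ℝ → G
  σ_lip : ∀ j, ∀ s ∈ Set.Icc (0:ℝ) (len j), ∀ t ∈ Set.Icc (0:ℝ) (len j),
    dist (σ j s) (σ j t) ≤ |s - t|
  σ_inj : ∀ j, Set.InjOn (σ j) (Set.Icc 0 (len j))
  cover : ∀ x : G, ∃ j, ∃ s ∈ Set.Icc (0:ℝ) (len j), σ j s = x
  interiors_disjoint : ∀ i j, ∀ s ∈ Set.Ioo (0:ℝ) (len i), ∀ t ∈ Set.Ioo (0:ℝ) (len j),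
    σ i s = σ j t → i = j
  path_dist : ∀ x y : G, dist x y =
    sInf {T : ℝ | 0 ≤ T ∧ ∃ γ : ℝ → G, γ 0 = x ∧ γ T = y ∧ LipschitzOnWith 1 γ (Set.Icc 0 T)}
  path_exists : ∀ x y : G, ∃ T : ℝ, 0 ≤ T ∧ ∃ γ : ℝ → G, γ 0 = x ∧ γ T = y ∧
    LipschitzOnWith 1 γ (Set.Icc 0 T)

attribute [instance] MetricGraph.ms MetricGraph.cs MetricGraph.fE MetricGraph.neE

open MeasureTheory

namespace MetricGraph

/-- The vertex set: endpoints of edges. -/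
def vertexSet (Γ : MetricGraph) : Set Γ.G :=
  {x | ∃ j, x = Γ.σ j 0 ∨ x = Γ.σ j (Γ.len j)}

/-- The curve `γ` has (edgewise) derivative `v` at time `t`: either `γ t` is a vertex,
`v = 0` and `d(γ s, γ t) = o(|s-t|)`, or `γ t` lies in the interior of an edge and `v`
is the derivative of the edge coordinate of `γ` at `t`. -/
def HasGDerivAt (Γ : MetricGraph) (γ : ℝ → Γ.G) (t v : ℝ) : Prop :=
  (γ t ∈ Γ.vertexSet ∧ v = 0 ∧
    ∀ ε : ℝ, 0 < ε → ∃ δ : ℝ, 0 < δ ∧ ∀ s : ℝ, |s - t| < δ → dist (γ s) (γ t) ≤ ε * |s - t|) ∨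
  (γ t ∉ Γ.vertexSet ∧ ∃ j : Γ.E, ∃ f : ℝ → ℝ,
    (∀ᶠ s in nhds t, Γ.σ j (f s) = γ s) ∧ (∀ᶠ s in nhds t, f s ∈ Set.Icc 0 (Γ.len j)) ∧
    HasDerivAt f v t)

/-- The (edgewise) derivative of a curve, defined by choice where it exists, `0` elsewhere. -/
noncomputable def gderiv (Γ : MetricGraph) (γ : ℝ → Γ.G) (t : ℝ) : ℝ :=
  letI := Classical.dec (∃ v, Γ.HasGDerivAt γ t v)
  if h : ∃ v, Γ.HasGDerivAt γ t v then h.choose else 0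

/-- Absolute continuity of a curve `γ : [a,b] → G`. -/
def AbsContOn (Γ : MetricGraph) (a b : ℝ) (γ : ℝ → Γ.G) : Prop :=
  ∀ ε : ℝ, 0 < ε → ∃ δ : ℝ, 0 < δ ∧ ∀ n : ℕ, ∀ c d : Fin n → ℝ,
    (∀ i, c i ∈ Set.Icc a b ∧ d i ∈ Set.Icc a b ∧ c i ≤ d i) →
    ((Set.univ : Set (Fin n)).PairwiseDisjoint fun i => Set.Ioo (c i) (d i)) →
    (∑ i, (d i - c i)) < δ →
    (∑ i, dist (γ (c i)) (γ (d i))) < ε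

/-- A function on `G` is `C¹` near a vertex `e` if its pullback to every edge
containing `e` is `C¹` near the coordinate of `e`. -/
def C1AtVertex (Γ : MetricGraph) (ψ : Γ.G → ℝ) (e : Γ.G) : Prop :=
  ∀ j, ∀ s ∈ Set.Icc (0:ℝ) (Γ.len j), Γ.σ j s = e →
    ∃ δ : ℝ, 0 < δ ∧ ContDiffOn ℝ 1 (fun τ => ψ (Γ.σ j τ))
      (Set.Icc 0 (Γ.len j) ∩ Set.Ioo (s - δ) (s + δ))

/-- A function on `G × ℝ` is `C¹` near `(e, t)` with `e` a vertex. -/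
def C1AtVertexT (Γ : MetricGraph) (ψ : Γ.G → ℝ → ℝ) (e : Γ.G) (t : ℝ) : Prop :=
  ∀ j, ∀ s ∈ Set.Icc (0:ℝ) (Γ.len j), Γ.σ j s = e →
    ∃ δ : ℝ, 0 < δ ∧ ContDiffOn ℝ 1 (fun q : ℝ × ℝ => ψ (Γ.σ j q.1) q.2)
      ((Set.Icc 0 (Γ.len j) ∩ Set.Ioo (s - δ) (s + δ)) ×ˢ Set.Ioo (t - δ) (t + δ))

end MetricGraph

/-- A Tonelli Lagrangian on a metric graph: edgewise `C²`, strictly convex and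
superlinear in the velocity, consistent at the vertices. -/
structure TonelliLagrangian (Γ : MetricGraph) where
  L : Γ.E → ℝ → ℝ → ℝ
  smooth : ∀ j, ContDiffOn ℝ 2 (fun p : ℝ × ℝ => L j p.1 p.2)
    (Set.Icc 0 (Γ.len j) ×ˢ (Set.univ : Set ℝ))
  strictconv : ∀ j, ∀ x ∈ Set.Icc (0:ℝ) (Γ.len j), StrictConvexOn ℝ (Set.univ : Set ℝ) (L j x)
  superlinear : ∀ j, ∀ x ∈ Set.Icc (0:ℝ) (Γ.len j), ∀ C : ℝ, ∃ D : ℝ, ∀ v : ℝ,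
    C * |v| - D ≤ L j x v
  vertex_consistent : ∀ i j, ∀ s ∈ Set.Icc (0:ℝ) (Γ.len i), ∀ t ∈ Set.Icc (0:ℝ) (Γ.len j),
    Γ.σ i s = Γ.σ j t → L i s 0 = L j t 0

namespace TonelliLagrangian

variable {Γ : MetricGraph}

/-- The value of the Lagrangian at a point of `G` (via a choice of edge containing it). -/
noncomputable def lagOf (Λ : TonelliLagrangian Γ) (x : Γ.G) (v : ℝ) : ℝ :=
  Λ.L (Γ.cover x).choose (Γ.cover x).choose_spec.choose v

/-- The velocity partial derivative `∂_v L` at a point of `G`. -/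
noncomputable def lagVOf (Λ : TonelliLagrangian Γ) (x : Γ.G) (v : ℝ) : ℝ :=
  deriv (fun w => Λ.L (Γ.cover x).choose (Γ.cover x).choose_spec.choose w) v

/-- The action of a curve `γ : [a,b] → G`. -/
noncomputable def action (Λ : TonelliLagrangian Γ) (a b : ℝ) (γ : ℝ → Γ.G) : ℝ :=
  ∫ t in a..b, Λ.lagOf (γ t) (Γ.gderiv γ t)

/-- The integrand of the action is integrable (i.e. the action is finite). -/
def ActionIntegrableOn (Λ : TonelliLagrangian Γ) (a b : ℝ) (γ : ℝ → Γ.G) : Prop :=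
  IntegrableOn (fun t => Λ.lagOf (γ t) (Γ.gderiv γ t)) (Set.Icc a b)

/-- An action minimizer with fixed endpoints. -/
def Minimizer (Λ : TonelliLagrangian Γ) (a b : ℝ) (γ : ℝ → Γ.G) : Prop :=
  Γ.AbsContOn a b γ ∧ Λ.ActionIntegrableOn a b γ ∧
  ∀ α : ℝ → Γ.G, Γ.AbsContOn a b α → Λ.ActionIntegrableOn a b α →
    α a = γ a → α b = γ b → Λ.action a b γ ≤ Λ.action a b α

/-- `h_t(x,y)`: minimal action among absolutely continuous curves from `x` to `y` in time `t`. -/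
noncomputable def ht (Λ : TonelliLagrangian Γ) (t : ℝ) (x y : Γ.G) : ℝ :=
  sInf {r | ∃ γ : ℝ → Γ.G, Γ.AbsContOn 0 t γ ∧ γ 0 = x ∧ γ t = y ∧
    Λ.ActionIntegrableOn 0 t γ ∧ r = Λ.action 0 t γ}

/-- `c` is the critical value of the Lagrangian. -/
def IsCriticalValue (Λ : TonelliLagrangian Γ) (c : ℝ) : Prop :=
  (∀ k : ℝ, c < k → ∀ x y : Γ.G,
    Filter.liminf (fun t : ℝ => ((Λ.ht t x y + k * t : ℝ) : EReal)) Filter.atTop = ⊤) ∧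
  (∀ k : ℝ, k < c → ∀ x y : Γ.G,
    Filter.liminf (fun t : ℝ => ((Λ.ht t x y + k * t : ℝ) : EReal)) Filter.atTop = ⊥) ∧
  (∀ x y : Γ.G, ∃ r : ℝ,
    Filter.liminf (fun t : ℝ => ((Λ.ht t x y + c * t : ℝ) : EReal)) Filter.atTop = (r : EReal))

/-- The Peierls barrier `h(x,y) = liminf_{t→∞} (h_t(x,y) + ct)`. -/
noncomputable def peierls (Λ : TonelliLagrangian Γ) (c : ℝ) (x y : Γ.G) : ℝ :=
  (Filter.liminf (fun t : ℝ => ((Λ.ht t x y + c * t : ℝ) : EReal)) Filter.atTop).toReal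

/-- The Mañé potential `Φ(x,y) = inf_{t>0} (h_t(x,y) + ct)`. -/
noncomputable def mane (Λ : TonelliLagrangian Γ) (c : ℝ) (x y : Γ.G) : ℝ :=
  sInf {r | ∃ t : ℝ, 0 < t ∧ r = Λ.ht t x y + c * t}

/-- The Aubry set: points with `h(x,x) = 0`. -/
def aubrySet (Λ : TonelliLagrangian Γ) (c : ℝ) : Set Γ.G :=
  {x | Λ.peierls c x x = 0}

/-- A dominated function: `u(y) - u(x) ≤ h_t(x,y) + ct`. -/
def Dominated (Λ : TonelliLagrangian Γ) (c : ℝ) (u : Γ.G → ℝ) : Prop :=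
  ∀ x y : Γ.G, ∀ t : ℝ, 0 < t → u y - u x ≤ Λ.ht t x y + c * t

/-- The curve `γ` calibrates the function `u` on the time interval `J`. -/
def Calibrates (Λ : TonelliLagrangian Γ) (c : ℝ) (J : Set ℝ) (γ : ℝ → Γ.G)
    (u : Γ.G → ℝ) : Prop :=
  ∀ t ∈ J, ∀ s ∈ J, t ≤ s → Λ.ActionIntegrableOn t s γ ∧
    u (γ s) - u (γ t) = Λ.action t s γ + c * (s - t)

/-- Backward weak KAM solution. -/
def BackwardWeakKAM (Λ : TonelliLagrangian Γ) (c : ℝ) (u : Γ.G → ℝ) : Prop :=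
  Continuous u ∧ Λ.Dominated c u ∧
  ∀ x : Γ.G, ∃ γ : ℝ → Γ.G, γ 0 = x ∧ (∀ a : ℝ, a ≤ 0 → Γ.AbsContOn a 0 γ) ∧
    Λ.Calibrates c (Set.Iic 0) γ u

/-- Forward weak KAM solution. -/
def ForwardWeakKAM (Λ : TonelliLagrangian Γ) (c : ℝ) (u : Γ.G → ℝ) : Prop :=
  Continuous u ∧ Λ.Dominated c u ∧
  ∀ x : Γ.G, ∃ γ : ℝ → Γ.G, γ 0 = x ∧ (∀ b : ℝ, 0 ≤ b → Γ.AbsContOn 0 b γ) ∧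
    Λ.Calibrates c (Set.Ici 0) γ u

/-- Semi-static curve on a time interval `J`. -/
def SemiStatic (Λ : TonelliLagrangian Γ) (c : ℝ) (J : Set ℝ) (η : ℝ → Γ.G) : Prop :=
  ∀ t ∈ J, ∀ s ∈ J, t ≤ s → Λ.ActionIntegrableOn t s η ∧
    Λ.mane c (η t) (η s) = Λ.action t s η + c * (s - t)

/-- The Lax–Oleinik semigroup `(ℒ_t f)(x) = inf_y (f(y) + h_t(y,x))`. -/
noncomputable def lax (Λ : TonelliLagrangian Γ) (t : ℝ) (f : Γ.G → ℝ) (x : Γ.G) : ℝ :=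
  ⨅ y : Γ.G, (f y + Λ.ht t y x)

/-- The Lagrangian is symmetric at the vertices. -/
def SymmetricAtVertices (Λ : TonelliLagrangian Γ) : Prop :=
  ∀ e ∈ Γ.vertexSet, ∃ lam : ℝ → ℝ, ∀ j, ∀ s ∈ Set.Icc (0:ℝ) (Γ.len j),
    Γ.σ j s = e → ∀ z : ℝ, Λ.L j s z = lam |z|

/-- The Hamiltonian `H_j(x,p)`, where at the endpoints of the edge only
incoming-or-zero velocities are used. -/
noncomputable def ham (Λ : TonelliLagrangian Γ) (j : Γ.E) (x p : ℝ) : ℝ :=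
  sSup {r | ∃ z : ℝ, ((x = 0 → 0 ≤ z) ∧ (x = Γ.len j → z ≤ 0)) ∧ r = -p * z - Λ.L j x z}

/-- Viscosity subsolution of `H(x, Du) = c` on the graph. -/
def ViscositySubsolution (Λ : TonelliLagrangian Γ) (c : ℝ) (u : Γ.G → ℝ) : Prop :=
  Continuous u ∧
  (∀ j : Γ.E, ∀ s ∈ Set.Ioo (0:ℝ) (Γ.len j), Γ.σ j s ∉ Γ.vertexSet →
    ∀ (φ : ℝ → ℝ) (p : ℝ), HasDerivAt φ p s →
      IsLocalMax (fun τ => u (Γ.σ j τ) - φ τ) s → Λ.ham j s p ≤ c) ∧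
  (∀ e ∈ Γ.vertexSet, ∀ ψ : Γ.G → ℝ, MetricGraph.C1AtVertex Γ ψ e →
    (∃ ε : ℝ, 0 < ε ∧ ∀ x : Γ.G, dist x e < ε → u x - ψ x ≤ u e - ψ e) →
    ∀ j : Γ.E, ∀ s ∈ Set.Icc (0:ℝ) (Γ.len j), Γ.σ j s = e →
    ∀ p : ℝ, HasDerivWithinAt (fun τ => ψ (Γ.σ j τ)) p (Set.Icc 0 (Γ.len j)) s →
      Λ.ham j s p ≤ c)

/-- Viscosity supersolution of `H(x, Du) = c` on the graph. -/
def ViscositySupersolution (Λ : TonelliLagrangian Γ) (c : ℝ) (u : Γ.G → ℝ) : Prop :=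
  Continuous u ∧
  (∀ j : Γ.E, ∀ s ∈ Set.Ioo (0:ℝ) (Γ.len j), Γ.σ j s ∉ Γ.vertexSet →
    ∀ (φ : ℝ → ℝ) (p : ℝ), HasDerivAt φ p s →
      IsLocalMin (fun τ => u (Γ.σ j τ) - φ τ) s → c ≤ Λ.ham j s p) ∧
  (∀ e ∈ Γ.vertexSet, ∀ ψ : Γ.G → ℝ, MetricGraph.C1AtVertex Γ ψ e →
    (∃ ε : ℝ, 0 < ε ∧ ∀ x : Γ.G, dist x e < ε → u e - ψ e ≤ u x - ψ x) →
    ∃ j : Γ.E, ∃ s ∈ Set.Icc (0:ℝ) (Γ.len j), Γ.σ j s = e ∧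
      ∃ p : ℝ, HasDerivWithinAt (fun τ => ψ (Γ.σ j τ)) p (Set.Icc 0 (Γ.len j)) s ∧
      c ≤ Λ.ham j s p)

/-- Viscosity subsolution of `u_t + H(x, D_x u) = 0` on `G × (0,T]`. -/
def EvoSubsolution (Λ : TonelliLagrangian Γ) (T : ℝ) (u : Γ.G → ℝ → ℝ) : Prop :=
  Continuous (fun q : Γ.G × ℝ => u q.1 q.2) ∧
  (∀ j : Γ.E, ∀ s ∈ Set.Ioo (0:ℝ) (Γ.len j), Γ.σ j s ∉ Γ.vertexSet →
    ∀ t ∈ Set.Ioc (0:ℝ) T, ∀ (φ : ℝ → ℝ → ℝ) (p q : ℝ),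
      HasDerivAt (fun τ => φ τ t) p s → HasDerivAt (fun r => φ s r) q t →
      (∃ ε : ℝ, 0 < ε ∧ ∀ τ r : ℝ, |τ - s| < ε → |r - t| < ε →
        u (Γ.σ j τ) r - φ τ r ≤ u (Γ.σ j s) t - φ s t) →
      q + Λ.ham j s p ≤ 0) ∧
  (∀ e ∈ Γ.vertexSet, ∀ t ∈ Set.Ioc (0:ℝ) T, ∀ ψ : Γ.G → ℝ → ℝ,
    MetricGraph.C1AtVertexT Γ ψ e t →
    (∃ ε : ℝ, 0 < ε ∧ ∀ x : Γ.G, ∀ r : ℝ, dist x e < ε → |r - t| < ε →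
      u x r - ψ x r ≤ u e t - ψ e t) →
    ∀ q : ℝ, HasDerivAt (fun r => ψ e r) q t →
    ∀ j : Γ.E, ∀ s ∈ Set.Icc (0:ℝ) (Γ.len j), Γ.σ j s = e →
    ∀ p : ℝ, HasDerivWithinAt (fun τ => ψ (Γ.σ j τ) t) p (Set.Icc 0 (Γ.len j)) s →
      q + Λ.ham j s p ≤ 0)

/-- Viscosity supersolution of `u_t + H(x, D_x u) = 0` on `G × (0,T]`. -/
def EvoSupersolution (Λ : TonelliLagrangian Γ) (T : ℝ) (u : Γ.G → ℝ → ℝ) : Prop :=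
  Continuous (fun q : Γ.G × ℝ => u q.1 q.2) ∧
  (∀ j : Γ.E, ∀ s ∈ Set.Ioo (0:ℝ) (Γ.len j), Γ.σ j s ∉ Γ.vertexSet →
    ∀ t ∈ Set.Ioc (0:ℝ) T, ∀ (φ : ℝ → ℝ → ℝ) (p q : ℝ),
      HasDerivAt (fun τ => φ τ t) p s → HasDerivAt (fun r => φ s r) q t →
      (∃ ε : ℝ, 0 < ε ∧ ∀ τ r : ℝ, |τ - s| < ε → |r - t| < ε →
        u (Γ.σ j s) t - φ s t ≤ u (Γ.σ j τ) r - φ τ r) →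
      0 ≤ q + Λ.ham j s p) ∧
  (∀ e ∈ Γ.vertexSet, ∀ t ∈ Set.Ioc (0:ℝ) T, ∀ ψ : Γ.G → ℝ → ℝ,
    MetricGraph.C1AtVertexT Γ ψ e t →
    (∃ ε : ℝ, 0 < ε ∧ ∀ x : Γ.G, ∀ r : ℝ, dist x e < ε → |r - t| < ε →
      u e t - ψ e t ≤ u x r - ψ x r) →
    ∀ q : ℝ, HasDerivAt (fun r => ψ e r) q t →
    ∃ j : Γ.E, ∃ s ∈ Set.Icc (0:ℝ) (Γ.len j), Γ.σ j s = e ∧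
      ∃ p : ℝ, HasDerivWithinAt (fun τ => ψ (Γ.σ j τ) t) p (Set.Icc 0 (Γ.len j)) s ∧
      0 ≤ q + Λ.ham j s p)

end TonelliLagrangian

namespace PeierlsAubry

/-! ### Locality and translation invariance of the action -/

section Calculus

variable {Γ : MetricGraph}

lemma hasGDerivAt_congr {γ γ' : ℝ → Γ.G} {t v : ℝ} (h : γ =ᶠ[nhds t] γ')
    (hd : Γ.HasGDerivAt γ t v) : Γ.HasGDerivAt γ' t v := by
  have ht : γ t = γ' t := h.self_of_nhds
  rcases hd with ⟨hv, h0, hε⟩ | ⟨hv, j, f, hf, hI, hder⟩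
  · refine Or.inl ⟨ht ▸ hv, h0, fun ε he => ?_⟩
    obtain ⟨δ, hδ, H⟩ := hε ε he
    obtain ⟨δ', hδ', H'⟩ := Metric.eventually_nhds_iff.1 h
    refine ⟨min δ δ', lt_min hδ hδ', fun s hs => ?_⟩
    have h1 := H s (lt_of_lt_of_le hs (min_le_left _ _))
    have h2 := H' (y := s) (by
      rw [Real.dist_eq]; exact lt_of_lt_of_le hs (min_le_right _ _))
    rw [← ht, ← h2]; exact h1
  · refine Or.inr ⟨ht ▸ hv, j, f, ?_, hI, hder⟩
    filter_upwards [hf, h] with s h1 h2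
    rw [h1, h2]

lemma gderiv_congr {γ γ' : ℝ → Γ.G} {t t' : ℝ}
    (h : ∀ v, Γ.HasGDerivAt γ t v ↔ Γ.HasGDerivAt γ' t' v) :
    Γ.gderiv γ t = Γ.gderiv γ' t' := by
  have aux : ∀ P Q : ℝ → Prop, P = Q →
      (letI := Classical.dec (∃ v, P v); if h : ∃ v, P v then h.choose else (0 : ℝ)) =
      (letI := Classical.dec (∃ v, Q v); if h : ∃ v, Q v then h.choose else (0 : ℝ)) := by
    rintro P Q rfl
    rfl
  exact aux _ _ (funext fun v => propext (h v))

lemma hasGDerivAt_shift {γ : ℝ → Γ.G} {t v : ℝ} (s : ℝ)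
    (hd : Γ.HasGDerivAt γ (t + s) v) : Γ.HasGDerivAt (fun u => γ (u + s)) t v := by
  have hT : Tendsto (fun u : ℝ => u + s) (nhds t) (nhds (t + s)) :=
    (continuous_add_const s).tendsto t
  rcases hd with ⟨hv, h0, hε⟩ | ⟨hv, j, f, hf, hI, hder⟩
  · refine Or.inl ⟨hv, h0, fun ε he => ?_⟩
    obtain ⟨δ, hδ, H⟩ := hε ε he
    refine ⟨δ, hδ, fun u hu => ?_⟩
    have := H (u + s) (by simpa using hu)
    simpa using this
  · refine Or.inr ⟨hv, j, fun u => f (u + s), hT.eventually hf, hT.eventually hI, ?_⟩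
    exact hder.comp_add_const t s

lemma gderiv_shift (γ : ℝ → Γ.G) (t s : ℝ) :
    Γ.gderiv (fun u => γ (u + s)) t = Γ.gderiv γ (t + s) := by
  refine gderiv_congr fun v => ⟨fun h => ?_, hasGDerivAt_shift s⟩
  have := hasGDerivAt_shift (γ := fun u => γ (u + s)) (t := t + s) (-s) (v := v) (by simpa using h)
  simpa using this

/-- If `γ'` is a time translate of `γ` on the open interval, the actions agree: at an interior
time the integrand depends only on the germ of the curve, and the endpoints, where the germs may
differ, are null. -/
lemma action_transfer (Λ : TonelliLagrangian Γ) {γ γ' : ℝ → Γ.G} {a b a' b' s : ℝ} (hab : a ≤ b)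
    (ha : a' = a + s) (hb : b' = b + s)
    (h : ∀ u ∈ Ioo a b, γ' u = γ (u + s)) (hi : Λ.ActionIntegrableOn a' b' γ) :
    Λ.ActionIntegrableOn a b γ' ∧ Λ.action a b γ' = Λ.action a' b' γ := by
  subst ha hb
  have key : ∀ u ∈ Ioo a b, Λ.lagOf (γ (u + s)) (Γ.gderiv γ (u + s)) =
      Λ.lagOf (γ' u) (Γ.gderiv γ' u) := by
    intro u hu
    have hev : γ' =ᶠ[nhds u] fun u => γ (u + s) := by
      filter_upwards [isOpen_Ioo.mem_nhds hu] with w hw using h w hw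
    rw [h u hu, gderiv_congr (fun v => ⟨hasGDerivAt_congr hev, hasGDerivAt_congr hev.symm⟩),
      gderiv_shift]
  constructor
  · unfold TonelliLagrangian.ActionIntegrableOn at hi ⊢
    rw [integrableOn_Icc_iff_integrableOn_Ioo]
    have h1 : IntervalIntegrable (fun t => Λ.lagOf (γ t) (Γ.gderiv γ t)) volume (a + s) (b + s) :=
      (intervalIntegrable_iff_integrableOn_Icc_of_le (by linarith)).2 hi
    have h2 := h1.comp_add_right s
    simp only [add_sub_cancel_right] at h2
    have h3 := (intervalIntegrable_iff_integrableOn_Ioo_of_le hab).1 h2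
    exact h3.congr_fun key measurableSet_Ioo
  · unfold TonelliLagrangian.action
    rw [← intervalIntegral.integral_comp_add_right
      (fun t => Λ.lagOf (γ t) (Γ.gderiv γ t)) s]
    rw [intervalIntegral.integral_of_le hab, intervalIntegral.integral_of_le hab,
      integral_Ioc_eq_integral_Ioo, integral_Ioc_eq_integral_Ioo]
    exact (setIntegral_congr_fun measurableSet_Ioo key).symm

lemma absCont_transfer {γ γ' : ℝ → Γ.G} {a b a' b' s : ℝ}
    (ha : a' ≤ a + s) (hb : b + s ≤ b')
    (h : ∀ u ∈ Icc a b, γ' u = γ (u + s)) (hi : Γ.AbsContOn a' b' γ) :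
    Γ.AbsContOn a b γ' := by
  intro ε he
  obtain ⟨δ, hδ, H⟩ := hi ε he
  refine ⟨δ, hδ, fun n c d hcd hdis hsum => ?_⟩
  have := H n (fun i => c i + s) (fun i => d i + s) (fun i => ?_) ?_ (by simpa using hsum)
  · refine lt_of_eq_of_lt (Finset.sum_congr rfl fun i _ => ?_) this
    rw [h _ (hcd i).1, h _ (hcd i).2.1]
  · obtain ⟨⟨h1, h2⟩, ⟨h3, h4⟩, h5⟩ := hcd i
    exact ⟨⟨by linarith, by linarith⟩, ⟨by linarith, by linarith⟩, by linarith⟩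
  · intro i hi j hj hij
    have := hdis hi hj hij
    simp only [Function.onFun] at this ⊢
    rw [Set.disjoint_left] at this ⊢
    intro u hu hu'
    refine this (a := u - s) ⟨?_, ?_⟩ ⟨?_, ?_⟩ <;> linarith [hu.1, hu.2, hu'.1, hu'.2]

/-- Gluing at `s`: an interval `(c, d)` is cut into the parts below and above `s` by
truncating its endpoints, so that no re-indexing of the family is needed. -/
lemma absCont_glue {γ : ℝ → Γ.G} {a s b : ℝ} (has : a ≤ s) (hsb : s ≤ b)
    (h1 : Γ.AbsContOn a s γ) (h2 : Γ.AbsContOn s b γ) : Γ.AbsContOn a b γ := by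
  intro ε he
  obtain ⟨δ₁, hδ₁, H₁⟩ := h1 (ε / 2) (by linarith)
  obtain ⟨δ₂, hδ₂, H₂⟩ := h2 (ε / 2) (by linarith)
  refine ⟨min δ₁ δ₂, lt_min hδ₁ hδ₂, fun n c d hcd hdis hsum => ?_⟩
  have A := H₁ n (fun i => min (c i) s) (fun i => min (d i) s) (fun i => ?_) ?_ ?_
  · have B := H₂ n (fun i => max (c i) s) (fun i => max (d i) s) (fun i => ?_) ?_ ?_
    · have : ∑ i, dist (γ (c i)) (γ (d i)) ≤ ∑ i, dist (γ (min (c i) s)) (γ (min (d i) s)) +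
          ∑ i, dist (γ (max (c i) s)) (γ (max (d i) s)) := by
        rw [← Finset.sum_add_distrib]
        refine Finset.sum_le_sum fun i _ => ?_
        have hle := (hcd i).2.2
        rcases le_total (d i) s with hd | hd
        · simp [hd, hle.trans hd]
        · rcases le_total (c i) s with hc | hc
          · simpa [hc, hd] using dist_triangle (γ (c i)) (γ s) (γ (d i))
          · simp [hc, hd]
      linarith
    · obtain ⟨⟨h1, h2⟩, ⟨h3, h4⟩, h5⟩ := hcd i
      exact ⟨⟨le_max_right _ _, max_le h2 hsb⟩, ⟨le_max_right _ _, max_le h4 hsb⟩,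
        max_le_max_right _ h5⟩
    · intro i hi j hj hij
      refine (hdis hi hj hij).mono ?_ ?_ <;> intro u hu <;>
        simp only [mem_Ioo, max_lt_iff, lt_max_iff] at hu <;>
        exact ⟨by linarith [hu.1.1], by rcases hu.2 with h | h <;> linarith [hu.1.2]⟩
    · refine lt_of_le_of_lt (Finset.sum_le_sum fun i _ => ?_) (hsum.trans_le (min_le_right _ _))
      have hle := (hcd i).2.2
      rcases le_total (d i) s with hd | hd <;> rcases le_total (c i) s with hc | hc <;>
        simp [hc, hd] <;> linarith
  · obtain ⟨⟨h1, h2⟩, ⟨h3, h4⟩, h5⟩ := hcd i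
    exact ⟨⟨le_min h1 has, min_le_right _ _⟩, ⟨le_min h3 has, min_le_right _ _⟩,
      min_le_min_right _ h5⟩
  · intro i hi j hj hij
    refine (hdis hi hj hij).mono ?_ ?_ <;> intro u hu <;>
      simp only [mem_Ioo, min_lt_iff, lt_min_iff] at hu <;>
      exact ⟨by rcases hu.1 with h | h <;> linarith [hu.2.2], by linarith [hu.2.1]⟩
  · refine lt_of_le_of_lt (Finset.sum_le_sum fun i _ => ?_) (hsum.trans_le (min_le_left _ _))
    have hle := (hcd i).2.2
    rcases le_total (d i) s with hd | hd <;> rcases le_total (c i) s with hc | hc <;>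
      simp [hc, hd] <;> linarith

/-- `γ` is an admissible competitor in the definition of `h_t(x,y)`. -/
def Joins (Λ : TonelliLagrangian Γ) (t : ℝ) (x y : Γ.G) (γ : ℝ → Γ.G) : Prop :=
  Γ.AbsContOn 0 t γ ∧ γ 0 = x ∧ γ t = y ∧ Λ.ActionIntegrableOn 0 t γ

lemma Joins.concat {Λ : TonelliLagrangian Γ} {s t : ℝ} (hs : 0 < s) (ht : 0 < t) {x y z : Γ.G}
    {α β : ℝ → Γ.G} (hα : Joins Λ s x y α) (hβ : Joins Λ t y z β) :
    ∃ γ, Joins Λ (s + t) x z γ ∧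
      Λ.action 0 (s + t) γ = Λ.action 0 s α + Λ.action 0 t β := by
  obtain ⟨a1, a2, a3, a4⟩ := hα
  obtain ⟨b1, b2, b3, b4⟩ := hβ
  let γ : ℝ → Γ.G := fun u => if u ≤ s then α u else β (u - s)
  have hγ1 : ∀ u ∈ Icc 0 s, γ u = α (u + 0) := fun u hu => by simp [γ, hu.2]
  have hγ2 : ∀ u ∈ Icc s (s + t), γ u = β (u + -s) := fun u hu => by
    rcases eq_or_lt_of_le hu.1 with h | h
    · simp [γ, ← h, a3, b2]
    · simp [γ, not_le.2 h, sub_eq_add_neg]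
  have A := action_transfer Λ (a' := 0) (b' := s) hs.le (by ring) (by ring)
    (fun u hu => hγ1 u (Ioo_subset_Icc_self hu)) a4
  have B := action_transfer Λ (a' := 0) (b' := t) (a := s) (b := s + t) (by linarith)
    (by ring) (by ring) (fun u hu => hγ2 u (Ioo_subset_Icc_self hu)) b4
  refine ⟨γ, ⟨absCont_glue hs.le (by linarith) (absCont_transfer (by simp) (by simp) hγ1 a1)
    (absCont_transfer (by simp) (by simp) hγ2 b1), ?_, ?_, ?_⟩, ?_⟩
  · simpa [a2] using hγ1 0 ⟨le_rfl, hs.le⟩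
  · simpa [b3] using hγ2 (s + t) ⟨by linarith, le_rfl⟩
  · have := A.1.union B.1
    rwa [Icc_union_Icc_eq_Icc hs.le (by linarith)] at this
  · rw [← A.2, ← B.2]
    refine (intervalIntegral.integral_add_adjacent_intervals ?_ ?_).symm
    · exact (intervalIntegrable_iff_integrableOn_Icc_of_le hs.le).2 A.1
    · exact (intervalIntegrable_iff_integrableOn_Icc_of_le (by linarith)).2 B.1

lemma Joins.split {Λ : TonelliLagrangian Γ} {s t : ℝ} (hs : 0 < s) (ht : 0 < t) {x z : Γ.G}
    {γ : ℝ → Γ.G} (hγ : Joins Λ (s + t) x z γ) :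
    ∃ y α β, Joins Λ s x y α ∧ Joins Λ t y z β ∧
      Λ.action 0 s α + Λ.action 0 t β = Λ.action 0 (s + t) γ := by
  obtain ⟨a1, a2, a3, a4⟩ := hγ
  have i1 : Λ.ActionIntegrableOn 0 s γ := a4.mono_set (Icc_subset_Icc le_rfl (by linarith))
  have i2 : Λ.ActionIntegrableOn s (s + t) γ := a4.mono_set (Icc_subset_Icc hs.le le_rfl)
  have B := action_transfer Λ (γ' := fun u => γ (u + s)) (a := 0) (b := t) (s := s) ht.le
    (by ring) (by ring) (fun u _ => rfl) i2
  refine ⟨γ s, γ, fun u => γ (u + s),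
    ⟨absCont_transfer (s := 0) (by simp) (by linarith) (by simp) a1, a2, rfl, i1⟩,
    ⟨absCont_transfer (s := s) (by linarith) (by linarith) (by simp) a1, by simp,
      by simp only [add_comm t s, a3], B.1⟩, ?_⟩
  rw [B.2]
  refine (intervalIntegral.integral_add_adjacent_intervals ?_ ?_)
  · exact (intervalIntegrable_iff_integrableOn_Icc_of_le hs.le).2 i1
  · exact (intervalIntegrable_iff_integrableOn_Icc_of_le (by linarith)).2 i2

end Calculus

/-! ### Uniform bounds on the Lagrangian -/

section Bounds

variable {Γ : MetricGraph}

lemma lag_continuousOn (Λ : TonelliLagrangian Γ) (j : Γ.E) (w : ℝ) :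
    ContinuousOn (fun x => Λ.L j x w) (Icc 0 (Γ.len j)) :=
  (Λ.smooth j).continuousOn.comp (f := fun x : ℝ => (x, w)) (by fun_prop)
    (fun _ hx => ⟨hx, mem_univ _⟩)

lemma lag_bound (Λ : TonelliLagrangian Γ) (R : ℝ) :
    ∃ M, ∀ j, ∀ x ∈ Icc 0 (Γ.len j), ∀ w, |w| ≤ R → |Λ.L j x w| ≤ M := by
  have h : ∀ j, ∃ M, ∀ p ∈ Icc 0 (Γ.len j) ×ˢ Icc (-R) R, ‖Λ.L j p.1 p.2‖ ≤ M := fun j =>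
    (isCompact_Icc.prod isCompact_Icc).exists_bound_of_continuousOn
      ((Λ.smooth j).continuousOn.mono (prod_mono_right (subset_univ _)))
  choose M hM using h
  refine ⟨∑ j, |M j|, fun j x hx w hw => ?_⟩
  calc |Λ.L j x w| ≤ M j := hM j (x, w) ⟨hx, abs_le.1 hw⟩
    _ ≤ |M j| := le_abs_self _
    _ ≤ _ := Finset.single_le_sum (f := fun j => |M j|) (fun _ _ => abs_nonneg _)
      (Finset.mem_univ j)

/-- Superlinearity is only assumed pointwise in `x`; convexity makes it locally uniform:
if `L(x, ±R) > L(x, 0)` then `L(x, v) ≥ L(x, 0)` for `|v| ≥ R`, and the first condition is open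
in `x`. -/
lemma lag_lower (Λ : TonelliLagrangian Γ) :
    ∃ C, ∀ j, ∀ x ∈ Icc 0 (Γ.len j), ∀ v, C ≤ Λ.L j x v := by
  have h : ∀ j, ∃ C, ∀ x ∈ Icc 0 (Γ.len j), x ∈ Icc 0 (Γ.len j) → ∀ v, C ≤ Λ.L j x v := by
    intro j
    refine isCompact_Icc.induction_on
      (p := fun S => ∃ C, ∀ x ∈ S, x ∈ Icc 0 (Γ.len j) → ∀ v, C ≤ Λ.L j x v) ⟨0, by simp⟩ ?_ ?_ ?_
    · rintro S T hST ⟨C, hC⟩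
      exact ⟨C, fun x hx => hC x (hST hx)⟩
    · rintro S T ⟨C, hC⟩ ⟨C', hC'⟩
      refine ⟨min C C', fun x hx hI v => ?_⟩
      rcases hx with hx | hx
      · exact (min_le_left _ _).trans (hC x hx hI v)
      · exact (min_le_right _ _).trans (hC' x hx hI v)
    · intro x₀ hx₀
      obtain ⟨D, hD⟩ := Λ.superlinear j x₀ hx₀ 1
      obtain ⟨R, hR0, hR⟩ : ∃ R, 0 < R ∧ Λ.L j x₀ 0 + D < R :=
        ⟨|Λ.L j x₀ 0 + D| + 1, by positivity, by linarith [le_abs_self (Λ.L j x₀ 0 + D)]⟩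
      have h1 : Λ.L j x₀ 0 < Λ.L j x₀ R := by
        have := hD R; rw [abs_of_pos hR0] at this; linarith
      have h2 : Λ.L j x₀ 0 < Λ.L j x₀ (-R) := by
        have := hD (-R); rw [abs_neg, abs_of_pos hR0] at this; linarith
      obtain ⟨M, hM⟩ := lag_bound Λ R
      have e1 := (lag_continuousOn Λ j 0 x₀ hx₀).eventually_lt (lag_continuousOn Λ j R x₀ hx₀) h1
      have e2 := (lag_continuousOn Λ j 0 x₀ hx₀).eventually_lt (lag_continuousOn Λ j (-R) x₀ hx₀) h2
      refine ⟨_, e1.and e2, -M, fun x hx hI v => ?_⟩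
      obtain ⟨g1, g2⟩ := hx
      have hconv := (Λ.strictconv j x hI).convexOn
      have b0 := (abs_le.1 (hM j x hI 0 (by simpa using hR0.le))).1
      rcases le_total v (-R) with hv | hv
      · have := hconv.le_max_of_mem_Icc (x := v) (y := 0) (z := -R) trivial trivial
          ⟨hv, by linarith⟩
        rcases le_max_iff.1 this with h | h <;> linarith
      · rcases le_total v R with hv' | hv'
        · exact (abs_le.1 (hM j x hI v (abs_le.2 ⟨hv, hv'⟩))).1
        · have := hconv.le_max_of_mem_Icc (x := 0) (y := v) (z := R) trivial trivial
            ⟨by linarith, hv'⟩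
          rcases le_max_iff.1 this with h | h <;> linarith
  choose C hC using h
  refine ⟨-∑ j, |C j|, fun j x hx v => ?_⟩
  have h1 := hC j x hx hx v
  have h2 : |C j| ≤ ∑ j, |C j| := Finset.single_le_sum (f := fun j => |C j|)
    (fun _ _ => abs_nonneg _) (Finset.mem_univ j)
  linarith [neg_abs_le (C j)]

lemma actions_bddBelow (Λ : TonelliLagrangian Γ) {t : ℝ} (ht : 0 < t) (x y : Γ.G) :
    BddBelow {r | ∃ γ : ℝ → Γ.G, Γ.AbsContOn 0 t γ ∧ γ 0 = x ∧ γ t = y ∧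
      Λ.ActionIntegrableOn 0 t γ ∧ r = Λ.action 0 t γ} := by
  obtain ⟨C, hC⟩ := lag_lower Λ
  refine ⟨C * t, ?_⟩
  rintro r ⟨γ, -, -, -, hi, rfl⟩
  have := intervalIntegral.integral_mono_on (μ := volume) (f := fun _ => C)
    (g := fun t => Λ.lagOf (γ t) (Γ.gderiv γ t)) ht.le (by simp)
    ((intervalIntegrable_iff_integrableOn_Icc_of_le ht.le).2 hi)
    (fun u _ => hC _ _ (Γ.cover (γ u)).choose_spec.choose_spec.1 _)
  simpa [TonelliLagrangian.action, mul_comm] using this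

lemma ht_le_action {Λ : TonelliLagrangian Γ} {t : ℝ} (ht : 0 < t) {x y : Γ.G} {γ : ℝ → Γ.G}
    (h : Joins Λ t x y γ) : Λ.ht t x y ≤ Λ.action 0 t γ :=
  csInf_le (actions_bddBelow Λ ht x y) ⟨γ, h.1, h.2.1, h.2.2.1, h.2.2.2, rfl⟩

lemma exists_action_lt {Λ : TonelliLagrangian Γ} {t : ℝ} {x y : Γ.G}
    (hne : ∃ γ, Joins Λ t x y γ) {r : ℝ} (hr : Λ.ht t x y < r) :
    ∃ γ, Joins Λ t x y γ ∧ Λ.action 0 t γ < r := by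
  obtain ⟨γ₀, h₀⟩ := hne
  obtain ⟨_, ⟨γ, h1, h2, h3, h4, rfl⟩, hlt⟩ :=
    exists_lt_of_csInf_lt (by exact ⟨_, γ₀, h₀.1, h₀.2.1, h₀.2.2.1, h₀.2.2.2, rfl⟩) hr
  exact ⟨γ, ⟨h1, h2, h3, h4⟩, hlt⟩

end Bounds

/-! ### Short curves along edges -/

section Edges

variable {Γ : MetricGraph}

lemma coord_interior {x : Γ.G} (hx : x ∉ Γ.vertexSet) {i : Γ.E} {s : ℝ}
    (hs : s ∈ Icc 0 (Γ.len i)) (h : Γ.σ i s = x) : s ∈ Ioo 0 (Γ.len i) := by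
  refine ⟨lt_of_le_of_ne hs.1 ?_, lt_of_le_of_ne hs.2 ?_⟩
  · rintro rfl; exact hx ⟨i, Or.inl h.symm⟩
  · rintro rfl; exact hx ⟨i, Or.inr h.symm⟩

lemma lagOf_eq (Λ : TonelliLagrangian Γ) {j : Γ.E} {s : ℝ} (hs : s ∈ Icc 0 (Γ.len j)) {v : ℝ}
    (hv : v = 0 ∨ Γ.σ j s ∉ Γ.vertexSet) : Λ.lagOf (Γ.σ j s) v = Λ.L j s v := by
  unfold TonelliLagrangian.lagOf
  generalize_proofs p1 p2
  obtain ⟨h1, h2⟩ := p2.choose_spec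
  generalize p2.choose = s' at *
  generalize p1.choose = j' at *
  rcases hv with rfl | hv
  · exact Λ.vertex_consistent _ _ _ h1 _ hs h2
  · obtain rfl := Γ.interiors_disjoint _ _ _ (coord_interior hv h1 h2) _
      (coord_interior hv hs rfl) h2
    rw [Γ.σ_inj _ h1 hs h2]

lemma gderiv_vertex {γ : ℝ → Γ.G} {t : ℝ} (h : γ t ∈ Γ.vertexSet) : Γ.gderiv γ t = 0 := by
  unfold MetricGraph.gderiv
  split_ifs with hex
  · rcases hex.choose_spec with ⟨-, h0, -⟩ | ⟨hn, -⟩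
    · exact h0
    · exact absurd h hn
  · rfl

lemma gderiv_edge {j : Γ.E} {g : ℝ → ℝ} {t v : ℝ} (hg : ∀ᶠ s in nhds t, g s ∈ Icc 0 (Γ.len j))
    (hd : HasDerivAt g v t) (h : Γ.σ j (g t) ∉ Γ.vertexSet) :
    Γ.gderiv (fun u => Γ.σ j (g u)) t = v := by
  have hex : ∃ w, Γ.HasGDerivAt (fun u => Γ.σ j (g u)) t w :=
    ⟨v, Or.inr ⟨h, j, g, Eventually.of_forall fun _ => rfl, hg, hd⟩⟩
  unfold MetricGraph.gderiv
  rw [dif_pos hex]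
  rcases hex.choose_spec with ⟨hn, -⟩ | ⟨-, i, f, hf, hI, hder⟩
  · exact absurd hn h
  · obtain rfl := Γ.interiors_disjoint _ _ _
      (coord_interior h hI.self_of_nhds hf.self_of_nhds) _
      (coord_interior h hg.self_of_nhds rfl) hf.self_of_nhds
    have : f =ᶠ[nhds t] g := by
      filter_upwards [hf, hI, hg] with s h1 h2 h3 using Γ.σ_inj _ h2 h3 h1
    exact (hder.congr_of_eventuallyEq this.symm).unique hd

lemma vertexSet_finite : Γ.vertexSet.Finite := by
  have : Γ.vertexSet = Set.range (fun j => Γ.σ j 0) ∪ Set.range (fun j => Γ.σ j (Γ.len j)) := by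
    ext x
    simp only [MetricGraph.vertexSet, mem_ofPred_eq, mem_union, mem_range, ← exists_or]
    simp only [eq_comm]
  rw [this]
  exact (Set.finite_range _).union (Set.finite_range _)

lemma σ_continuousOn (j : Γ.E) : ContinuousOn (Γ.σ j) (Icc 0 (Γ.len j)) := by
  have : LipschitzOnWith 1 (Γ.σ j) (Icc 0 (Γ.len j)) :=
    LipschitzOnWith.of_dist_le_mul fun s hs t ht => by
      simpa [Real.dist_eq] using Γ.σ_lip j s hs t ht
  exact this.continuousOn

/-- Moving along an edge at constant speed at most `R`. At interior times the integrand of the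
action is `L_j(·, v)` off the vertices and `L_j(·, 0)` at the vertices, so it is measurable and
bounded. -/
lemma edge_joins (Λ : TonelliLagrangian Γ) {R M : ℝ}
    (hM : ∀ j, ∀ x ∈ Icc 0 (Γ.len j), ∀ w, |w| ≤ R → |Λ.L j x w| ≤ M)
    {j : Γ.E} {a b t : ℝ} (ha : a ∈ Icc 0 (Γ.len j)) (hb : b ∈ Icc 0 (Γ.len j)) (ht : 0 < t)
    (hab : |b - a| ≤ R * t) :
    ∃ γ, Joins Λ t (Γ.σ j a) (Γ.σ j b) γ ∧ Λ.action 0 t γ ≤ M * t := by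
  classical
  set v := (b - a) / t with hv
  have hvR : |v| ≤ R := by
    rw [hv, abs_div, abs_of_pos ht, div_le_iff₀ ht]; exact hab
  have hR : 0 ≤ R := (abs_nonneg v).trans hvR
  have hvt : v * t = b - a := by rw [hv]; field_simp
  set g : ℝ → ℝ := fun u => a + v * u with hg
  have hgI : ∀ u ∈ Icc 0 t, g u ∈ Icc 0 (Γ.len j) := by
    intro u hu
    have hseg : g u = (1 - u / t) * a + (u / t) * b := by
      simp only [hg, hv]; field_simp; ring
    have h1 : 0 ≤ u / t := div_nonneg hu.1 ht.le
    have h2 : 0 ≤ 1 - u / t := by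
      rw [sub_nonneg, div_le_one ht]; exact hu.2
    rw [hseg]
    exact (convex_Icc 0 (Γ.len j)) ha hb h2 h1 (by ring)
  set γ : ℝ → Γ.G := fun u => Γ.σ j (g u) with hγ
  have hgc : Continuous g := by simp only [hg]; fun_prop
  have hγc : ContinuousOn γ (Icc 0 t) := (σ_continuousOn j).comp hgc.continuousOn hgI
  have hint : ∀ u ∈ Ioo 0 t, Λ.lagOf (γ u) (Γ.gderiv γ u) =
      if γ u ∈ Γ.vertexSet then Λ.L j (g u) 0 else Λ.L j (g u) v := by
    intro u hu
    have huI := Ioo_subset_Icc_self hu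
    split_ifs with hvx
    · rw [gderiv_vertex hvx]
      exact lagOf_eq Λ (hgI u huI) (Or.inl rfl)
    · have hd : HasDerivAt g v u := by
        have := ((hasDerivAt_id u).const_mul v).const_add a
        rw [mul_one] at this
        exact this
      have hev : ∀ᶠ s in nhds u, g s ∈ Icc 0 (Γ.len j) := by
        filter_upwards [isOpen_Ioo.mem_nhds hu] with s hs using hgI s (Ioo_subset_Icc_self hs)
      rw [hγ, gderiv_edge hev hd hvx]
      exact lagOf_eq Λ (hgI u huI) (Or.inr hvx)
  have hbd : ∀ u ∈ Ioo 0 t, |Λ.lagOf (γ u) (Γ.gderiv γ u)| ≤ M := by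
    intro u hu
    have huI := hgI u (Ioo_subset_Icc_self hu)
    rw [hint u hu]
    split_ifs
    · exact hM j _ huI 0 (by simpa using hR)
    · exact hM j _ huI v hvR
  have hcont : ∀ w, ContinuousOn (fun u => Λ.L j (g u) w) (Ioo 0 t) := fun w =>
    (lag_continuousOn Λ j w).comp hgc.continuousOn fun u hu => hgI u (Ioo_subset_Icc_self hu)
  have hmeas : AEStronglyMeasurable (fun u => Λ.lagOf (γ u) (Γ.gderiv γ u))
      (volume.restrict (Ioo 0 t)) := by
    obtain ⟨K, hK, hKeq⟩ := (continuousOn_iff_isClosed.1 hγc) _ vertexSet_finite.isClosed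
    have hmem : ∀ u ∈ Ioo 0 t, (γ u ∈ Γ.vertexSet ↔ u ∈ K) := fun u hu => by
      have := Set.ext_iff.1 hKeq u
      simpa [mem_inter_iff, Ioo_subset_Icc_self hu] using this
    have h0 : ∀ w, AEStronglyMeasurable (fun u => Λ.L j (g u) w) (volume.restrict (Ioo 0 t)) :=
      fun w => (hcont w).aestronglyMeasurable measurableSet_Ioo
    have hp : AEStronglyMeasurable (K.piecewise (fun u => Λ.L j (g u) 0) fun u => Λ.L j (g u) v)
        (volume.restrict (Ioo 0 t)) :=
      AEStronglyMeasurable.piecewise hK.measurableSet (h0 0).restrict (h0 v).restrict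
    refine hp.congr ?_
    filter_upwards [ae_restrict_mem measurableSet_Ioo] with u hu
    rw [hint u hu]
    simp only [Set.piecewise, hmem u hu]
  have hInt : IntegrableOn (fun u => Λ.lagOf (γ u) (Γ.gderiv γ u)) (Ioo 0 t) := by
    refine ⟨hmeas, HasFiniteIntegral.restrict_of_bounded M (by simp) ?_⟩
    filter_upwards [ae_restrict_mem measurableSet_Ioo] with u hu
    exact hbd u hu
  refine ⟨γ, ⟨?_, by simp [hγ, hg], by simp [hγ, hg, hvt], ?_⟩, ?_⟩
  · intro ε he
    refine ⟨ε / (R + 1), by positivity, fun n c d hcd _ hsum => ?_⟩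
    have h1 : ∀ i, dist (γ (c i)) (γ (d i)) ≤ R * (d i - c i) := by
      intro i
      obtain ⟨hc, hd, hle⟩ := hcd i
      refine (Γ.σ_lip j _ (hgI _ hc) _ (hgI _ hd)).trans ?_
      have : g (c i) - g (d i) = -(v * (d i - c i)) := by simp only [hg]; ring
      rw [this, abs_neg, abs_mul, abs_of_nonneg (sub_nonneg.2 hle)]
      exact mul_le_mul_of_nonneg_right hvR (sub_nonneg.2 hle)
    have h2 : ∑ i, dist (γ (c i)) (γ (d i)) ≤ R * ∑ i, (d i - c i) := by
      rw [Finset.mul_sum]; exact Finset.sum_le_sum fun i _ => h1 i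
    have h3 : R * ∑ i, (d i - c i) ≤ R * (ε / (R + 1)) :=
      mul_le_mul_of_nonneg_left hsum.le hR
    have h4 : R * (ε / (R + 1)) < ε := by
      rw [← mul_div_assoc, div_lt_iff₀ (by linarith)]; nlinarith
    linarith
  · unfold TonelliLagrangian.ActionIntegrableOn
    rwa [integrableOn_Icc_iff_integrableOn_Ioo]
  · unfold TonelliLagrangian.action
    have h1 := intervalIntegral.integral_mono_on_of_le_Ioo (μ := volume)
      (f := fun u => Λ.lagOf (γ u) (Γ.gderiv γ u)) (g := fun _ => M) ht.le
      ((intervalIntegrable_iff_integrableOn_Ioo_of_le ht.le).2 hInt) (by simp)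
      (fun u hu => (abs_le.1 (hbd u hu)).2)
    simpa [mul_comm] using h1

/-- A point close to `q` lies on an edge through `q`, at a nearby edge coordinate. -/
lemma eventually_same_edge (q : Γ.G) {η : ℝ} (hη : 0 < η) :
    ∀ᶠ p in nhds q, ∃ j, ∃ a ∈ Icc 0 (Γ.len j), ∃ b ∈ Icc 0 (Γ.len j),
      Γ.σ j a = p ∧ Γ.σ j b = q ∧ |b - a| ≤ η := by
  let S : Γ.E → Set ℝ := fun j =>
    Icc 0 (Γ.len j) ∩ ⋂ b ∈ {b ∈ Icc 0 (Γ.len j) | Γ.σ j b = q}, {a | η ≤ |b - a|}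
  have hS : ∀ j, IsCompact (Γ.σ j '' S j) := by
    intro j
    have : IsCompact (S j) := isCompact_Icc.inter_right <| isClosed_biInter fun b _ =>
      isClosed_le continuous_const (by fun_prop)
    exact this.image_of_continuousOn ((σ_continuousOn j).mono inter_subset_left)
  have hcl : IsClosed (⋃ j, Γ.σ j '' S j) := isClosed_iUnion_of_finite fun j => (hS j).isClosed
  have hq : q ∉ ⋃ j, Γ.σ j '' S j := by
    simp only [mem_iUnion, not_exists]
    rintro j ⟨a, ⟨ha, ha'⟩, haq⟩
    have := Set.mem_iInter₂.1 ha' a ⟨ha, haq⟩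
    simp only [sub_self, abs_zero, mem_ofPred_eq] at this
    linarith
  filter_upwards [hcl.isOpen_compl.mem_nhds hq] with p hp
  obtain ⟨j, a, ha, rfl⟩ := Γ.cover p
  have hnot : a ∉ S j := fun h => hp (mem_iUnion.2 ⟨j, a, h, rfl⟩)
  have : ∃ b ∈ Icc 0 (Γ.len j), Γ.σ j b = q ∧ |b - a| < η := by
    by_contra hcon
    push Not at hcon
    exact hnot ⟨ha, Set.mem_iInter₂.2 fun b hb => hcon b hb.1 hb.2⟩
  obtain ⟨b, hb, hbq, hlt⟩ := this
  exact ⟨j, a, ha, b, hb, rfl, hbq, hlt.le⟩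

instance : PreconnectedSpace Γ.G := by
  obtain ⟨x₀⟩ : Nonempty Γ.G := ⟨Γ.σ (Classical.arbitrary _) 0⟩
  refine ⟨isPreconnected_of_forall x₀ fun y _ => ?_⟩
  obtain ⟨T, hT, γ, h0, h1, hL⟩ := Γ.path_exists x₀ y
  exact ⟨γ '' Icc 0 T, subset_univ _, ⟨0, ⟨le_rfl, hT⟩, h0⟩, ⟨T, ⟨hT, le_rfl⟩, h1⟩,
    isPreconnected_Icc.image _ hL.continuousOn⟩

/-- Any two points are joined in any positive time by a curve of finite action: being so
joined is an equivalence relation with open classes on a connected space. -/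
lemma exists_joins (Λ : TonelliLagrangian Γ) (x y : Γ.G) {t : ℝ} (ht : 0 < t) :
    ∃ γ, Joins Λ t x y γ := by
  have near : ∀ q : Γ.G, ∀ᶠ p in nhds q, (∀ t : ℝ, 0 < t → ∃ γ, Joins Λ t p q γ) ∧
      (∀ t : ℝ, 0 < t → ∃ γ, Joins Λ t q p γ) := by
    intro q
    filter_upwards [eventually_same_edge q one_pos] with p hp
    obtain ⟨j, a, ha, b, hb, rfl, rfl, -⟩ := hp
    constructor
    · intro t ht
      obtain ⟨M, hM⟩ := lag_bound Λ (|b - a| / t)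
      obtain ⟨γ, h, -⟩ := edge_joins Λ hM ha hb ht (by field_simp; rfl)
      exact ⟨γ, h⟩
    · intro t ht
      obtain ⟨M, hM⟩ := lag_bound Λ (|a - b| / t)
      obtain ⟨γ, h, -⟩ := edge_joins Λ hM hb ha ht (by field_simp; rfl)
      exact ⟨γ, h⟩
  have trans : ∀ {p q r : Γ.G}, (∀ t : ℝ, 0 < t → ∃ γ, Joins Λ t p q γ) →
      (∀ t : ℝ, 0 < t → ∃ γ, Joins Λ t q r γ) → ∀ t : ℝ, 0 < t → ∃ γ, Joins Λ t p r γ := by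
    intro p q r h1 h2 t ht
    obtain ⟨α, hα⟩ := h1 (t / 2) (by linarith)
    obtain ⟨β, hβ⟩ := h2 (t / 2) (by linarith)
    obtain ⟨γ, hγ, -⟩ := hα.concat (by linarith) (by linarith) hβ
    exact ⟨γ, by simpa using hγ⟩
  let U : Set Γ.G := {z | ∀ t : ℝ, 0 < t → ∃ γ, Joins Λ t x z γ}
  have hU : IsClopen U := by
    refine ⟨⟨isOpen_iff_mem_nhds.2 fun z hz => ?_⟩, isOpen_iff_mem_nhds.2 fun z hz => ?_⟩
    · filter_upwards [near z] with p hp hpU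
      exact hz (trans hpU hp.1)
    · filter_upwards [near z] with p hp
      exact trans hz hp.2
  have hx : x ∈ U := (near x).self_of_nhds.1
  have : U = univ := hU.eq_univ ⟨x, hx⟩
  exact (this ▸ mem_univ y : y ∈ U) t ht

end Edges

/-! ### The abstract minimality argument -/

/-- The properties of the function `H t x y = h_t(x,y) + ct`, together with its lower limit `h`
as `t → ∞`, from which the representation of `h` through the Aubry set follows. -/
structure Barrier {X : Type} [TopologicalSpace X] (H : ℝ → X → X → ℝ) (h : X → X → ℝ) : Prop where
  /-- Concatenation of curves. -/
  sub : ∀ s t : ℝ, 0 < s → 0 < t → ∀ x y z, H (s + t) x z ≤ H s x y + H t y z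
  /-- Cutting almost minimizing curves. -/
  split : ∀ s t ε : ℝ, 0 < s → 0 < t → 0 < ε → ∀ x z, ∃ y, H s x y + H t y z ≤ H (s + t) x z + ε
  /-- Nearby points are joined at small cost. -/
  near : ∀ (q : X) (ε : ℝ), 0 < ε → ∃ η, 0 < η ∧ ∀ᶠ p in nhds q, H η p q ≤ ε ∧ H η q p ≤ ε
  /-- `h` is an asymptotic lower bound. -/
  lower : ∀ (x y : X) (ε : ℝ), 0 < ε → ∀ᶠ t in atTop, h x y - ε < H t x y
  /-- `h` is approached along arbitrarily large times. -/
  upper : ∀ (x y : X) (ε : ℝ), 0 < ε → ∃ᶠ t in atTop, H t x y < h x y + ε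

namespace Barrier

variable {X : Type} [MetricSpace X] {H : ℝ → X → X → ℝ} {h : X → X → ℝ}

lemma exists_time (B : Barrier H h) (x y : X) {ε : ℝ} (hε : 0 < ε) (T : ℝ) :
    ∃ t, T < t ∧ H t x y < h x y + ε := by
  obtain ⟨t, h1, h2⟩ := ((B.upper x y ε hε).and_eventually (eventually_gt_atTop T)).exists
  exact ⟨t, h2, h1⟩

lemma le_add_right (B : Barrier H h) (x y z : X) {t : ℝ} (ht : 0 < t) :
    h x z ≤ h x y + H t y z := by
  refine le_of_forall_pos_le_add fun ε hε => ?_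
  obtain ⟨T, hT⟩ := eventually_atTop.1 (B.lower x z (ε / 2) (by linarith))
  obtain ⟨s, hs, hs'⟩ := B.exists_time x y (ε := ε / 2) (by linarith) (max T 0)
  have hs0 : 0 < s := (le_max_right _ _).trans_lt hs
  have h1 := hT (s + t) (by linarith [le_max_left T 0])
  have h2 := B.sub s t hs0 ht x y z
  linarith

lemma le_add_left (B : Barrier H h) (x y z : X) {t : ℝ} (ht : 0 < t) :
    h x z ≤ H t x y + h y z := by
  refine le_of_forall_pos_le_add fun ε hε => ?_
  obtain ⟨T, hT⟩ := eventually_atTop.1 (B.lower x z (ε / 2) (by linarith))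
  obtain ⟨s, hs, hs'⟩ := B.exists_time y z (ε := ε / 2) (by linarith) (max T 0)
  have hs0 : 0 < s := (le_max_right _ _).trans_lt hs
  have h1 := hT (t + s) (by linarith [le_max_left T 0])
  have h2 := B.sub t s ht hs0 x y z
  linarith

lemma triangle (B : Barrier H h) (x y z : X) : h x z ≤ h x y + h y z := by
  refine le_of_forall_pos_le_add fun ε hε => ?_
  obtain ⟨s, hs, hs'⟩ := B.exists_time y z hε 0
  linarith [B.le_add_right x y z hs]

lemma diag_nonneg (B : Barrier H h) (x : X) : 0 ≤ h x x := by
  linarith [B.triangle x x x]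

/-- The infimum over all times (the Mañé potential) coincides with `h` when an endpoint is in the
Aubry set. -/
lemma sInf_eq (B : Barrier H h) {x y : X} (hxy : h x x = 0 ∨ h y y = 0) :
    sInf {r | ∃ t : ℝ, 0 < t ∧ r = H t x y} = h x y := by
  have hlb : h x y ∈ lowerBounds {r | ∃ t : ℝ, 0 < t ∧ r = H t x y} := by
    rintro r ⟨t, ht, rfl⟩
    rcases hxy with h0 | h0
    · linarith [B.le_add_right x x y ht]
    · linarith [B.le_add_left x y y ht]
  refine IsGLB.csInf_eq ⟨hlb, fun b hb => ?_⟩ ⟨_, 1, one_pos, rfl⟩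
  refine le_of_forall_pos_le_add fun ε hε => ?_
  obtain ⟨s, hs, hs'⟩ := B.exists_time x y hε 0
  exact (hb ⟨s, hs, rfl⟩).trans hs'.le

/-- Midpoints of almost minimizing curves of larger and larger duration accumulate at a point `q`
through which `h` splits. -/
lemma exists_mid [CompactSpace X] (B : Barrier H h) (x y : X) : ∃ q, h x q + h q y ≤ h x y := by
  have hn : ∀ n : ℕ, (0 : ℝ) < 1 / ((n : ℝ) + 1) := fun n => Nat.one_div_pos_of_nat
  choose t ht ht' using fun n : ℕ => B.exists_time x y (hn n) (2 * n : ℝ)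
  have htpos : ∀ n, 0 < t n / 2 := fun n => by
    have : (0 : ℝ) ≤ n := n.cast_nonneg
    linarith [ht n]
  choose p hp using fun n : ℕ =>
    B.split (t n / 2) (t n / 2) _ (htpos n) (htpos n) (hn n) x y
  obtain ⟨q, φ, hφ, hlim⟩ := CompactSpace.tendsto_subseq p
  refine ⟨q, le_of_forall_pos_le_add fun ε hε => ?_⟩
  obtain ⟨η, hη, hnear⟩ := B.near q (ε / 6) (by linarith)
  have htop : Tendsto (fun n => t (φ n) / 2 + η) atTop atTop := by
    refine tendsto_atTop_mono (fun n => ?_) tendsto_natCast_atTop_atTop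
    have h1 : (n : ℝ) ≤ φ n := by exact_mod_cast hφ.le_apply
    linarith [ht (φ n)]
  have hsmall : ∀ᶠ n in atTop, 1 / (((φ n : ℕ) : ℝ) + 1) < ε / 6 :=
    (tendsto_one_div_add_atTop_nhds_zero_nat.comp hφ.tendsto_atTop).eventually
      (gt_mem_nhds (by linarith))
  obtain ⟨n, h1, h2, h3, h4⟩ := (hlim.eventually hnear |>.and <|
    (htop.eventually (B.lower x q (ε / 6) (by linarith))).and <|
    (htop.eventually (B.lower q y (ε / 6) (by linarith))).and hsmall).exists
  have h5 := B.sub _ _ (htpos (φ n)) hη x (p (φ n)) q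
  have h6 := B.sub _ _ hη (htpos (φ n)) q (p (φ n)) y
  rw [add_comm η] at h6
  have h7 := hp (φ n)
  rw [add_halves] at h7
  have h8 := ht' (φ n)
  simp only [Function.comp_apply] at h1
  linarith [h1.1, h1.2]

/-- Iterating `exists_mid` gives `q₀, q₁, …` through which `h x y` splits; two of these points
that are close to a common accumulation point `q` make `h q q` vanish. -/
lemma exists_aubry [CompactSpace X] (B : Barrier H h) (x y : X) :
    ∃ q, h q q = 0 ∧ h x q + h q y ≤ h x y := by
  choose m hm using fun z => B.exists_mid z y
  let p : ℕ → X := fun n => m^[n + 1] x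
  have hstep : ∀ n, h (p n) (p (n + 1)) + h (p (n + 1)) y ≤ h (p n) y := fun n => by
    have := hm (p n)
    simpa only [p, Function.iterate_succ_apply' m (n + 1)] using this
  have hx : ∀ n, h x (p n) + h (p n) y ≤ h x y := by
    intro n
    induction n with
    | zero => exact hm x
    | succ n ih => linarith [hstep n, B.triangle x (p n) (p (n + 1))]
  have hij : ∀ i k, h (p i) (p (i + k + 1)) + h (p (i + k + 1)) y ≤ h (p i) y := by
    intro i k
    induction k with
    | zero => exact hstep i
    | succ k ih =>
      rw [← add_assoc i k 1]
      linarith [hstep (i + k + 1), B.triangle (p i) (p (i + k + 1)) (p (i + k + 1 + 1))]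
  obtain ⟨q, φ, hφ, hlim⟩ := CompactSpace.tendsto_subseq p
  have key : h x q + h q q + h q y ≤ h x y := by
    refine le_of_forall_pos_le_add fun ε hε => ?_
    obtain ⟨η, hη, hnear⟩ := B.near q (ε / 4) (by linarith)
    have hev := hlim.eventually hnear
    obtain ⟨n, h1, h2⟩ := (hev.and ((tendsto_add_atTop_nat 1).eventually hev)).exists
    simp only [Function.comp_apply] at h1 h2
    obtain ⟨k, hk⟩ := Nat.exists_eq_add_of_lt (hφ (Nat.lt_succ_self n))
    have h3 := hij (φ n) k
    rw [← hk] at h3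
    have a1 := B.le_add_right x (p (φ n)) q hη
    have a2 := B.le_add_left q (p (φ n)) q hη
    have a3 := B.le_add_right (p (φ n)) (p (φ (n + 1))) q hη
    have a4 := B.le_add_left q (p (φ (n + 1))) y hη
    linarith [hx (φ n), h1.1, h1.2, h2.1, h2.2]
  exact ⟨q, le_antisymm (by linarith [B.triangle x q y]) (B.diag_nonneg q),
    by linarith [B.diag_nonneg q]⟩

end Barrier

lemma barrier {Γ : MetricGraph} (Λ : TonelliLagrangian Γ) {c : ℝ} (hc : Λ.IsCriticalValue c) :
    Barrier (fun t x y => Λ.ht t x y + c * t) (Λ.peierls c) where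
  sub s t hs ht x y z := by
    refine le_of_forall_pos_le_add fun ε hε => ?_
    obtain ⟨α, hα, hα'⟩ := exists_action_lt (exists_joins Λ x y hs)
      (lt_add_of_pos_right (Λ.ht s x y) (half_pos hε))
    obtain ⟨β, hβ, hβ'⟩ := exists_action_lt (exists_joins Λ y z ht)
      (lt_add_of_pos_right (Λ.ht t y z) (half_pos hε))
    obtain ⟨γ, hγ, hγ'⟩ := hα.concat hs ht hβ
    linarith [ht_le_action (add_pos hs ht) hγ]
  split s t ε hs ht hε x z := by
    obtain ⟨γ, hγ, hγ'⟩ := exists_action_lt (exists_joins Λ x z (add_pos hs ht))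
      (lt_add_of_pos_right (Λ.ht (s + t) x z) hε)
    obtain ⟨y, α, β, hα, hβ, h⟩ := hγ.split hs ht
    refine ⟨y, ?_⟩
    linarith [ht_le_action hs hα, ht_le_action ht hβ]
  near q ε hε := by
    obtain ⟨M, hM⟩ := lag_bound Λ 1
    -- `η` is chosen so that `(M + c) η ≤ ε`
    have hη : 0 < ε / (|M + c| + 1) := by positivity
    refine ⟨ε / (|M + c| + 1), hη, ?_⟩
    have hle : M * (ε / (|M + c| + 1)) + c * (ε / (|M + c| + 1)) ≤ ε := by
      rw [← add_mul, ← mul_div_assoc, div_le_iff₀ (by positivity)]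
      nlinarith [le_abs_self (M + c)]
    filter_upwards [eventually_same_edge q hη] with p hp
    obtain ⟨j, a, ha, b, hb, rfl, rfl, hab⟩ := hp
    constructor
    · obtain ⟨γ, h1, h2⟩ := edge_joins Λ hM ha hb hη (by linarith)
      linarith [ht_le_action hη h1]
    · obtain ⟨γ, h1, h2⟩ := edge_joins Λ hM hb ha hη (by rw [abs_sub_comm]; linarith)
      linarith [ht_le_action hη h1]
  lower x y ε hε := by
    obtain ⟨r, hr⟩ := hc.2.2 x y
    have hp : Λ.peierls c x y = r := by rw [TonelliLagrangian.peierls, hr, EReal.toReal_coe]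
    have : ((r - ε : ℝ) : EReal) <
        liminf (fun t : ℝ => ((Λ.ht t x y + c * t : ℝ) : EReal)) atTop := by
      rw [hr]; exact_mod_cast sub_lt_self r hε
    filter_upwards [eventually_lt_of_lt_liminf this] with t ht
    rw [hp]
    exact_mod_cast ht
  upper x y ε hε := by
    obtain ⟨r, hr⟩ := hc.2.2 x y
    have hp : Λ.peierls c x y = r := by rw [TonelliLagrangian.peierls, hr, EReal.toReal_coe]
    have : liminf (fun t : ℝ => ((Λ.ht t x y + c * t : ℝ) : EReal)) atTop <
        ((r + ε : ℝ) : EReal) := by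
      rw [hr]; exact_mod_cast lt_add_of_pos_right r hε
    refine (frequently_lt_of_liminf_lt (by isBoundedDefault) this).mono fun t ht => ?_
    rw [hp]
    exact_mod_cast ht

end PeierlsAubry

/-- `h(x,y) = min_{q ∈ 𝒜} (h(x,q) + h(q,y)) = min_{q ∈ 𝒜} (Φ(x,q) + Φ(q,y))`. -/
theorem peierls_min_through_aubry
    (Γ : MetricGraph) (Λ : TonelliLagrangian Γ) (c : ℝ) (hc : Λ.IsCriticalValue c)
    (x y : Γ.G) :
    IsLeast {r : ℝ | ∃ q ∈ Λ.aubrySet c, r = Λ.peierls c x q + Λ.peierls c q y}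
      (Λ.peierls c x y) ∧
    IsLeast {r : ℝ | ∃ q ∈ Λ.aubrySet c, r = Λ.mane c x q + Λ.mane c q y}
      (Λ.peierls c x y) := by
  have B := PeierlsAubry.barrier Λ hc
  have hpeierls : IsLeast {r : ℝ | ∃ q ∈ Λ.aubrySet c, r = Λ.peierls c x q + Λ.peierls c q y}
      (Λ.peierls c x y) := by
    constructor
    · obtain ⟨q, hq, hle⟩ := B.exists_aubry x y
      exact ⟨q, hq, le_antisymm (B.triangle x q y) hle⟩
    · rintro r ⟨q, -, rfl⟩
      exact B.triangle x q y
  refine ⟨hpeierls, ?_⟩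
  convert hpeierls using 2
  ext r
  refine exists_congr fun q => and_congr_right fun hq => ?_
  have h1 : Λ.mane c x q = Λ.peierls c x q := B.sInf_eq (Or.inr hq)
  have h2 : Λ.mane c q y = Λ.peierls c q y := B.sInf_eq (Or.inl hq)
  rw [h1, h2]
end

section
/- Let L be a Tonelli Lagrangian on a metric graph G with critical value c and Peierls barrier h. For every continuous function u : G → ℝ, the functions ℒ_t u + ct converge uniformly on G as t → ∞ to the function v(x) = min_{z∈G} (u(z) + h(z,x)). -/
/-!
Write `F t x y = h_t(x, y) + c t`. The proof has a variational part, which establishes a few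
properties of `F` at large times, and a soft part, which deduces convergence from them.

The properties of `F` are collected in `GoodKernel` and proved in `TonelliLagrangian.goodKernel`:
the semigroup property, equicontinuity, boundedness (points of the compact connected graph are
joined at bounded speed, and the liminf defining the Peierls barrier is finite), and the estimate
`F (T + s) + F (T - s) ≤ 2 F T + K s² / T` for `|s| ≤ T / 4`. The last one is the
heart of the matter. A nearly minimizing curve has action at most linear in `T`, so by superlinearity
it moves at speed at most `R` for at least half of the time; slowing it down and speeding it up
during that time by a constant factor changes its duration by `±s`, and in the sum of the two
actions the first order terms cancel, which leaves the second order term of a Taylor expansion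
(`TonelliLagrangian.joins_timeChange`).

For the soft part, let `v = min_z (u z + h(z, ·))`, which is the lower limit of the orbit
`U t = ℒ_t u + c t`, and let `w` be its upper limit. Choose `x₀` where `w - v` is nearly equal to
its supremum `m`, and `y` such that `v y + F T y x₀` is nearly `v x₀`, for `T` large. Since
`w x₀ ≤ w y + F (T - s) y x₀`, the estimate above gives `F (T + s) y x₀ ≤ w x₀ - w y` up to a small
error, for every `s` in a window `[0, l]` fixed in advance. Starting from a time `t` at which `U t y`
is nearly `v y`, this shows that `U (t + T + s) x₀ ≤ v y + w x₀ - w y`, which is nearly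
`w x₀ - m`, throughout the window. On the other hand the orbit is precompact and the semigroup is
nonexpansive, so values near `w x₀` occur in every window of some fixed length
(`GoodKernel.recurrence`). Hence `m ≤ 0`, that is, `U t` converges pointwise to `v`
(`GoodKernel.eventually_evol_le`), and equicontinuity makes the convergence uniform.
-/


open Filter Set

open MeasureTheory

/-! ### Edge coordinates and the edgewise derivative -/

namespace MetricGraph

variable (Γ : MetricGraph)

/-- The part of the edge `j` that avoids all vertices. -/
def openEdge (j : Γ.E) : Set Γ.G :=
  {x | x ∉ Γ.vertexSet ∧ x ∈ Γ.σ j '' Set.Icc 0 (Γ.len j)}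

/-- The coordinate along the edge `j`; it is only meaningful on the image of that edge. -/
noncomputable def coord (j : Γ.E) (x : Γ.G) : ℝ :=
  Function.invFunOn (Γ.σ j) (Set.Icc 0 (Γ.len j)) x

variable {Γ}

lemma coord_mem {j : Γ.E} {x : Γ.G} (hx : x ∈ Γ.σ j '' Set.Icc 0 (Γ.len j)) :
    Γ.coord j x ∈ Set.Icc 0 (Γ.len j) :=
  Function.invFunOn_mem hx

lemma σ_coord {j : Γ.E} {x : Γ.G} (hx : x ∈ Γ.σ j '' Set.Icc 0 (Γ.len j)) :
    Γ.σ j (Γ.coord j x) = x :=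
  Function.invFunOn_eq hx

lemma coord_σ {j : Γ.E} {s : ℝ} (hs : s ∈ Set.Icc 0 (Γ.len j)) :
    Γ.coord j (Γ.σ j s) = s :=
  Γ.σ_inj j (coord_mem ⟨s, hs, rfl⟩) hs (σ_coord ⟨s, hs, rfl⟩)

lemma σ_continuousOn (j : Γ.E) : ContinuousOn (Γ.σ j) (Set.Icc 0 (Γ.len j)) := by
  have : LipschitzOnWith 1 (Γ.σ j) (Set.Icc 0 (Γ.len j)) := by
    refine LipschitzOnWith.of_dist_le_mul fun s hs t ht => ?_
    simpa [Real.dist_eq] using Γ.σ_lip j s hs t ht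
  exact this.continuousOn

lemma isClosed_edge (j : Γ.E) : IsClosed (Γ.σ j '' Set.Icc 0 (Γ.len j)) :=
  (isCompact_Icc.image_of_continuousOn (σ_continuousOn j)).isClosed

lemma vertexSet_finite : Γ.vertexSet.Finite := by
  have : Γ.vertexSet ⊆ (Set.range fun j => Γ.σ j 0) ∪ (Set.range fun j => Γ.σ j (Γ.len j)) := by
    rintro x ⟨j, h | h⟩
    · exact Or.inl ⟨j, h.symm⟩
    · exact Or.inr ⟨j, h.symm⟩
  exact ((Set.finite_range _).union (Set.finite_range _)).subset this

lemma mem_Ioo_of_not_vertex {j : Γ.E} {s : ℝ} (hs : s ∈ Set.Icc 0 (Γ.len j))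
    (hv : Γ.σ j s ∉ Γ.vertexSet) : s ∈ Set.Ioo 0 (Γ.len j) := by
  refine ⟨lt_of_le_of_ne hs.1 ?_, lt_of_le_of_ne hs.2 ?_⟩
  · rintro rfl; exact hv ⟨j, Or.inl rfl⟩
  · rintro rfl; exact hv ⟨j, Or.inr rfl⟩

lemma edge_unique {i j : Γ.E} {s t : ℝ} (hs : s ∈ Set.Icc 0 (Γ.len i))
    (ht : t ∈ Set.Icc 0 (Γ.len j)) (h : Γ.σ i s = Γ.σ j t) (hv : Γ.σ i s ∉ Γ.vertexSet) :
    i = j :=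
  Γ.interiors_disjoint i j s (mem_Ioo_of_not_vertex hs hv) t
    (mem_Ioo_of_not_vertex ht (h ▸ hv)) h

lemma exists_openEdge {x : Γ.G} (hx : x ∉ Γ.vertexSet) : ∃ j, x ∈ Γ.openEdge j := by
  obtain ⟨j, s, hs, rfl⟩ := Γ.cover x
  exact ⟨j, hx, s, hs, rfl⟩

lemma isOpen_openEdge (j : Γ.E) : IsOpen (Γ.openEdge j) := by
  have : (Γ.openEdge j)ᶜ = Γ.vertexSet ∪
      ⋃ i ∈ {i | i ≠ j}, Γ.σ i '' Set.Icc 0 (Γ.len i) := by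
    ext x
    simp only [Set.mem_compl_iff, Set.mem_union, Set.mem_iUnion, Set.mem_ofPred_eq, exists_prop]
    constructor
    · intro h
      by_cases hv : x ∈ Γ.vertexSet
      · exact Or.inl hv
      · right
        obtain ⟨i, hi⟩ := exists_openEdge hv
        refine ⟨i, ?_, hi.2⟩
        rintro rfl; exact h hi
    · rintro (h | ⟨i, hij, s, hs, rfl⟩) ⟨hv, t, ht, hst⟩
      · exact hv h
      · exact hij (edge_unique hs ht hst.symm hv)
  rw [← isClosed_compl_iff, this]
  exact vertexSet_finite.isClosed.union
    ((Set.toFinite _).isClosed_biUnion fun i _ => isClosed_edge i)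

lemma coord_continuousOn (j : Γ.E) :
    ContinuousOn (Γ.coord j) (Γ.σ j '' Set.Icc 0 (Γ.len j)) := by
  rw [continuousOn_iff_isClosed]
  intro C hC
  refine ⟨Γ.σ j '' (Set.Icc 0 (Γ.len j) ∩ C), ?_, ?_⟩
  · exact ((isCompact_Icc.inter_right hC).image_of_continuousOn
      ((σ_continuousOn j).mono Set.inter_subset_left)).isClosed
  · ext x
    constructor
    · rintro ⟨h1, h2⟩
      exact ⟨⟨_, ⟨coord_mem h2, h1⟩, σ_coord h2⟩, h2⟩
    · rintro ⟨⟨s, ⟨hs, hsC⟩, rfl⟩, h2⟩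
      exact ⟨by simpa [coord_σ hs] using hsC, h2⟩

lemma hasGDerivAt_iff {γ : ℝ → Γ.G} {t v : ℝ} {j : Γ.E} (hγ : ContinuousAt γ t)
    (hj : γ t ∈ Γ.openEdge j) :
    Γ.HasGDerivAt γ t v ↔ HasDerivAt (fun s => Γ.coord j (γ s)) v t := by
  constructor
  · rintro (⟨h, -⟩ | ⟨-, i, f, h1, h2, h3⟩)
    · exact absurd h hj.1
    · have hij : i = j := by
        refine edge_unique (h2.self_of_nhds) (coord_mem hj.2) ?_ ?_
        · rw [h1.self_of_nhds, σ_coord hj.2]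
        · rw [h1.self_of_nhds]; exact hj.1
      subst hij
      refine h3.congr_of_eventuallyEq ?_
      filter_upwards [h1, h2] with s h1 h2
      rw [← h1, coord_σ h2]
  · intro h
    have hev : ∀ᶠ s in nhds t, γ s ∈ Γ.openEdge j :=
      hγ.eventually ((isOpen_openEdge j).mem_nhds hj)
    refine Or.inr ⟨hj.1, j, _, ?_, ?_, h⟩
    · filter_upwards [hev] with s hs using σ_coord hs.2
    · filter_upwards [hev] with s hs using coord_mem hs.2

lemma gderiv_eq_deriv {γ : ℝ → Γ.G} {t : ℝ} {j : Γ.E} (hγ : ContinuousAt γ t)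
    (hj : γ t ∈ Γ.openEdge j) :
    Γ.gderiv γ t = deriv (fun s => Γ.coord j (γ s)) t := by
  unfold gderiv
  split_ifs with h
  · exact ((hasGDerivAt_iff hγ hj).1 h.choose_spec).deriv.symm
  · refine (deriv_zero_of_not_differentiableAt fun hd => h ?_).symm
    exact ⟨_, (hasGDerivAt_iff hγ hj).2 hd.hasDerivAt⟩

lemma gderiv_vertex {γ : ℝ → Γ.G} {t : ℝ} (h : γ t ∈ Γ.vertexSet) : Γ.gderiv γ t = 0 := by
  unfold gderiv
  split_ifs with h'
  · rcases h'.choose_spec with ⟨-, h0, -⟩ | ⟨h0, -⟩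
    · exact h0
    · exact absurd h h0
  · rfl

lemma gderiv_congr {γ γ' : ℝ → Γ.G} {t : ℝ} (h : γ =ᶠ[nhds t] γ') :
    Γ.gderiv γ t = Γ.gderiv γ' t := by
  have key : ∀ {γ γ' : ℝ → Γ.G} (_ : γ =ᶠ[nhds t] γ') (v : ℝ),
      Γ.HasGDerivAt γ t v → Γ.HasGDerivAt γ' t v := by
    rintro γ γ' h v (⟨h1, h2, h3⟩ | ⟨h1, j, f, h2, h3, h4⟩)
    · refine Or.inl ⟨h.self_of_nhds ▸ h1, h2, fun ε hε => ?_⟩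
      obtain ⟨δ, hδ, hd⟩ := h3 ε hε
      obtain ⟨δ', hδ', hd'⟩ := Metric.eventually_nhds_iff.1 h
      refine ⟨min δ δ', lt_min hδ hδ', fun s hs => ?_⟩
      rw [← h.self_of_nhds, ← hd' (lt_of_lt_of_le hs (min_le_right _ _))]
      exact hd s (lt_of_lt_of_le hs (min_le_left _ _))
    · refine Or.inr ⟨h.self_of_nhds ▸ h1, j, f, ?_, h3, h4⟩
      filter_upwards [h, h2] with s hs h2
      rw [← hs, h2]
  have h' : Γ.HasGDerivAt γ t = Γ.HasGDerivAt γ' t :=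
    funext fun v => propext ⟨key h v, key h.symm v⟩
  exact congrArg (fun P : ℝ → Prop => letI := Classical.dec (∃ v, P v)
    if h : ∃ v, P v then h.choose else 0) h'

lemma gderiv_comp_sub {γ : ℝ → Γ.G} (hγ : Continuous γ) (a t : ℝ) :
    Γ.gderiv (fun s => γ (s - a)) t = Γ.gderiv γ (t - a) := by
  by_cases hv : γ (t - a) ∈ Γ.vertexSet
  · rw [gderiv_vertex hv, gderiv_vertex (γ := fun s => γ (s - a)) hv]
  · obtain ⟨j, hj⟩ := exists_openEdge hv
    rw [gderiv_eq_deriv hγ.continuousAt hj,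
      gderiv_eq_deriv (γ := fun s => γ (s - a)) (by fun_prop) hj]
    exact deriv_comp_sub_const (f := fun s => Γ.coord j (γ s)) a t

/-- Chain rule under a differentiable time change. No differentiability of `γ` is needed, since
the time change is invertible and both sides take the junk value `0` together. -/
lemma gderiv_comp {γ : ℝ → Γ.G} (hγ : Continuous γ) {ρ θ : ℝ → ℝ} (hρ : Continuous ρ)
    (hθρ : ∀ s, θ (ρ s) = s) (hρθ : ∀ s, ρ (θ s) = s) {t d : ℝ} (hd : d ≠ 0)
    (hθ : HasDerivAt θ d t) :
    Γ.gderiv (fun s => γ (ρ s)) (θ t) = d⁻¹ * Γ.gderiv γ t := by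
  have hρd : HasDerivAt ρ d⁻¹ (θ t) := by
    refine HasDerivAt.of_local_left_inverse hρ.continuousAt ?_ hd (Eventually.of_forall hθρ)
    rw [hρθ]; exact hθ
  by_cases hv : γ t ∈ Γ.vertexSet
  · rw [gderiv_vertex hv, gderiv_vertex (γ := fun s => γ (ρ s)) (by simpa [hρθ] using hv),
      mul_zero]
  · obtain ⟨j, hj⟩ := exists_openEdge hv
    rw [gderiv_eq_deriv hγ.continuousAt hj, gderiv_eq_deriv (γ := fun s => γ (ρ s)) (j := j)
      (hγ.comp hρ).continuousAt (by simpa [hρθ] using hj)]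
    by_cases hf : DifferentiableAt ℝ (fun s => Γ.coord j (γ s)) t
    · have h1 : HasDerivAt (fun s => Γ.coord j (γ s)) (deriv (fun s => Γ.coord j (γ s)) t)
          (ρ (θ t)) := by rw [hρθ]; exact hf.hasDerivAt
      have := (h1.comp (θ t) hρd).deriv
      rw [mul_comm]
      exact this
    · rw [deriv_zero_of_not_differentiableAt hf, mul_zero]
      refine deriv_zero_of_not_differentiableAt fun h => hf ?_
      have := h.comp t hθ.differentiableAt
      simpa [Function.comp_def, hρθ] using this

lemma measurable_gderiv {γ : ℝ → Γ.G} (hγ : Continuous γ) : Measurable (Γ.gderiv γ) := by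
  classical
  -- The edgewise derivative is a sum of edge terms because the open edges are disjoint.
  have : Γ.gderiv γ = fun t => ∑ j, (γ ⁻¹' Γ.openEdge j).indicator
      (deriv fun s => Γ.coord j (γ s)) t := by
    funext t
    by_cases hv : γ t ∈ Γ.vertexSet
    · rw [gderiv_vertex hv]
      refine (Finset.sum_eq_zero fun j _ => ?_).symm
      exact Set.indicator_of_notMem (fun h => h.1 hv) _
    · obtain ⟨j, hj⟩ := exists_openEdge hv
      rw [gderiv_eq_deriv hγ.continuousAt hj, Finset.sum_eq_single j]
      · exact (Set.indicator_of_mem (s := γ ⁻¹' Γ.openEdge j) hj _).symm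
      · intro i _ hij
        refine Set.indicator_of_notMem (fun h => hij ?_) _
        exact edge_unique (coord_mem h.2) (coord_mem hj.2)
          (by rw [σ_coord h.2, σ_coord hj.2]) (by rw [σ_coord h.2]; exact hv)
      · simp
  rw [this]
  refine Finset.measurable_sum _ fun j _ => ?_
  exact (measurable_deriv _).indicator ((isOpen_openEdge j).preimage hγ).measurableSet

end MetricGraph

/-! ### Uniform bounds on the Lagrangian -/

namespace TonelliLagrangian

variable {Γ : MetricGraph}

lemma continuousOn_L (Λ : TonelliLagrangian Γ) (j : Γ.E) :
    ContinuousOn (fun p : ℝ × ℝ => Λ.L j p.1 p.2)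
      (Set.Icc 0 (Γ.len j) ×ˢ (Set.univ : Set ℝ)) :=
  (Λ.smooth j).continuousOn

lemma continuousOn_L_left (Λ : TonelliLagrangian Γ) (j : Γ.E) (v : ℝ) :
    ContinuousOn (fun x => Λ.L j x v) (Set.Icc 0 (Γ.len j)) :=
  (Λ.continuousOn_L j).comp (f := fun x : ℝ => (x, v)) (by fun_prop) fun x hx => ⟨hx, trivial⟩

lemma convex_ray {f : ℝ → ℝ} (hf : ConvexOn ℝ Set.univ f) {w k : ℝ} (hk : 1 ≤ k)
    (hw : f 0 + 1 ≤ f w) : f 0 + k ≤ f (k * w) := by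
  have hk0 : 0 < k := by linarith
  have h := hf.2 (Set.mem_univ (k * w)) (Set.mem_univ 0)
    (show 0 ≤ k⁻¹ by positivity)
    (show 0 ≤ 1 - k⁻¹ by have := inv_le_one_of_one_le₀ hk; linarith) (by ring)
  simp only [smul_eq_mul, mul_zero, add_zero] at h
  rw [← mul_assoc, inv_mul_cancel₀ hk0.ne', one_mul] at h
  have h2 := mul_le_mul_of_nonneg_left (hw.trans h) hk0.le
  have h3 : k * (k⁻¹ * f (k * w) + (1 - k⁻¹) * f 0) = f (k * w) + (k - 1) * f 0 := by
    field_simp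
  rw [h3] at h2
  linarith

/-- Superlinearity is assumed pointwise in the base point; convexity in the velocity and
compactness of the edge make it uniform. -/
lemma edge_coercive (Λ : TonelliLagrangian Γ) (j : Γ.E) (N : ℝ) :
    ∃ R : ℝ, 0 < R ∧ ∀ x ∈ Set.Icc 0 (Γ.len j), ∀ v : ℝ, R ≤ |v| → N ≤ Λ.L j x v := by
  have key : ∃ R : ℝ, 0 < R ∧ ∀ x ∈ Set.Icc 0 (Γ.len j), x ∈ Set.Icc 0 (Γ.len j) →
      ∀ v : ℝ, R ≤ |v| → N ≤ Λ.L j x v := by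
    refine isCompact_Icc.induction_on (p := fun s => ∃ R : ℝ, 0 < R ∧ ∀ x ∈ s,
      x ∈ Set.Icc 0 (Γ.len j) → ∀ v : ℝ, R ≤ |v| → N ≤ Λ.L j x v) ?_ ?_ ?_ ?_
    · exact ⟨1, one_pos, by simp⟩
    · rintro s t hst ⟨R, hR, h⟩
      exact ⟨R, hR, fun x hx => h x (hst hx)⟩
    · rintro s t ⟨R, hR, h⟩ ⟨R', hR', h'⟩
      refine ⟨max R R', lt_max_of_lt_left hR, fun x hx hx' v hv => ?_⟩
      rcases hx with hx | hx
      · exact h x hx hx' v ((le_max_left _ _).trans hv)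
      · exact h' x hx hx' v ((le_max_right _ _).trans hv)
    · intro x₀ hx₀
      obtain ⟨D, hD⟩ := Λ.superlinear j x₀ hx₀ 1
      set l := Λ.L j x₀ 0 with hl
      set R₀ : ℝ := |l| + |D| + 2 with hR₀
      have hR₀pos : 0 < R₀ := by positivity
      have h1 : l + 1 < Λ.L j x₀ R₀ := by
        have := hD R₀
        rw [abs_of_pos hR₀pos] at this
        linarith [le_abs_self l, le_abs_self D]
      have h2 : l + 1 < Λ.L j x₀ (-R₀) := by
        have := hD (-R₀)
        rw [abs_neg, abs_of_pos hR₀pos] at this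
        linarith [le_abs_self l, le_abs_self D]
      have c0 := Λ.continuousOn_L_left j 0 x₀ hx₀
      have e1 := (c0.add_const 1).eventually_lt (Λ.continuousOn_L_left j R₀ x₀ hx₀) h1
      have e2 := (c0.add_const 1).eventually_lt (Λ.continuousOn_L_left j (-R₀) x₀ hx₀) h2
      have e3 := (tendsto_const_nhds (x := l - 1)).eventually_lt c0 (by simp [← hl])
      refine ⟨_, (e1.and (e2.and e3)), R₀ * (|N| + |l| + 1), by positivity, ?_⟩
      rintro x ⟨g1, g2, g3⟩ hx v hv
      have hcv := (Λ.strictconv j x hx).convexOn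
      have hk : |N| + |l| + 1 ≤ |v| / R₀ := by
        rw [le_div_iff₀ hR₀pos]; linarith
      have hk1 : 1 ≤ |v| / R₀ := by linarith [abs_nonneg N, abs_nonneg l]
      have : Λ.L j x 0 + |v| / R₀ ≤ Λ.L j x v := by
        rcases le_total 0 v with hv0 | hv0
        · have := convex_ray hcv hk1 g1.le
          rw [div_mul_cancel₀ _ hR₀pos.ne'] at this
          rwa [abs_of_nonneg hv0] at this ⊢
        · have := convex_ray hcv hk1 g2.le
          rw [mul_neg, div_mul_cancel₀ _ hR₀pos.ne'] at this
          rw [abs_of_nonpos hv0, neg_neg] at this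
          rwa [abs_of_nonpos hv0]
      linarith [le_abs_self N, neg_abs_le l]
  obtain ⟨R, hR, h⟩ := key
  exact ⟨R, hR, fun x hx => h x hx hx⟩

/-- Second-order expansion of the cost of running through a velocity `v` slower by the factor
`1 + μ`, uniformly for bounded velocities. -/
lemma edge_taylor (Λ : TonelliLagrangian Γ) (j : Γ.E) {R : ℝ} (hR : 0 < R) :
    ∃ K : ℝ, 0 ≤ K ∧ ∀ x ∈ Set.Icc 0 (Γ.len j), ∀ v : ℝ, |v| ≤ R → |Λ.L j x v| ≤ K ∧
      ∃ q : ℝ, |q| ≤ K ∧ ∀ μ : ℝ, |μ| ≤ 1 / 2 →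
        |(1 + μ) * Λ.L j x ((1 + μ)⁻¹ * v) - (Λ.L j x v + μ * q)| ≤ K * μ ^ 2 := by
  set C : Set (ℝ × ℝ) := Set.Icc 0 (Γ.len j) ×ˢ Set.Icc (-(2 * R)) (2 * R) with hC
  set f : ℝ × ℝ → ℝ := fun p => Λ.L j p.1 p.2 with hf
  have hCcomp : IsCompact C := isCompact_Icc.prod isCompact_Icc
  have hCconv : Convex ℝ C := (convex_Icc _ _).prod (convex_Icc _ _)
  have hfC : ContDiffOn ℝ 2 f C := (Λ.smooth j).mono (Set.prod_mono le_rfl (Set.subset_univ _))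
  have hud : UniqueDiffOn ℝ C := (uniqueDiffOn_Icc (Γ.len_pos j)).prod
    (uniqueDiffOn_Icc (by linarith))
  have hD : ContDiffOn ℝ 1 (fderivWithin ℝ f C) C :=
    hfC.fderivWithin hud (by norm_num)
  obtain ⟨M, hM⟩ := hD.exists_lipschitzOnWith one_ne_zero hCconv hCcomp
  obtain ⟨K1, hK1⟩ := hCcomp.exists_bound_of_continuousOn hfC.continuousOn
  obtain ⟨K2, hK2⟩ := hCcomp.exists_bound_of_continuousOn hD.continuousOn
  have hp0 : ((0 : ℝ), (0 : ℝ)) ∈ C :=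
    ⟨⟨le_rfl, (Γ.len_pos j).le⟩, ⟨by linarith, by linarith⟩⟩
  have hK1' : 0 ≤ K1 := (norm_nonneg _).trans (hK1 _ hp0)
  have hK2' : 0 ≤ K2 := (norm_nonneg _).trans (hK2 _ hp0)
  refine ⟨K1 + K2 * R + 2 * M * R ^ 2, by positivity, fun x hx v hv => ?_⟩
  have hp : (x, v) ∈ C := ⟨hx, abs_le.1 (hv.trans (by linarith))⟩
  have hL : |Λ.L j x v| ≤ K1 := hK1 _ hp
  have hMR : 0 ≤ 2 * M * R ^ 2 := by positivity
  have hKR : 0 ≤ K2 * R := by positivity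
  set φ := fderivWithin ℝ f C (x, v) with hφ
  have hφb : |φ (0, v)| ≤ K2 * R := by
    have h1 := φ.le_opNorm (0, v)
    have h2 : ‖((0 : ℝ), v)‖ = |v| := by simp [Prod.norm_def]
    rw [h2] at h1
    exact h1.trans (mul_le_mul (hK2 _ hp) hv (abs_nonneg _) hK2')
  refine ⟨by linarith, Λ.L j x v - φ (0, v), ?_, fun μ hμ => ?_⟩
  · exact (abs_sub _ _).trans (by linarith)
  obtain ⟨hμ1, hμ2⟩ := abs_le.1 hμ
  have hμ0 : 0 < 1 + μ := by linarith
  set v' := (1 + μ)⁻¹ * v with hv'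
  have hinv : (1 + μ)⁻¹ ≤ 2 := by
    rw [inv_le_comm₀ hμ0 two_pos]; linarith
  have hv'b : |v'| ≤ 2 * R := by
    rw [hv', abs_mul, abs_of_pos (inv_pos.2 hμ0)]
    exact mul_le_mul hinv hv (abs_nonneg _) two_pos.le
  have hp' : (x, v') ∈ C := ⟨hx, abs_le.1 hv'b⟩
  have hseg : segment ℝ (x, v) (x, v') ⊆ C := hCconv.segment_subset hp hp'
  have hnorm : ‖((x, v') : ℝ × ℝ) - (x, v)‖ = |v' - v| := by simp [Prod.norm_def]
  have hT := (convex_segment (𝕜 := ℝ) ((x, v) : ℝ × ℝ) (x, v')).norm_image_sub_le_of_norm_hasFDerivWithin_le'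
    (f := f) (f' := fderivWithin ℝ f C) (φ := φ) (C := M * |v' - v|)
    (fun z hz => (((hfC.differentiableOn two_ne_zero) z (hseg hz)).hasFDerivWithinAt).mono hseg)
    (fun z hz => by
      have h1 := hM.dist_le_mul z (hseg hz) _ hp
      rw [dist_eq_norm] at h1
      refine h1.trans (mul_le_mul_of_nonneg_left ?_ M.2)
      rw [← hnorm, ← dist_eq_norm, dist_comm ((x, v') : ℝ × ℝ)]
      have := dist_add_dist_of_mem_segment hz
      rw [dist_comm z]
      linarith [dist_nonneg (x := z) (y := (x, v'))])
    (left_mem_segment ℝ _ _) (right_mem_segment ℝ _ _)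
  rw [hnorm, Real.norm_eq_abs] at hT
  have hdiff : (1 + μ) * (v' - v) = -(μ * v) := by
    rw [hv', mul_sub, ← mul_assoc, mul_inv_cancel₀ hμ0.ne']; ring
  have hφlin : (1 + μ) * φ ((x, v') - (x, v)) = -(μ * φ (0, v)) := by
    have : (1 + μ) • (((x, v') : ℝ × ℝ) - (x, v)) = (-μ) • ((0 : ℝ), v) := by
      ext <;> simp [hdiff]
    have h2 := congrArg φ this
    rw [map_smul, map_smul] at h2
    simpa using h2
  have heq : (1 + μ) * Λ.L j x v' - (Λ.L j x v + μ * (Λ.L j x v - φ (0, v))) =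
      (1 + μ) * (f (x, v') - f (x, v) - φ ((x, v') - (x, v))) := by
    rw [mul_sub (1 + μ) (_ - _), hφlin]; simp only [hf]; ring
  rw [heq, abs_mul, abs_of_pos hμ0]
  have h3 : (1 + μ) * |f (x, v') - f (x, v) - φ ((x, v') - (x, v))| ≤
      (1 + μ) * (M * |v' - v| * |v' - v|) := mul_le_mul_of_nonneg_left hT hμ0.le
  refine h3.trans ?_
  have h4 : (1 + μ) * (M * |v' - v| * |v' - v|) = M * (1 + μ)⁻¹ * (μ * v) ^ 2 := by
    have : (μ * v) ^ 2 = ((1 + μ) * (v' - v)) ^ 2 := by rw [hdiff]; ring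
    rw [this, mul_assoc (M : ℝ), abs_mul_abs_self]
    field_simp
  rw [h4]
  have h5 : v ^ 2 ≤ R ^ 2 := sq_le_sq' (abs_le.1 hv).1 (abs_le.1 hv).2
  have h6 : (M : ℝ) * (1 + μ)⁻¹ * (μ * v) ^ 2 ≤ M * 2 * (μ ^ 2 * R ^ 2) := by
    rw [mul_pow]
    gcongr
  refine h6.trans ?_
  nlinarith [sq_nonneg μ, mul_nonneg (add_nonneg hK1' hKR) (sq_nonneg μ)]

lemma lagOf_eq_some (Λ : TonelliLagrangian Γ) (x : Γ.G) :
    ∃ j, ∃ s ∈ Set.Icc 0 (Γ.len j), Γ.σ j s = x ∧ ∀ v, Λ.lagOf x v = Λ.L j s v :=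
  ⟨_, _, (Γ.cover x).choose_spec.choose_spec.1, (Γ.cover x).choose_spec.choose_spec.2,
    fun _ => rfl⟩

lemma lagOf_openEdge (Λ : TonelliLagrangian Γ) {j : Γ.E} {x : Γ.G} (hx : x ∈ Γ.openEdge j)
    (v : ℝ) : Λ.lagOf x v = Λ.L j (Γ.coord j x) v := by
  obtain ⟨i, s, hs, hsx, h⟩ := Λ.lagOf_eq_some x
  have hij : i = j := MetricGraph.edge_unique hs (MetricGraph.coord_mem hx.2)
    (by rw [hsx, MetricGraph.σ_coord hx.2]) (by rw [hsx]; exact hx.1)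
  subst hij
  rw [h, ← hsx, MetricGraph.coord_σ hs]

lemma lagOf_coercive (Λ : TonelliLagrangian Γ) (N : ℝ) :
    ∃ R : ℝ, 0 < R ∧ ∀ x v, R ≤ |v| → N ≤ Λ.lagOf x v := by
  choose R hR h using fun j => Λ.edge_coercive j N
  obtain ⟨B, hB⟩ := (Set.finite_range R).bddAbove
  refine ⟨max B 1, by positivity, fun x v hv => ?_⟩
  obtain ⟨j, s, hs, -, hj⟩ := Λ.lagOf_eq_some x
  rw [hj]
  exact h j s hs v ((hB ⟨j, rfl⟩).trans ((le_max_left _ _).trans hv))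

lemma lagOf_taylor (Λ : TonelliLagrangian Γ) {R : ℝ} (hR : 0 < R) :
    ∃ K : ℝ, 0 ≤ K ∧ ∀ x v, |v| ≤ R → |Λ.lagOf x v| ≤ K ∧
      ∃ q : ℝ, |q| ≤ K ∧ ∀ μ : ℝ, |μ| ≤ 1 / 2 →
        |(1 + μ) * Λ.lagOf x ((1 + μ)⁻¹ * v) - (Λ.lagOf x v + μ * q)| ≤ K * μ ^ 2 := by
  choose K hK h using fun j => Λ.edge_taylor j hR
  obtain ⟨B, hB⟩ := (Set.finite_range K).bddAbove
  refine ⟨max B 0, le_max_right _ _, fun x v hv => ?_⟩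
  obtain ⟨j, s, hs, -, hj⟩ := Λ.lagOf_eq_some x
  obtain ⟨h1, q, hq, h2⟩ := h j s hs v hv
  have hKB : K j ≤ max B 0 := (hB ⟨j, rfl⟩).trans (le_max_left _ _)
  simp only [hj]
  exact ⟨h1.trans hKB, q, hq.trans hKB, fun μ hμ =>
    (h2 μ hμ).trans (mul_le_mul_of_nonneg_right hKB (sq_nonneg _))⟩

lemma lagOf_lower (Λ : TonelliLagrangian Γ) :
    ∃ D : ℝ, 0 ≤ D ∧ ∀ x v, -D ≤ Λ.lagOf x v := by
  obtain ⟨R, hR, h⟩ := Λ.lagOf_coercive 0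
  obtain ⟨K, hK, h'⟩ := Λ.lagOf_taylor hR
  refine ⟨K, hK, fun x v => ?_⟩
  rcases le_total R |v| with hv | hv
  · linarith [h x v hv]
  · exact (abs_le.1 (h' x v hv).1).1

lemma lagOf_upper (Λ : TonelliLagrangian Γ) :
    ∃ C : ℝ, 0 ≤ C ∧ ∀ x v, |v| ≤ 1 → |Λ.lagOf x v| ≤ C := by
  obtain ⟨K, hK, h'⟩ := Λ.lagOf_taylor one_pos
  exact ⟨K, hK, fun x v hv => (h' x v hv).1⟩

lemma measurable_lagOf (Λ : TonelliLagrangian Γ) [MeasurableSpace Γ.G] [BorelSpace Γ.G] :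
    Measurable fun p : Γ.G × ℝ => Λ.lagOf p.1 p.2 := by
  -- The sets `{e} × ℝ` (`e` a vertex) and `openEdge j × ℝ` form a finite measurable cover on
  -- each member of which the function is continuous.
  have : Countable Γ.vertexSet := MetricGraph.vertexSet_finite.countable.to_subtype
  let s : Γ.vertexSet ⊕ Γ.E → Set (Γ.G × ℝ) :=
    Sum.elim (fun e => {e.1} ×ˢ Set.univ) (fun j => Γ.openEdge j ×ˢ Set.univ)
  have hcover : ⋃ i, s i = Set.univ := by
    refine Set.eq_univ_of_forall fun p => Set.mem_iUnion.2 ?_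
    by_cases hv : p.1 ∈ Γ.vertexSet
    · exact ⟨Sum.inl ⟨p.1, hv⟩, by simp [s]⟩
    · obtain ⟨j, hj⟩ := MetricGraph.exists_openEdge hv
      exact ⟨Sum.inr j, by simpa [s] using hj⟩
  have hmeas : ∀ i, MeasurableSet (s i) := by
    rintro (e | j)
    · exact (MeasurableSet.singleton e.1).prod MeasurableSet.univ
    · exact (MetricGraph.isOpen_openEdge j).measurableSet.prod MeasurableSet.univ
  have hcont : ∀ i, ContinuousOn (fun p : Γ.G × ℝ => Λ.lagOf p.1 p.2) (s i) := by
    rintro (e | j)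
    · obtain ⟨j, x, hx, -, h⟩ := Λ.lagOf_eq_some e.1
      have hc : ContinuousOn (fun p : Γ.G × ℝ => Λ.L j x p.2) (s (Sum.inl e)) :=
        (Λ.continuousOn_L j).comp (f := fun p : Γ.G × ℝ => (x, p.2)) (by fun_prop)
          fun p _ => ⟨hx, trivial⟩
      refine hc.congr fun p hp => ?_
      rw [show p.1 = e.1 from hp.1, h]
    · have hcoord : ContinuousOn (fun p : Γ.G × ℝ => Γ.coord j p.1) (s (Sum.inr j)) :=
        (MetricGraph.coord_continuousOn j).comp continuousOn_fst fun p hp => hp.1.2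
      have hc : ContinuousOn (fun p : Γ.G × ℝ => Λ.L j (Γ.coord j p.1) p.2) (s (Sum.inr j)) :=
        (Λ.continuousOn_L j).comp (f := fun p : Γ.G × ℝ => (Γ.coord j p.1, p.2))
          (hcoord.prodMk continuousOn_snd) fun p hp => ⟨MetricGraph.coord_mem hp.1.2, trivial⟩
      exact hc.congr fun p hp => Λ.lagOf_openEdge hp.1 _
  intro A hA
  have : (fun p : Γ.G × ℝ => Λ.lagOf p.1 p.2) ⁻¹' A =
      ⋃ i, Subtype.val '' ((s i).domRestrict (fun p : Γ.G × ℝ => Λ.lagOf p.1 p.2) ⁻¹' A) := by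
    rw [← Set.univ_inter (_ ⁻¹' A), ← hcover, Set.iUnion_inter]
    refine Set.iUnion_congr fun i => ?_
    rw [Set.domRestrict_eq, Set.preimage_comp, Subtype.image_preimage_coe]
  rw [this]
  exact MeasurableSet.iUnion fun i => (hmeas i).subtype_image
    ((continuousOn_iff_continuous_domRestrict.1 (hcont i)).measurable hA)

end TonelliLagrangian

/-! ### Absolutely continuous curves: reparametrization, concatenation, splitting -/

namespace MetricGraph

variable {Γ : MetricGraph}

lemma AbsContOn.continuousOn {a b : ℝ} {γ : ℝ → Γ.G} (h : Γ.AbsContOn a b γ) :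
    ContinuousOn γ (Set.Icc a b) := by
  have key : ∀ ε > 0, ∃ δ > 0, ∀ s ∈ Set.Icc a b, ∀ t ∈ Set.Icc a b, s ≤ t → t - s < δ →
      dist (γ s) (γ t) < ε := by
    intro ε hε
    obtain ⟨δ, hδ, hd⟩ := h ε hε
    refine ⟨δ, hδ, fun s hs t ht hst hlt => ?_⟩
    have := hd 1 (fun _ => s) (fun _ => t) (fun _ => ⟨hs, ht, hst⟩)
      (fun i _ j _ hij => absurd (Subsingleton.elim i j) hij) (by simpa using hlt)
    simpa using this
  refine Metric.continuousOn_iff.2 fun t ht ε hε => ?_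
  obtain ⟨δ, hδ, hd⟩ := key ε hε
  refine ⟨δ, hδ, fun s hs hst => ?_⟩
  rw [Real.dist_eq] at hst
  rcases le_total s t with hle | hle
  · exact hd s hs t ht hle (by rw [abs_sub_comm] at hst; exact (le_abs_self _).trans_lt hst)
  · rw [dist_comm]
    exact hd t ht s hs hle ((le_abs_self _).trans_lt hst)

lemma AbsContOn.comp {a b a' b' C : ℝ} {γ : ℝ → Γ.G} (h : Γ.AbsContOn a b γ) {ρ : ℝ → ℝ}
    (hρ : Monotone ρ) (hC : 0 < C) (hlip : ∀ s t, s ≤ t → ρ t - ρ s ≤ C * (t - s))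
    (hmaps : ∀ s ∈ Set.Icc a' b', ρ s ∈ Set.Icc a b) :
    Γ.AbsContOn a' b' fun s => γ (ρ s) := by
  intro ε hε
  obtain ⟨δ, hδ, hd⟩ := h ε hε
  refine ⟨δ / C, by positivity, fun n c d hcd hdisj hsum => ?_⟩
  refine hd n (fun i => ρ (c i)) (fun i => ρ (d i))
    (fun i => ⟨hmaps _ (hcd i).1, hmaps _ (hcd i).2.1, hρ (hcd i).2.2⟩) ?_ ?_
  · intro i hi j hj hij
    have := hdisj hi hj hij
    simp only [Function.onFun, Set.Ioo_disjoint_Ioo] at this ⊢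
    have h2 := hρ this
    rwa [hρ.map_min, hρ.map_max] at h2
  · calc ∑ i, (ρ (d i) - ρ (c i)) ≤ ∑ i, C * (d i - c i) :=
          Finset.sum_le_sum fun i _ => hlip _ _ (hcd i).2.2
      _ = C * ∑ i, (d i - c i) := by rw [Finset.mul_sum]
      _ < δ := by rw [lt_div_iff₀ hC] at hsum; linarith

lemma AbsContOn.of_dist_le {a b : ℝ} {α β γ : ℝ → Γ.G} (hα : Γ.AbsContOn a b α)
    (hβ : Γ.AbsContOn a b β)
    (h : ∀ s t, dist (γ s) (γ t) ≤ dist (α s) (α t) + dist (β s) (β t)) :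
    Γ.AbsContOn a b γ := by
  intro ε hε
  obtain ⟨δ, hδ, hd⟩ := hα (ε / 2) (by positivity)
  obtain ⟨δ', hδ', hd'⟩ := hβ (ε / 2) (by positivity)
  refine ⟨min δ δ', lt_min hδ hδ', fun n c d hcd hdisj hsum => ?_⟩
  have h1 := hd n c d hcd hdisj (hsum.trans_le (min_le_left _ _))
  have h2 := hd' n c d hcd hdisj (hsum.trans_le (min_le_right _ _))
  calc ∑ i, dist (γ (c i)) (γ (d i))
      ≤ ∑ i, (dist (α (c i)) (α (d i)) + dist (β (c i)) (β (d i))) :=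
        Finset.sum_le_sum fun i _ => h _ _
    _ = ∑ i, dist (α (c i)) (α (d i)) + ∑ i, dist (β (c i)) (β (d i)) :=
        Finset.sum_add_distrib
    _ < ε := by linarith

lemma AbsContOn.of_lipschitz {a b : ℝ} {γ : ℝ → Γ.G} (h : ∀ s t, dist (γ s) (γ t) ≤ |s - t|) :
    Γ.AbsContOn a b γ := by
  intro ε hε
  refine ⟨ε, hε, fun n c d hcd _ hsum => lt_of_le_of_lt (Finset.sum_le_sum fun i _ => ?_) hsum⟩
  refine (h _ _).trans (le_of_eq ?_)
  rw [abs_sub_comm, abs_of_nonneg (by linarith [(hcd i).2.2])]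

lemma AbsContOn.congr {a b : ℝ} {γ γ' : ℝ → Γ.G} (h : Γ.AbsContOn a b γ)
    (he : Set.EqOn γ' γ (Set.Icc a b)) : Γ.AbsContOn a b γ' := by
  intro ε hε
  obtain ⟨δ, hδ, hd⟩ := h ε hε
  refine ⟨δ, hδ, fun n c d hcd hdisj hsum => ?_⟩
  have := hd n c d hcd hdisj hsum
  rwa [Finset.sum_congr rfl fun i _ => by rw [← he (hcd i).1, ← he (hcd i).2.1]] at this

end MetricGraph

namespace TonelliLagrangian

variable {Γ : MetricGraph}

/-- The action integrand along a curve. -/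
noncomputable def integrand (Λ : TonelliLagrangian Γ) (γ : ℝ → Γ.G) (t : ℝ) : ℝ :=
  Λ.lagOf (γ t) (Γ.gderiv γ t)

lemma integrand_congr (Λ : TonelliLagrangian Γ) {γ γ' : ℝ → Γ.G} {a b : ℝ}
    (h : Set.EqOn γ γ' (Set.Ioo a b)) :
    Set.EqOn (Λ.integrand γ) (Λ.integrand γ') (Set.Ioo a b) := by
  intro t ht
  have : γ =ᶠ[nhds t] γ' := h.eventuallyEq_of_mem (Ioo_mem_nhds ht.1 ht.2)
  simp only [integrand]
  rw [h ht, MetricGraph.gderiv_congr this]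

lemma action_congr (Λ : TonelliLagrangian Γ) {γ γ' : ℝ → Γ.G} {a b : ℝ} (hab : a ≤ b)
    (h : Set.EqOn γ γ' (Set.Ioo a b)) : Λ.action a b γ = Λ.action a b γ' := by
  simp only [action, intervalIntegral.integral_of_le hab, integral_Ioc_eq_integral_Ioo]
  exact setIntegral_congr_fun measurableSet_Ioo (Λ.integrand_congr h)

lemma actionIntegrableOn_congr (Λ : TonelliLagrangian Γ) {γ γ' : ℝ → Γ.G} {a b : ℝ}
    (h : Set.EqOn γ γ' (Set.Ioo a b)) (hi : Λ.ActionIntegrableOn a b γ) :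
    Λ.ActionIntegrableOn a b γ' := by
  unfold ActionIntegrableOn at *
  rw [integrableOn_Icc_iff_integrableOn_Ioo] at *
  exact (integrableOn_congr_fun (Λ.integrand_congr h) measurableSet_Ioo).1 hi

/-- There is a curve from `x` to `y` in time `t` with action `r`. The curve is required to be
continuous on all of `ℝ`, which is harmless because only its restriction to `[0, t]` matters. -/
def Joins (Λ : TonelliLagrangian Γ) (t : ℝ) (x y : Γ.G) (r : ℝ) : Prop :=
  ∃ γ : ℝ → Γ.G, Continuous γ ∧ Γ.AbsContOn 0 t γ ∧ γ 0 = x ∧ γ t = y ∧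
    Λ.ActionIntegrableOn 0 t γ ∧ r = Λ.action 0 t γ

lemma clamp_mem {t : ℝ} (ht : 0 ≤ t) (s : ℝ) : max 0 (min s t) ∈ Set.Icc 0 t :=
  ⟨le_max_left _ _, max_le ht (min_le_right _ _)⟩

lemma clamp_eq {s t : ℝ} (hs : s ∈ Set.Icc 0 t) : max 0 (min s t) = s := by
  rw [min_eq_left hs.2, max_eq_right hs.1]

lemma ht_eq (Λ : TonelliLagrangian Γ) {t : ℝ} (ht : 0 ≤ t) (x y : Γ.G) :
    Λ.ht t x y = sInf {r | Λ.Joins t x y r} := by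
  unfold TonelliLagrangian.ht
  congr 1
  ext r
  constructor
  · rintro ⟨γ, h1, h2, h3, h4, h5⟩
    have he : Set.EqOn (fun s => γ (max 0 (min s t))) γ (Set.Icc 0 t) := fun s hs => by
      simp only [clamp_eq hs]
    have heo := he.symm.mono Set.Ioo_subset_Icc_self
    refine ⟨fun s => γ (max 0 (min s t)), ?_, h1.congr he, ?_, ?_,
      Λ.actionIntegrableOn_congr heo h4, ?_⟩
    · exact h1.continuousOn.comp_continuous (by fun_prop) (clamp_mem ht)
    · rw [← h2]; exact he ⟨le_rfl, ht⟩
    · rw [← h3]; exact he ⟨ht, le_rfl⟩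
    · rw [h5]; exact Λ.action_congr ht heo
  · rintro ⟨γ, -, h⟩
    exact ⟨γ, h⟩

lemma action_nonneg_add (Λ : TonelliLagrangian Γ) {D : ℝ} (hD : ∀ x v, -D ≤ Λ.lagOf x v)
    {t : ℝ} (ht : 0 ≤ t) {x y : Γ.G} {r : ℝ} (h : Λ.Joins t x y r) : -D * t ≤ r := by
  obtain ⟨γ, -, -, -, -, hi, rfl⟩ := h
  have hi' : IntervalIntegrable (Λ.integrand γ) volume 0 t :=
    (intervalIntegrable_iff_integrableOn_Icc_of_le ht).2 hi
  have := intervalIntegral.integral_mono_on ht (f := fun _ => -D) (by simp) hi'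
    fun s _ => hD _ _
  simpa [mul_comm, action, integrand] using this

lemma joins_bddBelow (Λ : TonelliLagrangian Γ) {t : ℝ} (ht : 0 ≤ t) (x y : Γ.G) :
    BddBelow {r | Λ.Joins t x y r} := by
  obtain ⟨D, -, hD⟩ := Λ.lagOf_lower
  exact ⟨-D * t, fun r hr => Λ.action_nonneg_add hD ht hr⟩

lemma ht_le (Λ : TonelliLagrangian Γ) {t : ℝ} (ht : 0 ≤ t) {x y : Γ.G} {r : ℝ}
    (h : Λ.Joins t x y r) : Λ.ht t x y ≤ r := by
  rw [Λ.ht_eq ht]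
  exact csInf_le (Λ.joins_bddBelow ht x y) h

lemma exists_joins_lt (Λ : TonelliLagrangian Γ) {t : ℝ} (ht : 0 ≤ t) {x y : Γ.G}
    (hne : ∃ r, Λ.Joins t x y r) {ε : ℝ} (hε : 0 < ε) :
    ∃ r, Λ.Joins t x y r ∧ r < Λ.ht t x y + ε := by
  rw [Λ.ht_eq ht]
  exact exists_lt_of_csInf_lt hne (lt_add_of_pos_right _ hε)

lemma Joins.concat {Λ : TonelliLagrangian Γ} {s t : ℝ} (hs : 0 ≤ s) (ht : 0 ≤ t) {x y z : Γ.G}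
    {r r' : ℝ} (h : Λ.Joins s x y r) (h' : Λ.Joins t y z r') :
    Λ.Joins (s + t) x z (r + r') := by
  obtain ⟨α, hα, hαac, hα0, hαs, hαi, rfl⟩ := h
  obtain ⟨β, hβ, hβac, hβ0, hβt, hβi, rfl⟩ := h'
  set γ : ℝ → Γ.G := fun τ => if τ ≤ s then α τ else β (τ - s) with hγ
  have hγc : Continuous γ := by
    refine Continuous.if_le hα (by fun_prop) continuous_id continuous_const ?_
    rintro τ rfl
    simp [hαs, hβ0]
  have hγα : Set.EqOn γ α (Set.Ioo 0 s) := fun τ hτ => by simp [hγ, hτ.2.le]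
  have hγβ : Set.EqOn γ (fun τ => β (τ - s)) (Set.Ioo s (s + t)) := fun τ hτ => by
    simp [hγ, hτ.1]
  have hshift : Λ.integrand (fun τ => β (τ - s)) = fun τ => Λ.integrand β (τ - s) := by
    funext τ
    simp only [integrand, MetricGraph.gderiv_comp_sub hβ]
  have hi1 : IntervalIntegrable (Λ.integrand γ) volume 0 s :=
    (intervalIntegrable_iff_integrableOn_Icc_of_le hs).2
      (Λ.actionIntegrableOn_congr hγα.symm hαi)
  have hi2 : IntervalIntegrable (Λ.integrand γ) volume s (s + t) := by
    refine (intervalIntegrable_iff_integrableOn_Icc_of_le (by linarith)).2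
      (Λ.actionIntegrableOn_congr hγβ.symm ?_)
    change IntegrableOn (Λ.integrand (fun τ => β (τ - s))) _
    rw [hshift]
    refine (intervalIntegrable_iff_integrableOn_Icc_of_le (by linarith)).1 ?_
    have := ((intervalIntegrable_iff_integrableOn_Icc_of_le ht).2 hβi).comp_sub_right s
    rw [zero_add, add_comm t s] at this
    exact this
  refine ⟨γ, hγc, ?_, ?_, ?_, ?_, ?_⟩
  · have h1 : Γ.AbsContOn 0 (s + t) fun τ => α (min τ s) :=
      hαac.comp (ρ := fun τ => min τ s) (fun a b hab => min_le_min_right _ hab) one_pos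
        (fun a b hab => by
          rcases le_total a s with h | h <;> rcases le_total b s with h' | h' <;>
            simp [h, h'] <;> linarith)
        fun τ hτ => ⟨le_min hτ.1 hs, min_le_right _ _⟩
    have h2 : Γ.AbsContOn 0 (s + t) fun τ => β (max τ s - s) :=
      hβac.comp (ρ := fun τ => max τ s - s)
        (fun a b hab => sub_le_sub_right (max_le_max_right _ hab) _) one_pos
        (fun a b hab => by
          rcases le_total a s with h | h <;> rcases le_total b s with h' | h' <;>
            simp [h, h'] <;> linarith)
        fun τ hτ => ⟨by linarith [le_max_right τ s],
          by have := max_le hτ.2 (show s ≤ s + t by linarith); linarith⟩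
    refine h1.of_dist_le h2 fun a b => ?_
    have hle : ∀ {a}, a ≤ s → γ a = α a := fun h => by simp [hγ, h]
    have hge : ∀ {a}, s ≤ a → γ a = β (a - s) := fun {a} h => by
      rcases h.eq_or_lt with rfl | h
      · simp [hγ, hαs, hβ0]
      · simp [hγ, h]
    rcases le_total a s with h | h <;> rcases le_total b s with h' | h'
    · simp [hle h, hle h', h, h']
    · rw [hle h, hge h']
      simpa [h, h', hαs, hβ0] using dist_triangle (α a) y (β (b - s))
    · rw [hge h, hle h']
      simpa [h, h', hαs, hβ0, add_comm] using dist_triangle (β (a - s)) y (α b)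
    · simp [hge h, hge h', h, h']
  · simp [hγ, hs, hα0]
  · rcases ht.eq_or_lt with rfl | ht
    · simp [hγ, hαs, ← hβ0, hβt]
    · simp [hγ, ht, hβt]
  · exact (intervalIntegrable_iff_integrableOn_Icc_of_le (by linarith)).1 (hi1.trans hi2)
  · have h1 : Λ.action 0 s γ = Λ.action 0 s α := Λ.action_congr hs hγα
    have h2 : Λ.action s (s + t) γ = Λ.action 0 t β := by
      rw [Λ.action_congr (by linarith) hγβ]
      change ∫ τ in s..(s + t), Λ.integrand (fun τ => β (τ - s)) τ = _
      rw [hshift, intervalIntegral.integral_comp_sub_right (Λ.integrand β) s]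
      simp [action, integrand]
    rw [← h1, ← h2]
    exact intervalIntegral.integral_add_adjacent_intervals hi1 hi2

lemma Joins.split {Λ : TonelliLagrangian Γ} {s t : ℝ} (hs : 0 ≤ s) (ht : 0 ≤ t) {x z : Γ.G}
    {r : ℝ} (h : Λ.Joins (s + t) x z r) :
    ∃ y r₁ r₂, Λ.Joins s x y r₁ ∧ Λ.Joins t y z r₂ ∧ r = r₁ + r₂ := by
  obtain ⟨γ, hγ, hac, h0, h1, hi, rfl⟩ := h
  have hI : IntervalIntegrable (Λ.integrand γ) volume 0 (s + t) :=
    (intervalIntegrable_iff_integrableOn_Icc_of_le (by linarith)).2 hi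
  have hi1 : IntervalIntegrable (Λ.integrand γ) volume 0 s := by
    refine hI.mono_set ?_
    rw [Set.uIcc_of_le hs, Set.uIcc_of_le (by linarith)]
    exact Set.Icc_subset_Icc_right (by linarith)
  have hi2 : IntervalIntegrable (Λ.integrand γ) volume s (s + t) := by
    refine hI.mono_set ?_
    rw [Set.uIcc_of_le (by linarith), Set.uIcc_of_le (by linarith)]
    exact Set.Icc_subset_Icc_left hs
  have hshift : Λ.integrand (fun τ => γ (τ - -s)) = fun τ => Λ.integrand γ (τ - -s) := by
    funext τ
    simp only [integrand, MetricGraph.gderiv_comp_sub hγ]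
  refine ⟨γ s, Λ.action 0 s γ, Λ.action s (s + t) γ, ⟨γ, hγ, ?_, h0, rfl, ?_, rfl⟩,
    ⟨fun τ => γ (τ - -s), by fun_prop, ?_, by simp, by simpa [add_comm] using h1, ?_, ?_⟩, ?_⟩
  · exact hac.comp (ρ := fun τ => τ) monotone_id one_pos (fun a b _ => by simp)
      fun τ hτ => ⟨hτ.1, by linarith [hτ.2]⟩
  · exact (intervalIntegrable_iff_integrableOn_Icc_of_le hs).1 hi1
  · exact hac.comp (ρ := fun τ => τ - -s) (fun a b hab => by simpa using hab) one_pos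
      (fun a b _ => by simp) fun τ hτ => ⟨by linarith [hτ.1], by linarith [hτ.2]⟩
  · change IntegrableOn (Λ.integrand (fun τ => γ (τ - -s))) _
    rw [hshift]
    refine (intervalIntegrable_iff_integrableOn_Icc_of_le ht).1 ?_
    have := hi2.comp_sub_right (-s)
    simpa using this
  · change _ = ∫ τ in 0..t, Λ.integrand (fun τ => γ (τ - -s)) τ
    rw [hshift, intervalIntegral.integral_comp_sub_right (Λ.integrand γ) (-s)]
    simp [action, integrand, add_comm]
  · exact (intervalIntegral.integral_add_adjacent_intervals hi1 hi2).symm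

lemma measurable_lagOf_comp (Λ : TonelliLagrangian Γ) {γ : ℝ → Γ.G} (hγ : Continuous γ)
    {v : ℝ → ℝ} (hv : Measurable v) : Measurable fun t => Λ.lagOf (γ t) (v t) := by
  borelize Γ.G
  exact Λ.measurable_lagOf.comp (hγ.measurable.prodMk hv)

/-- Motion along a single edge at speed at most one has action at most proportional to time. -/
lemma joins_edge (Λ : TonelliLagrangian Γ) {C : ℝ}
    (hC : ∀ x v, |v| ≤ 1 → |Λ.lagOf x v| ≤ C) {j : Γ.E} {a b l : ℝ}
    (ha : a ∈ Set.Icc 0 (Γ.len j)) (hb : b ∈ Set.Icc 0 (Γ.len j)) (hl : 0 < l)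
    (hab : |a - b| ≤ l) :
    ∃ r, r ≤ C * l ∧ Λ.Joins l (Γ.σ j a) (Γ.σ j b) r := by
  set ρ : ℝ → ℝ := fun t => a + (b - a) / l * max 0 (min t l) with hρ
  have hslope : |(b - a) / l| ≤ 1 := by
    rw [abs_div, abs_of_pos hl, div_le_one hl, abs_sub_comm]; exact hab
  have hρmem : ∀ t, ρ t ∈ Set.Icc 0 (Γ.len j) := by
    intro t
    obtain ⟨h0, h1⟩ := clamp_mem hl.le t
    set w := max 0 (min t l)
    have hw : 0 ≤ w / l := by positivity
    have hw1 : w / l ≤ 1 := (div_le_one hl).2 h1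
    have : ρ t = (1 - w / l) * a + (w / l) * b := by simp only [hρ]; ring
    rw [this]
    exact (convex_Icc (0 : ℝ) (Γ.len j)) ha hb (by linarith) hw (by ring)
  have hρlip : ∀ s t, |ρ s - ρ t| ≤ |s - t| := by
    intro s t
    have h1 : ρ s - ρ t = (b - a) / l * (max 0 (min s l) - max 0 (min t l)) := by
      simp only [hρ]; ring
    rw [h1, abs_mul]
    have h2 : |max 0 (min s l) - max 0 (min t l)| ≤ |s - t| := by
      have e1 := abs_max_sub_max_le_max 0 (min s l) 0 (min t l)
      have e2 := abs_min_sub_min_le_max s l t l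
      simp only [sub_self, abs_zero, abs_nonneg, max_eq_left, max_eq_right] at e1 e2
      exact e1.trans e2
    calc _ ≤ 1 * |s - t| := mul_le_mul hslope h2 (abs_nonneg _) zero_le_one
      _ = _ := one_mul _
  have hρc : Continuous ρ := by fun_prop
  have hρL : LipschitzWith 1 ρ := LipschitzWith.of_dist_le_mul fun s t => by
    simpa [Real.dist_eq] using hρlip s t
  have hγc : Continuous fun t => Γ.σ j (ρ t) :=
    (MetricGraph.σ_continuousOn j).comp_continuous hρc hρmem
  have hspeed : ∀ t, |Γ.gderiv (fun t => Γ.σ j (ρ t)) t| ≤ 1 := by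
    intro t
    by_cases hv : Γ.σ j (ρ t) ∈ Γ.vertexSet
    · rw [MetricGraph.gderiv_vertex (γ := fun t => Γ.σ j (ρ t)) hv]; simp
    · have hj : Γ.σ j (ρ t) ∈ Γ.openEdge j := ⟨hv, _, hρmem t, rfl⟩
      rw [MetricGraph.gderiv_eq_deriv (γ := fun t => Γ.σ j (ρ t)) hγc.continuousAt hj]
      simp only [MetricGraph.coord_σ (hρmem _)]
      simpa using norm_deriv_le_of_lipschitz (x₀ := t) hρL
  have hbound : ∀ t, |Λ.integrand (fun t => Γ.σ j (ρ t)) t| ≤ C := fun t => hC _ _ (hspeed t)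
  have hintegr : IntegrableOn (Λ.integrand fun t => Γ.σ j (ρ t)) (Set.Icc 0 l) :=
    Measure.integrableOn_of_bounded (M := C) (by simp)
      (Λ.measurable_lagOf_comp hγc
        (MetricGraph.measurable_gderiv hγc)).aestronglyMeasurable
      (Eventually.of_forall hbound)
  refine ⟨_, ?_, fun t => Γ.σ j (ρ t), hγc, ?_, ?_, ?_, hintegr, rfl⟩
  · have h1 := intervalIntegral.norm_integral_le_of_norm_le_const (a := 0) (b := l) (C := C)
      (f := Λ.integrand fun t => Γ.σ j (ρ t)) (fun t _ => hbound t)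
    rw [sub_zero, abs_of_pos hl] at h1
    exact (le_abs_self _).trans h1
  · exact MetricGraph.AbsContOn.of_lipschitz fun s t =>
      (Γ.σ_lip j _ (hρmem s) _ (hρmem t)).trans (hρlip s t)
  · simp [hρ, hl.le]
  · simp [hρ, hl.le, hl.ne']

end TonelliLagrangian

/-! ### Joining points at bounded speed -/

namespace TonelliLagrangian

variable {Γ : MetricGraph}

/-- `y` can be reached from `x` in time `l` with action at most `C * l`. -/
def Reach (Λ : TonelliLagrangian Γ) (C l : ℝ) (x y : Γ.G) : Prop :=
  ∃ r, r ≤ C * l ∧ Λ.Joins l x y r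

lemma Reach.trans {Λ : TonelliLagrangian Γ} {C l l' : ℝ} {x y z : Γ.G} (hl : 0 ≤ l) (hl' : 0 ≤ l')
    (h : Λ.Reach C l x y) (h' : Λ.Reach C l' y z) : Λ.Reach C (l + l') x z := by
  obtain ⟨r, hr, hj⟩ := h
  obtain ⟨r', hr', hj'⟩ := h'
  exact ⟨r + r', by linarith, hj.concat hl hl' hj'⟩

lemma reach_self (Λ : TonelliLagrangian Γ) {C : ℝ} (hC : ∀ x v, |v| ≤ 1 → |Λ.lagOf x v| ≤ C)
    {l : ℝ} (hl : 0 < l) (x : Γ.G) : Λ.Reach C l x x := by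
  obtain ⟨j, s, hs, rfl⟩ := Γ.cover x
  exact Λ.joins_edge hC hs hs hl (by simpa using hl.le)

lemma Reach.mono {Λ : TonelliLagrangian Γ} {C : ℝ} (hC : ∀ x v, |v| ≤ 1 → |Λ.lagOf x v| ≤ C)
    {l l' : ℝ} {x y : Γ.G} (hl : 0 ≤ l) (hll : l ≤ l')
    (h : Λ.Reach C l x y) : Λ.Reach C l' x y := by
  rcases hll.eq_or_lt with rfl | hll
  · exact h
  · have := h.trans hl (by linarith) (Λ.reach_self hC (sub_pos.2 hll) y)
    simpa using this

/-- Points near `z` are reached from `z`, and reach `z`, in short time: on each edge, the points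
that are not within `ε` (in the edge coordinate) of a preimage of `z` form a compact set whose
image misses `z`. -/
lemma reach_local (Λ : TonelliLagrangian Γ) {C : ℝ} (hC : ∀ x v, |v| ≤ 1 → |Λ.lagOf x v| ≤ C)
    (z : Γ.G) {ε : ℝ} (hε : 0 < ε) :
    ∃ U, IsOpen U ∧ z ∈ U ∧ ∀ x ∈ U, Λ.Reach C ε x z ∧ Λ.Reach C ε z x := by
  set K : Γ.E → Set ℝ := fun j =>
    {a | a ∈ Set.Icc 0 (Γ.len j) ∧ ∀ b ∈ Set.Icc 0 (Γ.len j), Γ.σ j b = z → ε ≤ |a - b|} with hK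
  have hKc : ∀ j, IsCompact (K j) := by
    intro j
    refine isCompact_Icc.of_isClosed_subset ?_ fun a ha => ha.1
    have : K j = Set.Icc 0 (Γ.len j) ∩ ⋂ b ∈ {b | b ∈ Set.Icc 0 (Γ.len j) ∧ Γ.σ j b = z},
        {a | ε ≤ |a - b|} := by
      ext a
      simp [hK]
    rw [this]
    refine isClosed_Icc.inter (isClosed_biInter fun b _ => ?_)
    exact isClosed_le continuous_const (by fun_prop)
  refine ⟨(⋃ j, Γ.σ j '' K j)ᶜ, ?_, ?_, ?_⟩
  · rw [isOpen_compl_iff]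
    refine isClosed_iUnion_of_finite fun j => ?_
    exact ((hKc j).image_of_continuousOn
      ((MetricGraph.σ_continuousOn j).mono fun a ha => ha.1)).isClosed
  · simp only [Set.mem_compl_iff, Set.mem_iUnion, not_exists]
    rintro j ⟨a, ha, rfl⟩
    have := ha.2 a ha.1 rfl
    simp at this
    linarith
  · intro x hx
    obtain ⟨j, a, ha, rfl⟩ := Γ.cover x
    simp only [Set.mem_compl_iff, Set.mem_iUnion, not_exists] at hx
    have hna : a ∉ K j := fun h => hx j ⟨a, h, rfl⟩
    simp only [hK, Set.mem_ofPred_eq, not_and, not_forall, not_le] at hna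
    obtain ⟨b, hb, rfl, hab⟩ := hna ha
    exact ⟨Λ.joins_edge hC ha hb hε hab.le,
      Λ.joins_edge hC hb ha hε (by rw [abs_sub_comm]; exact hab.le)⟩

lemma reach_of_dist_lt (Λ : TonelliLagrangian Γ) {C : ℝ}
    (hC : ∀ x v, |v| ≤ 1 → |Λ.lagOf x v| ≤ C) {ε : ℝ} (hε : 0 < ε) :
    ∃ δ > 0, ∀ x y : Γ.G, dist x y < δ → Λ.Reach C ε x y := by
  choose U hU hzU hr using fun z => Λ.reach_local hC z (half_pos hε)
  obtain ⟨δ, hδ, h⟩ := lebesgue_number_lemma_of_metric (isCompact_univ (X := Γ.G)) hU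
    fun x _ => Set.mem_iUnion.2 ⟨x, hzU x⟩
  refine ⟨δ, hδ, fun x y hxy => ?_⟩
  obtain ⟨z, hz⟩ := h x trivial
  have h1 := (hr z x (hz (Metric.mem_ball_self hδ))).1
  have h2 := (hr z y (hz (by rwa [Metric.mem_ball, dist_comm]))).2
  simpa using h1.trans (by positivity) (by positivity) h2

instance instPreconnectedSpace (Γ : MetricGraph) : PreconnectedSpace Γ.G := by
  refine ⟨isPreconnected_of_forall_pair fun x _ y _ => ?_⟩
  obtain ⟨T, hT, γ, rfl, rfl, hγ⟩ := Γ.path_exists x y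
  exact ⟨γ '' Set.Icc 0 T, Set.subset_univ _, ⟨0, ⟨le_rfl, hT⟩, rfl⟩, ⟨T, ⟨hT, le_rfl⟩, rfl⟩,
    isPreconnected_Icc.image _ hγ.continuousOn⟩

instance instNonempty (Γ : MetricGraph) : Nonempty Γ.G := ⟨Γ.σ (Classical.arbitrary _) 0⟩

lemma exists_reach (Λ : TonelliLagrangian Γ) {C : ℝ}
    (hC : ∀ x v, |v| ≤ 1 → |Λ.lagOf x v| ≤ C) :
    ∃ D > 0, ∀ l, D ≤ l → ∀ x y : Γ.G, Λ.Reach C l x y := by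
  obtain ⟨x₀⟩ : Nonempty Γ.G := inferInstance
  obtain ⟨δ, hδ, hr⟩ := Λ.reach_of_dist_lt hC one_pos
  set A : ℕ → Set Γ.G := fun n => {y | Λ.Reach C (n + 1) x₀ y ∧ Λ.Reach C (n + 1) y x₀}
  have hA : ∀ n, ∀ y ∈ A n, ∀ z, dist y z < δ → z ∈ A (n + 1) := by
    intro n y hy z hyz
    constructor
    · have := hy.1.trans (by positivity) zero_le_one (hr y z hyz)
      simpa using this
    · have := (hr z y (by rwa [dist_comm])).trans zero_le_one (by positivity) hy.2
      have e : ((n + 1 : ℕ) : ℝ) + 1 = 1 + (n + 1) := by push_cast; ring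
      rw [e]; exact this
  have hmono : Monotone A := by
    refine monotone_nat_of_le_succ fun n y hy => hA n y hy y (by simpa using hδ)
  have huniv : (⋃ n, A n) = Set.univ := by
    refine IsClopen.eq_univ ⟨?_, ?_⟩ ⟨x₀, Set.mem_iUnion.2 ⟨0, ?_⟩⟩
    · refine isClosed_of_closure_subset fun y hy => ?_
      obtain ⟨z, hz, hyz⟩ := Metric.mem_closure_iff.1 hy δ hδ
      obtain ⟨n, hn⟩ := Set.mem_iUnion.1 hz
      exact Set.mem_iUnion.2 ⟨n + 1, hA n z hn y (by rwa [dist_comm])⟩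
    · refine Metric.isOpen_iff.2 fun y hy => ⟨δ, hδ, fun z hz => ?_⟩
      obtain ⟨n, hn⟩ := Set.mem_iUnion.1 hy
      exact Set.mem_iUnion.2 ⟨n + 1, hA n y hn z (by rw [dist_comm]; exact hz)⟩
    · exact ⟨Λ.reach_self hC (by positivity) _, Λ.reach_self hC (by positivity) _⟩
  obtain ⟨t, -, htf, hcov⟩ := (finite_cover_balls_of_compact (isCompact_univ (X := Γ.G)) hδ)
  have hex : ∀ y : Γ.G, ∃ n, y ∈ A n := fun y => by
    have : y ∈ ⋃ n, A n := huniv ▸ trivial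
    simpa using this
  choose n hn using hex
  obtain ⟨N, hN⟩ := (htf.image n).bddAbove
  have hall : ∀ y : Γ.G, y ∈ A (N + 1) := by
    intro y
    obtain ⟨z, hz, hyz⟩ := Set.mem_iUnion₂.1 (hcov (Set.mem_univ y))
    exact hA N z (hmono (hN ⟨z, hz, rfl⟩) (hn z)) y (by rw [dist_comm]; exact hyz)
  refine ⟨((N + 1 : ℕ) + 1) + ((N + 1 : ℕ) + 1), by positivity, fun l hl x y => ?_⟩
  exact ((hall x).2.trans (by positivity) (by positivity) (hall y).1).mono hC (by positivity) hl

end TonelliLagrangian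

/-! ### Time changes -/

namespace TonelliLagrangian

variable {Γ : MetricGraph}

/-- Reparametrization of a curve by the time change with speed `w`. -/
lemma joins_reparam (Λ : TonelliLagrangian Γ) {γ : ℝ → Γ.G} (hγ : Continuous γ) {T : ℝ}
    (hT : 0 ≤ T) (hac : Γ.AbsContOn 0 T γ) {w : ℝ → ℝ} (hw : Measurable w)
    (hw1 : ∀ t, 1 / 2 ≤ w t) (hw2 : ∀ t, w t ≤ 3 / 2)
    (hi : IntegrableOn (fun t => w t * Λ.lagOf (γ t) ((w t)⁻¹ * Γ.gderiv γ t)) (Set.Icc 0 T)) :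
    Λ.Joins (∫ t in 0..T, w t) (γ 0) (γ T)
      (∫ t in 0..T, w t * Λ.lagOf (γ t) ((w t)⁻¹ * Γ.gderiv γ t)) := by
  have hwl : LocallyIntegrable w volume := by
    have : MemLp w ⊤ volume := memLp_top_of_bound hw.aestronglyMeasurable (3 / 2)
      (Eventually.of_forall fun t => by
        rw [Real.norm_eq_abs, abs_le]; constructor <;> linarith [hw1 t, hw2 t])
    exact this.locallyIntegrable le_top
  have hwi : ∀ a b, IntervalIntegrable w volume a b := fun a b =>
    (hwl.integrableOn_isCompact isCompact_uIcc).intervalIntegrable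
  set θ : ℝ → ℝ := fun t => ∫ s in 0..t, w s with hθ
  have hθsub : ∀ s t, θ t - θ s = ∫ τ in s..t, w τ := fun s t =>
    intervalIntegral.integral_interval_sub_left (hwi _ _) (hwi _ _)
  have hlow : ∀ s t, s ≤ t → (t - s) / 2 ≤ θ t - θ s := by
    intro s t hst
    rw [hθsub]
    have := intervalIntegral.integral_mono_on hst (f := fun _ => (1 / 2 : ℝ)) (by simp) (hwi s t)
      fun τ _ => hw1 τ
    simp at this
    linarith
  have hupp : ∀ s t, s ≤ t → θ t - θ s ≤ 3 / 2 * (t - s) := by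
    intro s t hst
    rw [hθsub]
    have := intervalIntegral.integral_mono_on hst (g := fun _ => (3 / 2 : ℝ)) (hwi s t) (by simp)
      fun τ _ => hw2 τ
    simp at this
    linarith
  have hmono : StrictMono θ := fun s t hst => by linarith [hlow s t hst.le]
  have hlip : LipschitzWith 2 θ := by
    refine LipschitzWith.of_dist_le_mul fun s t => ?_
    rw [Real.dist_eq, Real.dist_eq]
    rcases le_total s t with h | h
    · rw [abs_sub_comm, abs_of_nonneg (by linarith [hlow s t h]), abs_sub_comm,
        abs_of_nonneg (by linarith)]
      have := hupp s t h
      push_cast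
      linarith
    · rw [abs_of_nonneg (by linarith [hlow t s h]), abs_of_nonneg (by linarith)]
      have := hupp t s h
      push_cast
      linarith
  have hcont : Continuous θ := hlip.continuous
  have hθ0 : θ 0 = 0 := by simp [hθ]
  have hsurj : Function.Surjective θ := by
    refine hcont.surjective ?_ ?_
    · refine tendsto_atTop_mono' _ ?_ (tendsto_id.atTop_div_const (two_pos (α := ℝ)))
      filter_upwards [eventually_ge_atTop 0] with t ht
      have := hlow 0 t ht
      simp only [id]
      linarith
    · refine tendsto_atBot_mono' _ ?_ (tendsto_id.atBot_div_const (two_pos (α := ℝ)))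
      filter_upwards [eventually_le_atBot 0] with t ht
      have := hlow t 0 ht
      simp only [id]
      linarith
  set e : ℝ ≃o ℝ := hmono.orderIsoOfSurjective θ hsurj with he
  set ρ : ℝ → ℝ := fun s => e.symm s with hρ
  have hθρ : ∀ s, θ (ρ s) = s := fun s => e.apply_symm_apply s
  have hρθ : ∀ s, ρ (θ s) = s := fun s => e.symm_apply_apply s
  have hρc : Continuous ρ := e.symm.continuous
  have hρm : Monotone ρ := e.symm.monotone
  have hρ0 : ρ 0 = 0 := by simpa [hθ0] using hρθ 0
  have himg : θ '' Set.Icc 0 T = Set.Icc 0 (θ T) := by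
    have := e.image_Icc 0 T
    simpa [he, hθ0] using this
  have hθT : 0 ≤ θ T := by linarith [hlow 0 T hT]
  have hder : ∀ᵐ t, HasDerivAt θ (w t) t := by
    filter_upwards [LocallyIntegrable.ae_hasDerivAt_integral hwl] with t ht using ht 0
  -- a measurable set of full measure on which `θ` is differentiable with derivative `w`
  obtain ⟨N, hNsub, hNm, hN0⟩ := exists_measurable_superset_of_null (ae_iff.1 hder)
  set S : Set ℝ := Set.Icc 0 T \ N with hS
  have hSm : MeasurableSet S := measurableSet_Icc.diff hNm
  have hSder : ∀ t ∈ S, HasDerivAt θ (w t) t := fun t ht => by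
    by_contra h
    exact ht.2 (hNsub h)
  have hSae : (S : Set ℝ) =ᵐ[volume] Set.Icc 0 T :=
    sdiff_null_ae_eq_self hN0
  have hNimg : volume (θ '' N) = 0 := by
    have := hlip.lipschitzOnWith (s := N) |>.hausdorffMeasure_image_le (d := 1) zero_le_one
    rw [hausdorffMeasure_real, hN0, mul_zero] at this
    exact le_antisymm this (zero_le)
  have hSimg : (θ '' S : Set ℝ) =ᵐ[volume] Set.Icc 0 (θ T) := by
    rw [hS, Set.image_sdiff hmono.injective, himg]
    exact sdiff_null_ae_eq_self hNimg
  have hval : ∀ t ∈ S, |w t| • Λ.integrand (fun s => γ (ρ s)) (θ t) =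
      w t * Λ.lagOf (γ t) ((w t)⁻¹ * Γ.gderiv γ t) := by
    intro t ht
    have hpos : 0 < w t := by linarith [hw1 t]
    rw [abs_of_pos hpos, smul_eq_mul, integrand,
      MetricGraph.gderiv_comp hγ hρc hθρ hρθ hpos.ne' (hSder t ht), hρθ]
  refine ⟨fun s => γ (ρ s), hγ.comp hρc, ?_, by simp [hρ0], by simp only; rw [hρθ], ?_, ?_⟩
  · refine hac.comp hρm two_pos (fun s t hst => ?_) fun s hs => ?_
    · have := hlow (ρ s) (ρ t) (hρm hst)
      rw [hθρ, hθρ] at this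
      linarith
    · have h1 := hρm hs.1
      have h2 := hρm hs.2
      rw [hρ0] at h1
      change _ ≤ ρ (θ T) at h2
      rw [hρθ] at h2
      exact ⟨h1, h2⟩
  · change IntegrableOn (Λ.integrand fun s => γ (ρ s)) (Set.Icc 0 (θ T))
    rw [← integrableOn_congr_set_ae hSimg, integrableOn_image_iff_integrableOn_abs_deriv_smul hSm
      (fun t ht => (hSder t ht).hasDerivWithinAt) hmono.injective.injOn,
      integrableOn_congr_fun hval hSm, integrableOn_congr_set_ae hSae]
    exact hi
  · change _ = ∫ t in 0..(θ T), Λ.integrand (fun s => γ (ρ s)) t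
    rw [intervalIntegral.integral_of_le hT, intervalIntegral.integral_of_le hθT,
      ← integral_Icc_eq_integral_Ioc, ← integral_Icc_eq_integral_Ioc,
      ← setIntegral_congr_set hSimg, ← setIntegral_congr_set hSae,
      integral_image_eq_integral_abs_deriv_smul hSm
      (fun t ht => (hSder t ht).hasDerivWithinAt) hmono.injective.injOn]
    exact (setIntegral_congr_fun hSm hval).symm

/-- A curve of moderate action spends at least half of its time at bounded speed. Slowing down or
speeding up there by a constant factor changes the travel time by `±s`; the first order changes
of the action cancel in the sum. -/
lemma joins_timeChange (Λ : TonelliLagrangian Γ) (A : ℝ) :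
    ∃ K, 0 ≤ K ∧ ∀ T, 0 < T → ∀ x y r, Λ.Joins T x y r → r ≤ A * T → ∀ s, |s| ≤ T / 4 →
      ∃ r₁ r₂, Λ.Joins (T + s) x y r₁ ∧ Λ.Joins (T - s) x y r₂ ∧
        r₁ ≤ r + K * |s| ∧ r₁ + r₂ ≤ 2 * r + K * (s ^ 2 / T) := by
  obtain ⟨D, hD0, hD⟩ := Λ.lagOf_lower
  set N : ℝ := 2 * (|A| + 1 + D) - D with hN
  obtain ⟨R, hR, hRN⟩ := Λ.lagOf_coercive N
  obtain ⟨K, hK, hKt⟩ := Λ.lagOf_taylor hR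
  refine ⟨4 * K, by positivity, ?_⟩
  rintro T hT x y r ⟨γ, hγ, hac, rfl, rfl, hi, rfl⟩ hr s hs
  have hgm := MetricGraph.measurable_gderiv hγ
  set B : Set ℝ := {t | |Γ.gderiv γ t| ≤ R} with hB
  have hBm : MeasurableSet B := measurableSet_le (by fun_prop) measurable_const
  set χ : ℝ → ℝ := B.indicator fun _ => 1 with hχ
  have hχm : Measurable χ := measurable_const.indicator hBm
  have hχ1 : ∀ t ∈ B, χ t = 1 := fun t ht => by simp [hχ, ht]
  have hχ0 : ∀ t ∉ B, χ t = 0 := fun t ht => by simp [hχ, ht]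
  have hχb : ∀ t, 0 ≤ χ t ∧ χ t ≤ 1 := fun t => by
    by_cases h : t ∈ B
    · simp [hχ1 t h]
    · simp [hχ0 t h]
  have hχi : IntervalIntegrable χ volume 0 T := by
    refine (intervalIntegrable_iff_integrableOn_Icc_of_le hT.le).2 ?_
    refine Measure.integrableOn_of_bounded (M := 1) (by simp) hχm.aestronglyMeasurable
      (Eventually.of_forall fun t => ?_)
    rw [Real.norm_eq_abs, abs_of_nonneg (hχb t).1]
    exact (hχb t).2
  have hI : IntervalIntegrable (Λ.integrand γ) volume 0 T :=
    (intervalIntegrable_iff_integrableOn_Icc_of_le hT.le).2 hi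
  have hact : Λ.action 0 T γ = ∫ t in 0..T, Λ.integrand γ t := rfl
  rw [hact] at hr ⊢
  set b : ℝ := ∫ t in 0..T, χ t with hb
  have hbT : T / 2 ≤ b := by
    have h1 := intervalIntegral.integral_mono_on hT.le
      (f := fun t => N - (N + D) * χ t) (by
        exact (intervalIntegrable_const).sub (hχi.const_mul _)) hI fun t _ => by
        by_cases h : t ∈ B
        · rw [hχ1 t h]
          have := hD (γ t) (Γ.gderiv γ t)
          simp only [integrand]
          linarith
        · rw [hχ0 t h]
          have := hRN (γ t) (Γ.gderiv γ t) (not_le.1 h).le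
          simp only [integrand]
          linarith
    rw [intervalIntegral.integral_sub intervalIntegrable_const (hχi.const_mul _),
      intervalIntegral.integral_const_mul, intervalIntegral.integral_const, ← hb] at h1
    simp only [sub_zero, smul_eq_mul] at h1
    have hA := le_abs_self A
    have hA' := abs_nonneg A
    have hND : N + D = 2 * (|A| + 1 + D) := by rw [hN]; ring
    have h2 : (N - A) * T ≤ (N + D) * b := by linarith
    have h3 : (|A| + 1 + D) * T ≤ (N - A) * T :=
      mul_le_mul_of_nonneg_right (by rw [hN]; linarith) hT.le
    rw [hND] at h2
    have h4 : (|A| + 1 + D) * (T / 2) ≤ (|A| + 1 + D) * b := by linarith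
    exact le_of_mul_le_mul_left h4 (by positivity)
  have hb0 : 0 < b := by linarith
  -- the reparametrized Lagrangian for the speed factor `1 + μ` on `B`
  set g : ℝ → ℝ → ℝ := fun μ t =>
    (1 + μ * χ t) * Λ.lagOf (γ t) ((1 + μ * χ t)⁻¹ * Γ.gderiv γ t) with hg
  choose q hq hqt using fun t (ht : t ∈ B) => (hKt (γ t) (Γ.gderiv γ t) ht).2
  have hgnB : ∀ μ, ∀ t ∉ B, g μ t = Λ.integrand γ t := fun μ t ht => by
    simp [hg, hχ0 t ht, integrand]
  have hgB : ∀ μ, |μ| ≤ 1 / 2 → ∀ t (ht : t ∈ B),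
      |g μ t - (Λ.integrand γ t + μ * q t ht)| ≤ K * μ ^ 2 := fun μ hμ t ht => by
    have := hqt t ht μ hμ
    simpa [hg, hχ1 t ht, integrand] using this
  have hgd : ∀ μ, |μ| ≤ 1 / 2 → ∀ t, |g μ t - Λ.integrand γ t| ≤ 2 * K * |μ| * χ t := by
    intro μ hμ t
    by_cases h : t ∈ B
    · have h1 := abs_le.1 (hgB μ hμ t h)
      have h2 : |μ * q t h| ≤ |μ| * K := by
        rw [abs_mul]; exact mul_le_mul_of_nonneg_left (hq t h) (abs_nonneg _)
      have h2' := abs_le.1 h2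
      have h3 : K * μ ^ 2 ≤ |μ| * K := by
        rw [← sq_abs]
        have : |μ| ^ 2 ≤ |μ| := by nlinarith [abs_nonneg μ]
        nlinarith
      rw [hχ1 t h, abs_le]
      constructor <;> linarith
    · simp [hgnB μ t h, hχ0 t h]
  have hgs : ∀ μ, |μ| ≤ 1 / 2 → ∀ t,
      g μ t + g (-μ) t ≤ 2 * Λ.integrand γ t + 2 * K * μ ^ 2 * χ t := by
    intro μ hμ t
    by_cases h : t ∈ B
    · have h1 := abs_le.1 (hgB μ hμ t h)
      have h2 := abs_le.1 (hgB (-μ) (by rwa [abs_neg]) t h)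
      rw [neg_sq] at h2
      rw [hχ1 t h]
      linarith
    · rw [hgnB _ t h, hgnB _ t h, hχ0 t h]
      linarith
  have hgm' : ∀ μ, Measurable (g μ) := fun μ =>
    (measurable_const.add (measurable_const.mul hχm)).mul
      (Λ.measurable_lagOf_comp hγ
        ((measurable_const.add (measurable_const.mul hχm)).inv.mul hgm))
  have hgi : ∀ μ, |μ| ≤ 1 / 2 → IntervalIntegrable (g μ) volume 0 T := by
    intro μ hμ
    have h1 : IntervalIntegrable (fun t => g μ t - Λ.integrand γ t) volume 0 T := by
      refine (hχi.const_mul (2 * K * |μ|)).mono_fun ?_ (Eventually.of_forall fun t => ?_)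
      · exact ((hgm' μ).sub (Λ.measurable_lagOf_comp hγ hgm)).aestronglyMeasurable
      · simp only [Real.norm_eq_abs]
        exact (hgd μ hμ t).trans (le_abs_self _)
    simpa using h1.add hI
  have hJ : ∀ μ, |μ| ≤ 1 / 2 → Λ.Joins (T + μ * b) (γ 0) (γ T) (∫ t in 0..T, g μ t) := by
    intro μ hμ
    have hμ' := abs_le.1 hμ
    have hmul : ∀ t, |μ * χ t| ≤ 1 / 2 := fun t => by
      rw [abs_mul, abs_of_nonneg (hχb t).1]
      exact (mul_le_of_le_one_right (abs_nonneg _) (hχb t).2).trans hμ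
    have := Λ.joins_reparam hγ hT.le hac (w := fun t => 1 + μ * χ t)
      (measurable_const.add (measurable_const.mul hχm))
      (fun t => by linarith [(abs_le.1 (hmul t)).1]) (fun t => by linarith [(abs_le.1 (hmul t)).2])
      ((intervalIntegrable_iff_integrableOn_Icc_of_le hT.le).1 (hgi μ hμ))
    rw [intervalIntegral.integral_add intervalIntegrable_const (hχi.const_mul _),
      intervalIntegral.integral_const_mul, intervalIntegral.integral_const, ← hb] at this
    simpa using this
  set μ : ℝ := s / b with hμdef
  have hμb : μ * b = s := by rw [hμdef]; field_simp
  have hμ : |μ| ≤ 1 / 2 := by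
    rw [hμdef, abs_div, abs_of_pos hb0, div_le_iff₀ hb0]; linarith
  have hμ' : |-μ| ≤ 1 / 2 := by rwa [abs_neg]
  have hμs : |μ| * b = |s| := by rw [← hμb, abs_mul, abs_of_pos hb0]
  refine ⟨_, _, by simpa [hμb] using hJ μ hμ, by simpa [hμb, sub_eq_add_neg] using hJ (-μ) hμ',
    ?_, ?_⟩
  · have h1 := intervalIntegral.integral_mono_on hT.le
      (g := fun t => Λ.integrand γ t + 2 * K * |μ| * χ t) (hgi μ hμ)
      (hI.add (hχi.const_mul _)) fun t _ => by linarith [(abs_le.1 (hgd μ hμ t)).2]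
    rw [intervalIntegral.integral_add hI (hχi.const_mul _),
      intervalIntegral.integral_const_mul, ← hb, mul_assoc, hμs] at h1
    have := mul_nonneg hK (abs_nonneg s)
    linarith
  · have h1 := intervalIntegral.integral_mono_on hT.le
      (f := fun t => g μ t + g (-μ) t)
      (g := fun t => 2 * Λ.integrand γ t + 2 * K * μ ^ 2 * χ t) ((hgi μ hμ).add (hgi _ hμ'))
      ((hI.const_mul 2).add (hχi.const_mul _)) fun t _ => hgs μ hμ t
    rw [intervalIntegral.integral_add (hI.const_mul _) (hχi.const_mul _),
      intervalIntegral.integral_add (hgi μ hμ) (hgi _ hμ'),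
      intervalIntegral.integral_const_mul, intervalIntegral.integral_const_mul, ← hb] at h1
    refine h1.trans ?_
    have h2 : 2 * K * μ ^ 2 * b = 2 * K * (s ^ 2 / b) := by rw [hμdef]; field_simp
    have h3 : s ^ 2 / b ≤ s ^ 2 / (T / 2) := by gcongr
    have h4 : s ^ 2 / (T / 2) = 2 * (s ^ 2 / T) := by field_simp
    rw [h2]
    have := mul_le_mul_of_nonneg_left (h3.trans_eq h4) (show 0 ≤ 2 * K by positivity)
    linarith

end TonelliLagrangian

/-! ### The normalized minimal action as a kernel -/

/-- The properties of the normalized minimal action `F t x y = h_t(x, y) + c t` at large times on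
which the convergence of the Lax–Oleinik semigroup rests: the two halves of the semigroup
property, an almost-midpoint-convexity in time whose defect decays like `1 / T`, equicontinuity
and boundedness. -/
structure GoodKernel {X : Type*} [MetricSpace X] (F : ℝ → X → X → ℝ) (T₀ K M : ℝ) : Prop where
  pos : 0 < T₀
  K_nonneg : 0 ≤ K
  subadd : ∀ s t, T₀ ≤ s → T₀ ≤ t → ∀ x y z, F (s + t) x z ≤ F s x y + F t y z
  split : ∀ s t, T₀ ≤ s → T₀ ≤ t → ∀ x z, ∀ η > 0, ∃ y, F s x y + F t y z ≤ F (s + t) x z + η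
  conv : ∀ T s, T₀ ≤ T → |s| ≤ T / 4 → ∀ x y,
    F (T + s) x y + F (T - s) x y ≤ 2 * F T x y + K * (s ^ 2 / T)
  equi : ∀ ε > 0, ∃ δ > 0, ∀ T, T₀ ≤ T → ∀ x x' y y', dist x x' < δ → dist y y' < δ →
    F T x' y' ≤ F T x y + ε
  bound : ∀ t, T₀ ≤ t → ∀ x y, |F t x y| ≤ M

namespace TonelliLagrangian

variable {Γ : MetricGraph}

lemma goodKernel (Λ : TonelliLagrangian Γ) {c : ℝ}
    (hfin : ∀ x y : Γ.G, ∃ r : ℝ,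
      Filter.liminf (fun t : ℝ => ((Λ.ht t x y + c * t : ℝ) : EReal)) Filter.atTop = (r : EReal)) :
    ∃ T₀ K M, GoodKernel (fun t x y => Λ.ht t x y + c * t) T₀ K M := by
  obtain ⟨C, hC0, hC⟩ := Λ.lagOf_upper
  obtain ⟨D, hD0, hD⟩ := Λ.exists_reach hC
  obtain ⟨K, hK0, hK⟩ := Λ.joins_timeChange (C + 1)
  set T₁ : ℝ := max D 1 with hT₁
  have hT1 : 1 ≤ T₁ := le_max_right _ _
  have hDT : D ≤ T₁ := le_max_left _ _
  have hne : ∀ t, T₁ ≤ t → ∀ x y : Γ.G, ∃ r, Λ.Joins t x y r := fun t ht x y => by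
    obtain ⟨r, -, hr⟩ := hD t (hDT.trans ht) x y
    exact ⟨r, hr⟩
  have hub : ∀ t, T₁ ≤ t → ∀ x y : Γ.G, Λ.ht t x y ≤ C * t := fun t ht x y => by
    obtain ⟨r, hr, hj⟩ := hD t (hDT.trans ht) x y
    exact (Λ.ht_le (by linarith) hj).trans hr
  have hsub : ∀ s t, T₁ ≤ s → T₁ ≤ t → ∀ x y z : Γ.G,
      Λ.ht (s + t) x z ≤ Λ.ht s x y + Λ.ht t y z := by
    intro s t hs ht x y z
    refine le_of_forall_pos_le_add fun ε hε => ?_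
    obtain ⟨r, hr, hrε⟩ := Λ.exists_joins_lt (by linarith) (hne s hs x y) (half_pos hε)
    obtain ⟨r', hr', hrε'⟩ := Λ.exists_joins_lt (by linarith) (hne t ht y z) (half_pos hε)
    have := Λ.ht_le (by linarith) (hr.concat (by linarith) (by linarith) hr')
    linarith
  have hsplit : ∀ s t, T₁ ≤ s → T₁ ≤ t → ∀ x z : Γ.G, ∀ η > 0,
      ∃ y, Λ.ht s x y + Λ.ht t y z ≤ Λ.ht (s + t) x z + η := by
    intro s t hs ht x z η hη
    obtain ⟨r, hr, hrη⟩ := Λ.exists_joins_lt (by linarith) (hne (s + t) (by linarith) x z) hη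
    obtain ⟨y, r₁, r₂, h1, h2, rfl⟩ := hr.split (by linarith) (by linarith)
    exact ⟨y, by linarith [Λ.ht_le (by linarith) h1, Λ.ht_le (by linarith) h2]⟩
  -- near-minimizers have action below the threshold of `joins_timeChange`
  have happrox : ∀ T, T₁ ≤ T → ∀ x y : Γ.G, ∀ ε > 0,
      ∃ r, Λ.Joins T x y r ∧ r ≤ Λ.ht T x y + ε ∧ r ≤ (C + 1) * T := by
    intro T hT x y ε hε
    obtain ⟨r, hr, hrε⟩ := Λ.exists_joins_lt (by linarith) (hne T hT x y)
      (lt_min hε one_pos)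
    refine ⟨r, hr, by linarith [min_le_left ε 1], ?_⟩
    have := hub T hT x y
    have := min_le_right ε 1
    linarith
  have hlip : ∀ T s, T₁ ≤ T → |s| ≤ T / 4 → ∀ x y : Γ.G,
      Λ.ht (T + s) x y ≤ Λ.ht T x y + K * |s| := by
    intro T s hT hs x y
    refine le_of_forall_pos_le_add fun ε hε => ?_
    obtain ⟨r, hr, hrε, hrT⟩ := happrox T hT x y ε hε
    obtain ⟨r₁, r₂, h1, -, h3, -⟩ := hK T (by linarith) x y r hr hrT s hs
    have := Λ.ht_le (by linarith [(abs_le.1 hs).1]) h1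
    linarith
  have hconv : ∀ T s, T₁ ≤ T → |s| ≤ T / 4 → ∀ x y : Γ.G,
      Λ.ht (T + s) x y + Λ.ht (T - s) x y ≤ 2 * Λ.ht T x y + K * (s ^ 2 / T) := by
    intro T s hT hs x y
    refine le_of_forall_pos_le_add fun ε hε => ?_
    obtain ⟨r, hr, hrε, hrT⟩ := happrox T hT x y (ε / 2) (half_pos hε)
    obtain ⟨r₁, r₂, h1, h2, -, h4⟩ := hK T (by linarith) x y r hr hrT s hs
    have e1 := Λ.ht_le (by linarith [(abs_le.1 hs).1]) h1
    have e2 := Λ.ht_le (by linarith [(abs_le.1 hs).2]) h2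
    linarith
  have hequi : ∀ ε > 0, ∃ δ > 0, ∀ T, T₁ ≤ T → ∀ x x' y y' : Γ.G, dist x x' < δ →
      dist y y' < δ → Λ.ht T x' y' ≤ Λ.ht T x y + ε := by
    intro ε hε
    set e : ℝ := min (1 / 8) (ε / (2 * K + 2 * C + 1)) with he
    have hpos : 0 < 2 * K + 2 * C + 1 := by positivity
    have he0 : 0 < e := lt_min (by norm_num) (by positivity)
    have he1 : e ≤ 1 / 8 := min_le_left _ _
    have he2 : (2 * K + 2 * C + 1) * e ≤ ε := by
      have := min_le_right (1 / 8) (ε / (2 * K + 2 * C + 1))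
      rw [le_div_iff₀ hpos] at this
      linarith
    obtain ⟨δ, hδ, hr⟩ := Λ.reach_of_dist_lt hC he0
    refine ⟨δ, hδ, fun T hT x x' y y' hx hy => ?_⟩
    obtain ⟨r, hj, hrε, hrT⟩ := happrox T hT x y e he0
    obtain ⟨r₁, r₂, h1, -, h3, -⟩ := hK T (by linarith) x y r hj hrT (-(2 * e)) (by
      rw [abs_neg, abs_of_pos (by positivity)]; linarith)
    rw [abs_neg, abs_of_pos (by positivity)] at h3
    obtain ⟨p, hp, hpj⟩ := hr x' x (by rwa [dist_comm])
    obtain ⟨p', hp', hpj'⟩ := hr y y' hy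
    have h := (hpj.concat he0.le (by linarith) h1).concat (by linarith) he0.le hpj'
    have ht : e + (T + -(2 * e)) + e = T := by ring
    rw [ht] at h
    have := Λ.ht_le (by linarith) h
    linarith
  set F : ℝ → Γ.G → Γ.G → ℝ := fun t x y => Λ.ht t x y + c * t with hF
  have hFsub : ∀ s t, T₁ ≤ s → T₁ ≤ t → ∀ x y z, F (s + t) x z ≤ F s x y + F t y z :=
    fun s t hs ht x y z => by
      have := hsub s t hs ht x y z
      simp only [hF]
      linarith
  have hliminf : ∀ x y, ∃ r : ℝ, (∀ᶠ t in atTop, r - 1 < F t x y) ∧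
      ∃ᶠ t in atTop, F t x y < r + 1 := by
    intro x y
    obtain ⟨r, hr⟩ := hfin x y
    refine ⟨r, ?_, ?_⟩
    · have := eventually_lt_of_lt_liminf (u := fun t => (F t x y : EReal)) (f := atTop)
        (b := ((r - 1 : ℝ) : EReal)) (by rw [hr]; exact_mod_cast sub_one_lt r)
      filter_upwards [this] with t ht
      exact_mod_cast ht
    · have := frequently_lt_of_liminf_lt (u := fun t => (F t x y : EReal)) (f := atTop)
        (b := ((r + 1 : ℝ) : EReal)) (by isBoundedDefault)
        (by rw [hr]; exact_mod_cast lt_add_one r)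
      exact this.mono fun t ht => by exact_mod_cast ht
  have hdiag : ∀ T, T₁ ≤ T → ∀ x, 0 ≤ F T x x := by
    intro T hT x
    by_contra! hneg
    have hn : ∀ n : ℕ, F ((n + 1) * T) x x ≤ (n + 1) * F T x x := by
      intro n
      induction n with
      | zero => simp
      | succ n ih =>
        have := hFsub ((n + 1) * T) T (by nlinarith) hT x x x
        push_cast
        rw [show ((n : ℝ) + 1 + 1) * T = (n + 1) * T + T by ring]
        linarith
    obtain ⟨r, hr, -⟩ := hliminf x x
    have ht : Tendsto (fun n : ℕ => ((n : ℝ) + 1) * T) atTop atTop :=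
      (tendsto_natCast_atTop_atTop.atTop_add tendsto_const_nhds).atTop_mul_const
        (by linarith)
    have ht' : Tendsto (fun n : ℕ => ((n : ℝ) + 1) * F T x x) atTop atBot :=
      (tendsto_natCast_atTop_atTop.atTop_add tendsto_const_nhds).atTop_mul_const_of_neg hneg
    obtain ⟨n, h1, h2⟩ := ((ht.eventually hr).and (ht'.eventually_lt_atBot (r - 1))).exists
    linarith [hn n]
  set M₀ : ℝ := (C + |c|) * T₁ with hM₀
  have hM₀n : 0 ≤ M₀ := by positivity
  have hF1 : ∀ x y, F T₁ x y ≤ M₀ := fun x y => by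
    have h1 := hub T₁ le_rfl x y
    have h2 := mul_le_mul_of_nonneg_right (le_abs_self c) (show 0 ≤ T₁ by linarith)
    simp only [hF, hM₀]
    linarith
  have hlow : ∀ t, T₁ ≤ t → ∀ x y, -M₀ ≤ F t x y := fun t ht x y => by
    have h1 := hFsub t T₁ ht le_rfl x y x
    have h2 := hdiag (t + T₁) (by linarith) x
    linarith [hF1 y x]
  set C₁ : ℝ := 2 * M₀ + (K + |c|) * (2 * T₁) with hC₁
  have hosc : ∀ t, 6 * T₁ ≤ t → ∀ x y x' y', F t x y ≤ F t x' y' + C₁ := by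
    intro t ht x y x' y'
    have h1 := hFsub (T₁ + t) T₁ (by linarith) le_rfl x y' y
    have h2 := hFsub T₁ t le_rfl (by linarith) x x' y'
    have h3 := hlip (T₁ + t + T₁) (-(2 * T₁)) (by linarith) (by
      rw [abs_neg, abs_of_pos (by linarith)]; linarith) x y
    rw [abs_neg, abs_of_pos (by linarith), show T₁ + t + T₁ + -(2 * T₁) = t by ring] at h3
    have h4 : F t x y ≤ F (T₁ + t + T₁) x y + (K + |c|) * (2 * T₁) := by
      have := mul_le_mul_of_nonneg_right (neg_abs_le c) (show 0 ≤ 2 * T₁ by linarith)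
      simp only [hF]
      linarith
    linarith [hF1 x x', hF1 y' y]
  obtain ⟨x₀⟩ : Nonempty Γ.G := inferInstance
  obtain ⟨r, -, hr⟩ := hliminf x₀ x₀
  have hupp : ∀ t, 6 * T₁ ≤ t → ∀ x y, F t x y ≤ r + 2 + M₀ + C₁ := by
    intro t ht x y
    obtain ⟨τ, hτ, hlt⟩ := (frequently_atTop.1 hr) (2 * t)
    obtain ⟨z, hz⟩ := hsplit t (τ - t) (by linarith) (by linarith) x₀ x₀ 1 one_pos
    rw [add_sub_cancel] at hz
    have h1 := hlow (τ - t) (by linarith) z x₀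
    have h2 := hosc t ht x y x₀ z
    simp only [hF] at h1 h2 hlt ⊢
    linarith
  refine ⟨6 * T₁, K, max M₀ (r + 2 + M₀ + C₁), by linarith, hK0, ?_, ?_, ?_, ?_, ?_⟩
  · exact fun s t hs ht => hFsub s t (by linarith) (by linarith)
  · intro s t hs ht x z η hη
    obtain ⟨y, hy⟩ := hsplit s t (by linarith) (by linarith) x z η hη
    exact ⟨y, by simp only [hF]; linarith⟩
  · intro T s hT hs x y
    have := hconv T s (by linarith) hs x y
    simp only [hF]
    linarith
  · intro ε hε
    obtain ⟨δ, hδ, h⟩ := hequi ε hε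
    refine ⟨δ, hδ, fun T hT x x' y y' hx hy => ?_⟩
    have := h T (by linarith) x x' y y' hx hy
    simp only [hF]
    linarith
  · intro t ht x y
    exact abs_le.2 ⟨by linarith [hlow t (by linarith) x y, le_max_left M₀ (r + 2 + M₀ + C₁)],
      (hupp t ht x y).trans (le_max_right _ _)⟩

end TonelliLagrangian

/-! ### Convergence of the semigroup of a good kernel -/

namespace GoodKernel

/-- The inf-convolution semigroup `x ↦ inf_y (u y + F t y x)` of a kernel. -/
noncomputable def evol {X : Type*} (F : ℝ → X → X → ℝ) (u : X → ℝ) (t : ℝ) (x : X) : ℝ :=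
  ⨅ y, (u y + F t y x)

lemma exists_lt_evol {X : Type*} [Nonempty X] (F : ℝ → X → X → ℝ) (u : X → ℝ) (t : ℝ) (x : X) {η : ℝ}
    (hη : 0 < η) : ∃ y, u y + F t y x < evol F u t x + η :=
  exists_lt_of_ciInf_lt (lt_add_of_pos_right _ hη)

variable {X : Type*} [MetricSpace X] {F : ℝ → X → X → ℝ} {T₀ K M : ℝ}
  {u : X → ℝ} {B : ℝ}

lemma bddBelow (h : GoodKernel F T₀ K M) (hB : ∀ x, |u x| ≤ B) {t : ℝ} (ht : T₀ ≤ t) (x : X) :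
    BddBelow (Set.range fun y => u y + F t y x) := by
  refine ⟨-B - M, ?_⟩
  rintro _ ⟨y, rfl⟩
  have := (abs_le.1 (hB y)).1
  have := (abs_le.1 (h.bound t ht y x)).1
  simp only
  linarith

lemma evol_le (h : GoodKernel F T₀ K M) (hB : ∀ x, |u x| ≤ B) {t : ℝ} (ht : T₀ ≤ t) (x y : X) :
    evol F u t x ≤ u y + F t y x := ciInf_le (h.bddBelow hB ht x) y

lemma abs_evol_le [Nonempty X] (h : GoodKernel F T₀ K M) (hB : ∀ x, |u x| ≤ B) {t : ℝ}
    (ht : T₀ ≤ t) (x : X) : |evol F u t x| ≤ B + M := by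
  rw [abs_le]
  constructor
  · refine le_ciInf fun y => ?_
    have := (abs_le.1 (hB y)).1
    have := (abs_le.1 (h.bound t ht y x)).1
    linarith
  · have := h.evol_le hB ht x x
    have := (abs_le.1 (hB x)).2
    have := (abs_le.1 (h.bound t ht x x)).2
    linarith

lemma evol_equi [Nonempty X] (h : GoodKernel F T₀ K M) (hB : ∀ x, |u x| ≤ B) {ε : ℝ} (hε : 0 < ε) :
    ∃ δ > 0, ∀ t, T₀ ≤ t → ∀ x x', dist x x' < δ → evol F u t x' ≤ evol F u t x + ε := by
  obtain ⟨δ, hδ, hd⟩ := h.equi (ε / 2) (half_pos hε)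
  refine ⟨δ, hδ, fun t ht x x' hx => ?_⟩
  obtain ⟨y, hy⟩ := exists_lt_evol F u t x (half_pos hε)
  have h1 := h.evol_le hB ht x' y
  have h2 := hd t ht y y x x' (by simpa using hδ) hx
  linarith

lemma evol_add_le [Nonempty X] (h : GoodKernel F T₀ K M) (hB : ∀ x, |u x| ≤ B) {s t : ℝ}
    (hs : T₀ ≤ s) (ht : T₀ ≤ t) (x y : X) :
    evol F u (s + t) x ≤ evol F u s y + F t y x := by
  refine le_of_forall_pos_le_add fun ε hε => ?_
  obtain ⟨z, hz⟩ := exists_lt_evol F u s y hε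
  have h1 := h.evol_le hB (show T₀ ≤ s + t by linarith [h.pos]) x z
  have h2 := h.subadd s t hs ht z y x
  linarith

lemma exists_evol_add [Nonempty X] (h : GoodKernel F T₀ K M) (hB : ∀ x, |u x| ≤ B) {s t : ℝ}
    (hs : T₀ ≤ s) (ht : T₀ ≤ t) (x : X) {η : ℝ} (hη : 0 < η) :
    ∃ y, evol F u s y + F t y x ≤ evol F u (s + t) x + η := by
  obtain ⟨z, hz⟩ := exists_lt_evol F u (s + t) x (half_pos hη)
  obtain ⟨y, hy⟩ := h.split s t hs ht z x (η / 2) (half_pos hη)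
  exact ⟨y, by linarith [h.evol_le hB hs y z]⟩

lemma evol_nonexpansive [Nonempty X] (h : GoodKernel F T₀ K M) (hB : ∀ x, |u x| ≤ B) {s s' t ε : ℝ}
    (hs : T₀ ≤ s) (hs' : T₀ ≤ s') (ht : T₀ ≤ t)
    (hle : ∀ y, evol F u s y ≤ evol F u s' y + ε) (x : X) :
    evol F u (s + t) x ≤ evol F u (s' + t) x + ε := by
  refine le_of_forall_pos_le_add fun η hη => ?_
  obtain ⟨y, hy⟩ := h.exists_evol_add hB hs' ht x hη
  linarith [h.evol_add_le hB hs ht x y, hle y]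

variable [CompactSpace X]

lemma exists_net (X : Type*) [MetricSpace X] [CompactSpace X] {δ : ℝ} (hδ : 0 < δ) :
    ∃ Z : Set X, Z.Finite ∧ ∀ x, ∃ z ∈ Z, dist x z < δ := by
  obtain ⟨Z, -, hZ, hcov⟩ := finite_cover_balls_of_compact (isCompact_univ (X := X)) hδ
  refine ⟨Z, hZ, fun x => ?_⟩
  obtain ⟨z, hz, hxz⟩ := Set.mem_iUnion₂.1 (hcov (Set.mem_univ x))
  exact ⟨z, hz, hxz⟩

/-- The orbit is precompact for the sup distance (Arzelà–Ascoli). -/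
lemma exists_time_net [Nonempty X] (h : GoodKernel F T₀ K M) (hB : ∀ x, |u x| ≤ B) {ε : ℝ}
    (hε : 0 < ε) : ∃ S : Set ℝ, S.Finite ∧ (∀ τ ∈ S, T₀ ≤ τ) ∧
      ∀ t, T₀ ≤ t → ∃ τ ∈ S, ∀ x, evol F u τ x ≤ evol F u t x + ε := by
  obtain ⟨δ, hδ, hd⟩ := h.evol_equi hB (show 0 < ε / 3 by positivity)
  obtain ⟨Z, hZ, hnet⟩ := exists_net X hδ
  have := hZ.fintype
  set Φ : ℝ → Z → ℝ := fun t z => evol F u t z with hΦ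
  have htb : TotallyBounded (Φ '' Set.Ici T₀) := by
    refine (isCompact_univ_pi fun _ : Z =>
      isCompact_Icc (a := -(B + M)) (b := B + M)).totallyBounded.subset ?_
    rintro _ ⟨t, ht, rfl⟩ z -
    exact abs_le.1 (h.abs_evol_le hB ht z)
  obtain ⟨S, hSs, hSf, hW⟩ := Set.exists_subset_image_finite_and.1
    (htb.exists_subset (Metric.dist_mem_uniformity (show 0 < ε / 3 by positivity)))
  refine ⟨S, hSf, hSs, fun t ht => ?_⟩
  obtain ⟨_, ⟨τ, hτ, rfl⟩, hdist⟩ := Set.mem_iUnion₂.1 (hW ⟨t, ht, rfl⟩)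
  refine ⟨τ, hτ, fun x => ?_⟩
  obtain ⟨z, hz, hxz⟩ := hnet x
  have h1 := hd τ (hSs hτ) z x (by rwa [dist_comm])
  have h2 := hd t ht x z hxz
  have h3 : dist (Φ t ⟨z, hz⟩) (Φ τ ⟨z, hz⟩) < ε / 3 := (dist_le_pi_dist _ _ _).trans_lt hdist
  rw [Real.dist_eq] at h3
  have h4 := (abs_lt.1 h3).1
  simp only [hΦ] at h4
  linarith

/-- Values near the upper limit recur in every time window of a fixed length. -/
lemma recurrence [Nonempty X] (h : GoodKernel F T₀ K M) (hB : ∀ x, |u x| ≤ B) {x : X} {a : ℝ}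
    (ha : ∃ᶠ t in atTop, a < evol F u t x) {ε : ℝ} (hε : 0 < ε) :
    ∃ l > 0, ∀ t, T₀ ≤ t → ∃ s, 0 ≤ s ∧ s ≤ l ∧ a - ε < evol F u (t + s) x := by
  obtain ⟨S, hS, hST, hnet⟩ := h.exists_time_net hB hε
  have hex : ∀ τ, ∃ r, T₀ ≤ r ∧ a < evol F u (τ + r) x := fun τ => by
    obtain ⟨t, ht, hlt⟩ := frequently_atTop.1 ha (τ + T₀)
    exact ⟨t - τ, by linarith, by rwa [add_sub_cancel]⟩
  choose r hrT hr using hex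
  obtain ⟨l, hl⟩ := (hS.image r).bddAbove
  refine ⟨max l 1, by positivity, fun t ht => ?_⟩
  obtain ⟨τ, hτ, hle⟩ := hnet t ht
  refine ⟨r τ, h.pos.le.trans (hrT τ), (hl ⟨τ, hτ, rfl⟩).trans (le_max_left _ _), ?_⟩
  linarith [h.evol_nonexpansive hB (hST τ hτ) ht (hrT τ) hle x, hr τ]

/-- If `v` is a lower limit of the orbit, attained uniformly from below, then the orbit converges
to `v`. -/
lemma eventually_evol_le [Nonempty X] (h : GoodKernel F T₀ K M) (hB : ∀ x, |u x| ≤ B) {v : X → ℝ}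
    (hv1 : ∀ x, ∀ ε > 0, ∃ᶠ t in atTop, evol F u t x < v x + ε)
    (hv2 : ∀ ε > 0, ∀ᶠ t in atTop, ∀ x, v x - ε ≤ evol F u t x) (x : X) {ε : ℝ} (hε : 0 < ε) :
    ∀ᶠ t in atTop, evol F u t x < v x + ε := by
  have hbd : ∀ x, ∀ᶠ t in atTop, |evol F u t x| ≤ B + M := fun x =>
    (eventually_ge_atTop T₀).mono fun t ht => h.abs_evol_le hB ht x
  have hbdd : ∀ x, IsBoundedUnder (· ≤ ·) atTop fun t => evol F u t x := fun x =>
    isBoundedUnder_of_eventually_le ((hbd x).mono fun t ht => (abs_le.1 ht).2)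
  have hcob : ∀ x, IsCoboundedUnder (· ≤ ·) atTop fun t => evol F u t x := fun x =>
    (isBoundedUnder_of_eventually_ge ((hbd x).mono fun t ht => (abs_le.1 ht).1)).isCoboundedUnder_le
  set w : X → ℝ := fun x => limsup (fun t => evol F u t x) atTop with hw
  have hw1 : ∀ x, ∀ ε > 0, ∀ᶠ t in atTop, evol F u t x < w x + ε := fun x ε hε =>
    eventually_lt_of_limsup_lt (lt_add_of_pos_right _ hε) (hbdd x)
  have hw2 : ∀ x, ∀ ε > 0, ∃ᶠ t in atTop, w x - ε < evol F u t x := fun x ε hε =>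
    frequently_lt_of_lt_limsup (hcob x) (sub_lt_self _ hε)
  have hshift : ∀ s : ℝ, Tendsto (fun t => t - s) atTop atTop := fun s =>
    tendsto_atTop_add_const_right _ _ tendsto_id
  have hw3 : ∀ s, T₀ ≤ s → ∀ x y, w x ≤ w y + F s y x := by
    intro s hs x y
    refine le_of_forall_pos_le_add fun ε hε => ?_
    obtain ⟨t, h1, h2, h3⟩ := ((hw2 x (ε / 2) (half_pos hε)).and_eventually
      (((hshift s).eventually (hw1 y (ε / 2) (half_pos hε))).and
        ((hshift s).eventually_ge_atTop T₀))).exists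
    have := h.evol_add_le hB h3 hs x y
    rw [sub_add_cancel] at this
    linarith
  have hvb : ∀ x, -(B + M) ≤ v x := fun x => by
    refine le_of_forall_pos_le_add fun ε hε => ?_
    obtain ⟨t, h1, h2⟩ := ((hv1 x ε hε).and_eventually (hbd x)).exists
    linarith [(abs_le.1 h2).1]
  have hwb : ∀ x, w x ≤ B + M := fun x => by
    refine le_of_forall_pos_le_add fun ε hε => ?_
    obtain ⟨t, h1, h2⟩ := ((hw2 x ε hε).and_eventually (hbd x)).exists
    linarith [(abs_le.1 h2).2]
  have hbddA : BddAbove (Set.range fun x => w x - v x) := by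
    refine ⟨2 * (B + M), ?_⟩
    rintro _ ⟨x, rfl⟩
    simp only
    linarith [hvb x, hwb x]
  set m : ℝ := ⨆ x, (w x - v x) with hm
  have hmle : ∀ x, w x - v x ≤ m := fun x => le_ciSup hbddA x
  have hm0 : m ≤ 0 := by
    refine le_of_forall_pos_le_add fun ε' hε' => ?_
    set ε : ℝ := ε' / 10 with hεdef
    have hε : 0 < ε := by positivity
    obtain ⟨x₀, hx₀⟩ := exists_lt_of_lt_ciSup (show m - ε < ⨆ x, (w x - v x) by rw [← hm]; linarith)
    obtain ⟨l, hl, hrec⟩ := h.recurrence hB (hw2 x₀ ε hε) hε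
    -- a time `T` so long that moving it by up to `l` costs at most `ε` to second order
    set T : ℝ := max (T₀ + 4 * l) (K * l ^ 2 / ε) with hT
    have hT1 : T₀ + 4 * l ≤ T := le_max_left _ _
    have hT0 : 0 < T := by linarith [h.pos]
    have hT2 : K * (l ^ 2 / T) ≤ ε := by
      have := le_max_right (T₀ + 4 * l) (K * l ^ 2 / ε)
      rw [← hT, div_le_iff₀ hε] at this
      rw [← mul_div_assoc, div_le_iff₀ hT0]
      linarith
    -- `y` is the position at time `-T` of a nearly calibrated curve of `v` ending at `x₀`
    obtain ⟨y, hy⟩ : ∃ y, v y + F T y x₀ ≤ v x₀ + ε := by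
      obtain ⟨t, h1, h2, h3⟩ := ((hv1 x₀ (ε / 3) (by positivity)).and_eventually
        (((hshift T).eventually (hv2 (ε / 3) (by positivity))).and
          ((hshift T).eventually_ge_atTop T₀))).exists
      obtain ⟨y, hy⟩ := h.exists_evol_add hB h3 (show T₀ ≤ T by linarith) x₀
        (show 0 < ε / 3 by positivity)
      rw [sub_add_cancel] at hy
      exact ⟨y, by linarith [h2 y]⟩
    have hyw := hw3 T (by linarith) x₀ y
    have hFs : ∀ s, 0 ≤ s → s ≤ l → F (T + s) y x₀ ≤ w x₀ - w y + 5 * ε := by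
      intro s hs hsl
      have h1 := h.conv T s (by linarith) (by rw [abs_of_nonneg hs]; linarith [h.pos]) y x₀
      have h2 := hw3 (T - s) (by linarith) x₀ y
      have h3 : K * (s ^ 2 / T) ≤ K * (l ^ 2 / T) := by
        have := h.K_nonneg
        gcongr
      linarith [hmle y]
    obtain ⟨t, h1, h2⟩ := ((hv1 y ε hε).and_eventually (eventually_ge_atTop T₀)).exists
    obtain ⟨s, hs0, hsl, hs⟩ := hrec (t + T) (by linarith [h.pos])
    have h3 := h.evol_add_le hB h2 (show T₀ ≤ T + s by linarith) x₀ y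
    rw [add_assoc] at hs
    linarith [hFs s hs0 hsl, hmle y]
  filter_upwards [hw1 x ε hε] with t ht
  linarith [hmle x]

/-- Convergence of the semigroup to the inf-convolution of `u` with the lower limit `P` of the
kernel. -/
theorem tendstoUniformly_evol [Nonempty X] (h : GoodKernel F T₀ K M) (hu : Continuous u)
    {P : X → X → ℝ} (hP1 : ∀ z x, ∀ ε > 0, ∃ᶠ t in atTop, F t z x < P z x + ε)
    (hP2 : ∀ z x, ∀ ε > 0, ∀ᶠ t in atTop, P z x - ε < F t z x) :
    TendstoUniformly (evol F u) (fun x => ⨅ z, (u z + P z x)) atTop := by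
  obtain ⟨B, hB'⟩ := isCompact_univ.exists_bound_of_continuousOn hu.continuousOn
  have hB : ∀ x, |u x| ≤ B := fun x => hB' x trivial
  set v : X → ℝ := fun x => ⨅ z, (u z + P z x) with hv
  have hPb : ∀ z x, -M ≤ P z x := fun z x => by
    refine le_of_forall_pos_le_add fun ε hε => ?_
    obtain ⟨t, h1, h2⟩ := ((hP1 z x ε hε).and_eventually (eventually_ge_atTop T₀)).exists
    linarith [(abs_le.1 (h.bound t h2 z x)).1]
  have hvle : ∀ x z, v x ≤ u z + P z x := fun x z => by
    refine ciInf_le ⟨-B - M, ?_⟩ z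
    rintro _ ⟨y, rfl⟩
    have := (abs_le.1 (hB y)).1
    simp only
    linarith [hPb y x]
  have hv1 : ∀ x, ∀ ε > 0, ∃ᶠ t in atTop, evol F u t x < v x + ε := by
    intro x ε hε
    obtain ⟨z, hz⟩ := exists_lt_of_ciInf_lt
      (show ⨅ z, (u z + P z x) < v x + ε / 2 from lt_add_of_pos_right _ (half_pos hε))
    refine ((hP1 z x (ε / 2) (half_pos hε)).and_eventually (eventually_ge_atTop T₀)).mono ?_
    rintro t ⟨h1, h2⟩
    linarith [h.evol_le hB h2 x z]
  have hv2 : ∀ ε > 0, ∀ᶠ t in atTop, ∀ x, v x - ε ≤ evol F u t x := by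
    intro ε' hε'
    set ε : ℝ := ε' / 10 with hεdef
    have hε : 0 < ε := by positivity
    obtain ⟨δ, hδ, hd⟩ := h.equi ε hε
    obtain ⟨δ', hδ', hd'⟩ := Metric.uniformContinuous_iff.1
      (CompactSpace.uniformContinuous_of_continuous hu) ε hε
    obtain ⟨Z, hZ, hnet⟩ := exists_net X (lt_min hδ hδ')
    have hPx : ∀ z x x', dist x' x < δ → P z x ≤ P z x' + 3 * ε := by
      intro z x x' hx
      obtain ⟨t, h1, h2, h3⟩ := ((hP1 z x' ε hε).and_eventually
        ((hP2 z x ε hε).and (eventually_ge_atTop T₀))).exists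
      linarith [hd t h3 z z x' x (by simpa using hδ) hx]
    have hev : ∀ᶠ t in atTop, ∀ z ∈ Z, ∀ z' ∈ Z, P z z' - ε < F t z z' := by
      rw [hZ.eventually_all]
      intro z _
      rw [hZ.eventually_all]
      exact fun z' _ => hP2 z z' ε hε
    filter_upwards [hev, eventually_ge_atTop T₀] with t ht hT x
    obtain ⟨y, hy⟩ := exists_lt_evol F u t x hε
    obtain ⟨z, hz, hyz⟩ := hnet y
    obtain ⟨z', hz', hxz⟩ := hnet x
    have h1 := ht z hz z' hz'
    have h2 := hd t hT y z x z' (hyz.trans_le (min_le_left _ _)) (hxz.trans_le (min_le_left _ _))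
    have h3 := hPx z x z' (by rw [dist_comm]; exact hxz.trans_le (min_le_left _ _))
    have h4 := hd' (hyz.trans_le (min_le_right _ _))
    rw [Real.dist_eq] at h4
    linarith [(abs_lt.1 h4).1, hvle x z]
  have hup := fun x (ε : ℝ) (hε : 0 < ε) => h.eventually_evol_le hB hv1 hv2 x hε
  rw [Metric.tendstoUniformly_iff]
  intro ε' hε'
  set ε : ℝ := ε' / 10 with hεdef
  have hε : 0 < ε := by positivity
  obtain ⟨δ, hδ, hd⟩ := h.evol_equi hB hε
  obtain ⟨Z, hZ, hnet⟩ := exists_net X hδ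
  have hvx : ∀ x z, dist x z < δ → v z ≤ v x + 3 * ε := by
    intro x z hxz
    obtain ⟨t, h1, h2, h3⟩ := ((hv1 x ε hε).and_eventually
      ((hv2 ε hε).and (eventually_ge_atTop T₀))).exists
    linarith [hd t h3 x z hxz, h2 z]
  have hev : ∀ᶠ t in atTop, ∀ z ∈ Z, evol F u t z < v z + ε :=
    (hZ.eventually_all).2 fun z _ => hup z ε hε
  filter_upwards [hev, hv2 ε hε, eventually_ge_atTop T₀] with t ht hlow hT x
  obtain ⟨z, hz, hxz⟩ := hnet x
  have h1 := hd t hT z x (by rwa [dist_comm])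
  rw [Real.dist_eq, abs_lt]
  constructor
  · linarith [ht z hz, hvx x z hxz]
  · linarith [hlow x]

end GoodKernel

/-- long-time convergence of the Lax–Oleinik semigroup:
`ℒ_t u + ct` converges uniformly to `v(x) = min_z (u(z) + h(z,x))`. -/
theorem lax_oleinik_converges
    (Γ : MetricGraph) (Λ : TonelliLagrangian Γ) (c : ℝ) (hc : Λ.IsCriticalValue c)
    (u : Γ.G → ℝ) (hu : Continuous u) :
    TendstoUniformly (fun t : ℝ => fun x : Γ.G => Λ.lax t u x + c * t)
      (fun x : Γ.G => ⨅ z : Γ.G, (u z + Λ.peierls c z x)) Filter.atTop := by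
  obtain ⟨T₀, K, M, h⟩ := Λ.goodKernel hc.2.2
  have hpei : ∀ z x, Filter.liminf (fun t : ℝ => ((Λ.ht t z x + c * t : ℝ) : EReal))
      Filter.atTop = ((Λ.peierls c z x : ℝ) : EReal) := by
    intro z x
    obtain ⟨r, hr⟩ := hc.2.2 z x
    rw [TonelliLagrangian.peierls, hr, EReal.toReal_coe]
  have hmain := h.tendstoUniformly_evol hu (P := Λ.peierls c) ?_ ?_
  · rw [Metric.tendstoUniformly_iff] at hmain ⊢
    intro ε hε
    obtain ⟨B, hB⟩ := isCompact_univ.exists_bound_of_continuousOn hu.continuousOn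
    filter_upwards [Filter.eventually_ge_atTop T₀, hmain ε hε] with t ht hlt x
    -- boundedness from below is what allows `c * t` to be moved inside the infimum
    have hbdd : BddBelow (Set.range fun y => u y + Λ.ht t y x) := by
      obtain ⟨b, hb⟩ := h.bddBelow (fun x => hB x trivial) ht x
      refine ⟨b - c * t, ?_⟩
      rintro _ ⟨y, rfl⟩
      have := hb ⟨y, rfl⟩
      simp only at this ⊢
      linarith
    have hx := hlt x
    simpa only [GoodKernel.evol, TonelliLagrangian.lax, ciInf_add hbdd, add_assoc] using hx
  · intro z x ε hε
    have := Filter.frequently_lt_of_liminf_lt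
      (u := fun t : ℝ => ((Λ.ht t z x + c * t : ℝ) : EReal)) (f := Filter.atTop)
      (b := ((Λ.peierls c z x + ε : ℝ) : EReal)) (by isBoundedDefault)
      (by rw [hpei]; exact_mod_cast lt_add_of_pos_right _ hε)
    exact this.mono fun t ht => by exact_mod_cast ht
  · intro z x ε hε
    have := Filter.eventually_lt_of_lt_liminf
      (u := fun t : ℝ => ((Λ.ht t z x + c * t : ℝ) : EReal)) (f := Filter.atTop)
      (b := ((Λ.peierls c z x - ε : ℝ) : EReal))
      (by rw [hpei]; exact_mod_cast sub_lt_self _ hε)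
    exact this.mono fun t ht => by exact_mod_cast ht
end
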